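/- Let f, g ∈ ℤ[x] be nonconstant polynomials such that g ∘ f^n is separable over ℚ for all n ≥ 0, and let a₀ ∈ ℤ. For each N ≥ 0, let L_N be the splitting field of g ∘ f^N over ℚ and let r_N = #{σ ∈ Gal(L_N/ℚ) : σ fixes at least one root of g ∘ f^N in L_N} / #Gal(L_N/ℚ). Then the upper natural density of the set of primes dividing some nonzero term of the sequence (g(f^n(a₀)))_{n≥0} is at most liminf_{N→∞} r_N; that is, limsup_{x→∞} #{p ∈ P(g,f,a₀) : p ≤ x}/π(x) ≤ liminf_{N→∞} r_N, where π(x) is the number of primes up to x. -/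

import Mathlib

open Polynomial Filter

/-- The `n`-th iterate of a polynomial, with `f^0 = X`. -/
noncomputable def polyIter (f : Polynomial ℤ) : ℕ → Polynomial ℤ
  | 0 => X
  | n + 1 => f.comp (polyIter f n)

open scoped Classical in
/-- The number of elements of `S` that are at most `x`. -/
noncomputable def primeCount (S : Set ℕ) (x : ℕ) : ℕ :=
  ((Finset.range (x + 1)).filter (fun p => p ∈ S)).card

/-- `P(g, f, a₀)`: the set of primes dividing some nonzero term of the sequence
`(g(f^n(a₀)))_{n ≥ 0}`. -/
def transOrbitPrimes (g f : Polynomial ℤ) (a₀ : ℤ) : Set ℕ :=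
  {p | p.Prime ∧ ∃ n : ℕ, Polynomial.eval ((fun x => Polynomial.eval x f)^[n] a₀) g ≠ 0 ∧
    (p : ℤ) ∣ Polynomial.eval ((fun x => Polynomial.eval x f)^[n] a₀) g}

/-- The splitting field `L_N` of `g ∘ f^N` over `ℚ`. -/
noncomputable def splittingFieldIter (f g : Polynomial ℤ) (N : ℕ) : Type :=
  ((g.comp (polyIter f N)).map (Int.castRingHom ℚ)).SplittingField

noncomputable instance (f g : Polynomial ℤ) (N : ℕ) : Field (splittingFieldIter f g N) :=
  inferInstanceAs (Field ((g.comp (polyIter f N)).map (Int.castRingHom ℚ)).SplittingField)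

noncomputable instance (f g : Polynomial ℤ) (N : ℕ) : Algebra ℚ (splittingFieldIter f g N) :=
  inferInstanceAs (Algebra ℚ ((g.comp (polyIter f N)).map (Int.castRingHom ℚ)).SplittingField)

/-- `r_N`: the proportion of elements of `Gal(L_N/ℚ)` fixing at least one root of
`g ∘ f^N` in `L_N`. -/
noncomputable def fixedRootProportion (f g : Polynomial ℤ) (N : ℕ) : ℝ :=
  (Nat.card {σ : splittingFieldIter f g N ≃ₐ[ℚ] splittingFieldIter f g N //
      ∃ α : splittingFieldIter f g N,
        Polynomial.aeval α ((g.comp (polyIter f N)).map (Int.castRingHom ℚ)) = 0 ∧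
          σ α = α} : ℝ) /
    (Nat.card (splittingFieldIter f g N ≃ₐ[ℚ] splittingFieldIter f g N) : ℝ)

section
open MeasureTheory Filter Topology

/-- Fejér kernel. -/
noncomputable def kF (v : ℝ) : ℝ := if v = 0 then 1 else 2 * (1 - Real.cos v) / v ^ 2

lemma kF_nonneg (v : ℝ) : 0 ≤ kF v := by
  unfold kF; split_ifs
  · norm_num
  · have := Real.cos_le_one v
    apply div_nonneg <;> nlinarith [sq_nonneg v]

lemma kF_le (v : ℝ) : kF v ≤ 5 * (1 + v ^ 2)⁻¹ := by
  unfold kF; split_ifs with h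
  · subst h; norm_num
  · have h1 := Real.one_sub_sq_div_two_le_cos (x := v)
    have h2 := Real.neg_one_le_cos v
    have hv : 0 < v ^ 2 := by positivity
    rw [← div_eq_mul_inv, div_le_div_iff₀ hv (by positivity)]
    nlinarith

lemma kF_measurable : Measurable kF := by
  unfold kF
  refine Measurable.ite (measurableSet_singleton 0) measurable_const (by fun_prop)

lemma kF_integrable : Integrable kF := by
  refine (integrable_inv_one_add_sq.const_mul 5).mono' kF_measurable.aestronglyMeasurable ?_
  refine Eventually.of_forall fun v => ?_
  rw [Real.norm_of_nonneg (kF_nonneg v)]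
  exact kF_le v

lemma kF_integral_pos : 0 < ∫ v, kF v := by
  rw [integral_pos_iff_support_of_nonneg kF_nonneg kF_integrable]
  refine lt_of_lt_of_le (b := volume (Set.Ioo (0:ℝ) 1)) (by simp) (measure_mono ?_)
  intro v hv
  have h1 : Real.cos v < 1 := by
    have := Real.cos_lt_cos_of_nonneg_of_le_pi (x := 0) (y := v) le_rfl
      (by linarith [hv.2, Real.pi_gt_three]) hv.1
    simpa using this
  have : 0 < kF v := by
    unfold kF
    rw [if_neg hv.1.ne']
    have := hv.1
    apply div_pos <;> [linarith; positivity]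
  exact this.ne'

lemma kF_even (v : ℝ) : kF (-v) = kF v := by simp [kF]

lemma kF_fourier (v : ℝ) :
    ∫ t in (-1:ℝ)..1, (((1 - |t| : ℝ)) : ℂ) * Complex.exp (Complex.I * t * v) = (kF v : ℂ) := by
  have hIntg : ∀ a b : ℝ, IntervalIntegrable
      (fun t : ℝ => (((1 - |t| : ℝ)) : ℂ) * Complex.exp (Complex.I * t * v)) volume a b :=
    fun a b => Continuous.intervalIntegrable (by fun_prop) _ _
  by_cases hv : v = 0
  · subst hv
    simp only [kF, if_true, Complex.ofReal_zero, mul_zero, Complex.exp_zero, mul_one]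
    rw [intervalIntegral.integral_ofReal]
    rw [← intervalIntegral.integral_add_adjacent_intervals (b := 0)
      (Continuous.intervalIntegrable (by fun_prop) _ _)
      (Continuous.intervalIntegrable (by fun_prop) _ _)]
    have h1 : ∫ t in (-1:ℝ)..0, (1 - |t|) = ∫ t in (-1:ℝ)..0, (1 + t) := by
      refine intervalIntegral.integral_congr fun t ht => ?_
      rw [Set.uIcc_of_le (by norm_num)] at ht
      simp [abs_of_nonpos ht.2]
    have h2 : ∫ t in (0:ℝ)..1, (1 - |t|) = ∫ t in (0:ℝ)..1, (1 - t) := by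
      refine intervalIntegral.integral_congr fun t ht => ?_
      rw [Set.uIcc_of_le (by norm_num)] at ht
      simp [abs_of_nonneg ht.1]
    rw [h1, h2]
    rw [intervalIntegral.integral_add (by simp) (by simp), intervalIntegral.integral_sub (by simp) (by simp)]
    simp; norm_num
  · have hvc : (v : ℂ) ≠ 0 := by exact_mod_cast hv
    rw [← intervalIntegral.integral_add_adjacent_intervals (b := 0) (hIntg _ _) (hIntg _ _)]
    have h1 : ∫ t in (-1:ℝ)..0, (((1 - |t| : ℝ)) : ℂ) * Complex.exp (Complex.I * t * v)
        = 1 / (Complex.I * v) - (1 / (Complex.I * v) ^ 2) + Complex.exp (-Complex.I * v) / (Complex.I * v) ^ 2 := by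
      rw [intervalIntegral.integral_congr (g := fun t : ℝ => ((1:ℂ) + t) * Complex.exp (Complex.I * t * v))]
      · rw [intervalIntegral.integral_eq_sub_of_hasDerivAt
          (f := fun t : ℝ => ((1:ℂ) + t) * Complex.exp (Complex.I * t * v) / (Complex.I * v)
            - Complex.exp (Complex.I * t * v) / (Complex.I * v) ^ 2)]
        · simp
        · intro t _
          have ht : HasDerivAt (fun t : ℝ => (t : ℂ)) 1 t := Complex.ofRealCLM.hasDerivAt
          have he : HasDerivAt (fun t : ℝ => Complex.exp (Complex.I * t * v))
              (Complex.exp (Complex.I * t * v) * (Complex.I * 1 * v)) t :=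
            ((ht.const_mul Complex.I).mul_const (v:ℂ)).cexp
          have := ((((ht.const_add 1).mul he).div_const (Complex.I * v))).sub
            (he.div_const ((Complex.I * v) ^ 2))
          convert! this using 1
          field_simp
          ring
        · exact Continuous.intervalIntegrable (by fun_prop) _ _
      · intro t ht
        rw [Set.uIcc_of_le (by norm_num)] at ht
        simp [abs_of_nonpos ht.2]
    have h2 : ∫ t in (0:ℝ)..1, (((1 - |t| : ℝ)) : ℂ) * Complex.exp (Complex.I * t * v)
        = - 1 / (Complex.I * v) - (1 / (Complex.I * v) ^ 2) + Complex.exp (Complex.I * v) / (Complex.I * v) ^ 2 := by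
      rw [intervalIntegral.integral_congr (g := fun t : ℝ => ((1:ℂ) - t) * Complex.exp (Complex.I * t * v))]
      · rw [intervalIntegral.integral_eq_sub_of_hasDerivAt
          (f := fun t : ℝ => ((1:ℂ) - t) * Complex.exp (Complex.I * t * v) / (Complex.I * v)
            + Complex.exp (Complex.I * t * v) / (Complex.I * v) ^ 2)]
        · simp [neg_div]; ring
        · intro t _
          have ht : HasDerivAt (fun t : ℝ => (t : ℂ)) 1 t := Complex.ofRealCLM.hasDerivAt
          have he : HasDerivAt (fun t : ℝ => Complex.exp (Complex.I * t * v))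
              (Complex.exp (Complex.I * t * v) * (Complex.I * 1 * v)) t :=
            ((ht.const_mul Complex.I).mul_const (v:ℂ)).cexp
          have := ((((ht.const_sub 1).mul he).div_const (Complex.I * v))).add
            (he.div_const ((Complex.I * v) ^ 2))
          convert! this using 1
          field_simp
          ring
        · exact Continuous.intervalIntegrable (by fun_prop) _ _
      · intro t ht
        rw [Set.uIcc_of_le (by norm_num)] at ht
        simp [abs_of_nonneg ht.1]
    rw [h1, h2, kF, if_neg hv]
    push_cast
    rw [Complex.cos]
    have e1 : Complex.exp (Complex.I * v) = Complex.exp (v * Complex.I) := by ring_nf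
    have e2 : Complex.exp (-Complex.I * v) = Complex.exp (-v * Complex.I) := by ring_nf
    rw [e1, e2, mul_pow, Complex.I_sq]
    have := Complex.I_ne_zero
    field_simp
    ring

end

section
open MeasureTheory Filter Topology

lemma kF_comp_integrable {l : ℝ} (hl : 0 < l) (x : ℝ) : Integrable (fun u => kF (l * (x - u))) :=
  (kF_integrable.comp_mul_left' hl.ne').comp_sub_left x

lemma fejer_identity {S : ℝ → ℝ} {M : ℝ} (hS : Measurable S) (h0 : ∀ u, 0 ≤ S u)
    (hM : ∀ u, S u ≤ M) {G : ℂ → ℂ}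
    (hG : ∀ z : ℂ, 0 < z.re →
      ∫ u in Set.Ioi (0:ℝ), ((S u - 1 : ℝ) : ℂ) * Complex.exp (-z * u) = G z)
    {ε l : ℝ} (hε : 0 < ε) (x : ℝ) :
    ∫ t in (-1:ℝ)..1, ((1 - |t| : ℝ) : ℂ) * G (ε + Complex.I * (l * t)) *
        Complex.exp (Complex.I * (l * t) * x)
      = ∫ u in Set.Ioi (0:ℝ), ((S u - 1 : ℝ) : ℂ) * (Complex.exp (-ε * u) * (kF (l * (x - u)) : ℂ)) := by
  have hb : ∀ u, |S u - 1| ≤ M + 1 := fun u => by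
    rw [abs_le]; constructor <;> linarith [h0 u, hM u]
  rw [intervalIntegral.integral_of_le (by norm_num)]
  have e1 : ∀ t : ℝ, ((1 - |t| : ℝ) : ℂ) * G (ε + Complex.I * (l * t)) *
        Complex.exp (Complex.I * (l * t) * x) = ∫ u in Set.Ioi (0:ℝ),
        (((1 - |t| : ℝ) : ℂ) * Complex.exp (Complex.I * (l * t) * x)) *
        (((S u - 1 : ℝ) : ℂ) * Complex.exp (-(ε + Complex.I * (l * t)) * u)) := by
    intro t
    rw [integral_const_mul, hG _ (by simpa using hε)]
    ring
  simp_rw [e1]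
  rw [integral_integral_swap]
  · refine integral_congr_ae (Eventually.of_forall fun u => ?_)
    simp only
    rw [← kF_fourier (l * (x - u)), intervalIntegral.integral_of_le (by norm_num), ← integral_const_mul,
      ← integral_const_mul]
    refine integral_congr_ae (Eventually.of_forall fun t => ?_)
    simp only
    have : Complex.exp (Complex.I * (l * t) * x) * Complex.exp (-(ε + Complex.I * (l * t)) * u)
      = Complex.exp (-ε * u) * Complex.exp (Complex.I * t * ((l * (x - u) : ℝ) : ℂ)) := by
      rw [← Complex.exp_add, ← Complex.exp_add]
      congr 1; push_cast; ring
    linear_combination (((1 - |t| : ℝ) : ℂ) * ((S u - 1 : ℝ) : ℂ)) * this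
  · have hi : Integrable (fun z : ℝ × ℝ => (1:ℝ) * ((M + 1) * Real.exp (-ε * z.2)))
        ((volume.restrict (Set.Ioc (-1:ℝ) 1)).prod (volume.restrict (Set.Ioi (0:ℝ)))) := by
      refine Integrable.mul_prod (f := fun _ => (1:ℝ)) (g := fun u => (M+1) * Real.exp (-ε * u)) ?_ ?_
      · simp
      · exact (exp_neg_integrableOn_Ioi 0 hε).const_mul _
    refine hi.mono' ?_ ?_
    · refine Measurable.aestronglyMeasurable ?_
      have := hS
      unfold Function.uncurry
      fun_prop
    · rw [Measure.prod_restrict]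
      refine (ae_restrict_iff' (measurableSet_Ioc.prod measurableSet_Ioi)).2 (Eventually.of_forall ?_)
      rintro ⟨t, u⟩ ⟨ht, hu⟩
      simp only [Function.uncurry_apply_pair, norm_mul, Complex.norm_real, Complex.norm_exp]
      have h1 : ‖1 - |t|‖ ≤ 1 := by
        have : |t| ≤ 1 := abs_le.2 ⟨ht.1.le, ht.2⟩
        rw [Real.norm_eq_abs, abs_le]; constructor <;> linarith [abs_nonneg t]
      have h2 : (Complex.I * (l * t) * x).re = 0 := by simp
      have h3 : (-(ε + Complex.I * (l * t)) * u : ℂ).re = -ε * u := by simp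
      rw [h2, h3, Real.exp_zero, mul_one]
      refine mul_le_mul h1 (mul_le_mul_of_nonneg_right (hb u) (Real.exp_nonneg _)) (by positivity) zero_le_one

lemma fejer_identity_zero {S : ℝ → ℝ} {M : ℝ} (hS : Measurable S) (h0 : ∀ u, 0 ≤ S u)
    (hM : ∀ u, S u ≤ M) {G : ℂ → ℂ} (hGc : ContinuousOn G {z | 0 ≤ z.re})
    (hG : ∀ z : ℂ, 0 < z.re →
      ∫ u in Set.Ioi (0:ℝ), ((S u - 1 : ℝ) : ℂ) * Complex.exp (-z * u) = G z)
    {l : ℝ} (hl : 0 < l) (x : ℝ) :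
    ∫ t in (-1:ℝ)..1, ((1 - |t| : ℝ) : ℂ) * G (Complex.I * (l * t)) *
        Complex.exp (Complex.I * (l * t) * x)
      = ∫ u in Set.Ioi (0:ℝ), ((S u - 1 : ℝ) : ℂ) * (kF (l * (x - u)) : ℂ) := by
  have hb : ∀ u, |S u - 1| ≤ M + 1 := fun u => by
    rw [abs_le]; constructor <;> linarith [h0 u, hM u]
  -- continuity of the function of two variables
  have hc : ContinuousOn (fun q : ℝ × ℝ => G (q.1 + Complex.I * (l * q.2)))
      (Set.Icc 0 1 ×ˢ Set.Icc (-1) 1) := by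
    refine hGc.comp (by fun_prop) ?_
    rintro ⟨a, b⟩ ⟨ha, hb⟩
    simpa using ha.1
  obtain ⟨B, hB⟩ := (isCompact_Icc.prod isCompact_Icc).exists_bound_of_continuousOn hc
  have L : Tendsto (fun ε : ℝ => ∫ t in (-1:ℝ)..1, ((1 - |t| : ℝ) : ℂ) * G (ε + Complex.I * (l * t)) *
        Complex.exp (Complex.I * (l * t) * x)) (𝓝[>] 0)
      (𝓝 (∫ t in (-1:ℝ)..1, ((1 - |t| : ℝ) : ℂ) * G (Complex.I * (l * t)) *
        Complex.exp (Complex.I * (l * t) * x))) := by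
    refine intervalIntegral.tendsto_integral_filter_of_dominated_convergence (fun _ => B) ?_ ?_ ?_ ?_
    · filter_upwards [Ioc_mem_nhdsGT (zero_lt_one (α := ℝ))] with ε hε
      refine ContinuousOn.aestronglyMeasurable ?_ measurableSet_uIoc
      refine ContinuousOn.mul (ContinuousOn.mul (by fun_prop) ?_) (by fun_prop)
      refine hGc.comp (by fun_prop) ?_
      intro t _
      simpa using hε.1.le
    · filter_upwards [Ioc_mem_nhdsGT (zero_lt_one (α := ℝ))] with ε hε
      refine Eventually.of_forall fun t ht => ?_
      rw [Set.uIoc_of_le (by norm_num)] at ht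
      have h1 : ‖1 - |t|‖ ≤ 1 := by
        have : |t| ≤ 1 := abs_le.2 ⟨ht.1.le, ht.2⟩
        rw [Real.norm_eq_abs, abs_le]; constructor <;> linarith [abs_nonneg t]
      have h2 : (Complex.I * (l * t) * x).re = 0 := by simp
      rw [norm_mul, norm_mul, Complex.norm_exp, h2, Real.exp_zero, mul_one, Complex.norm_real]
      have h3 := hB (ε, t) ⟨⟨hε.1.le, hε.2⟩, ⟨ht.1.le, ht.2⟩⟩
      simp only at h3
      calc _ ≤ 1 * B := mul_le_mul h1 h3 (norm_nonneg _) zero_le_one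
        _ = B := one_mul _
    · simp
    · refine Eventually.of_forall fun t ht => ?_
      refine Tendsto.mul_const _ (Tendsto.const_mul _ ?_)
      have h1 : ContinuousWithinAt G {z | 0 ≤ z.re} (Complex.I * (l * t)) := hGc _ (by simp)
      refine h1.tendsto.comp ?_
      refine tendsto_nhdsWithin_iff.2 ⟨?_, ?_⟩
      · have : Continuous (fun ε : ℝ => (ε : ℂ) + Complex.I * (l * t)) := by fun_prop
        have := this.tendsto 0
        simp only [Complex.ofReal_zero, zero_add] at this
        exact this.mono_left nhdsWithin_le_nhds
      · filter_upwards [self_mem_nhdsWithin] with ε hε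
        have : 0 < ε := hε
        simpa using this.le
  have R : Tendsto (fun ε : ℝ => ∫ u in Set.Ioi (0:ℝ), ((S u - 1 : ℝ) : ℂ) * (Complex.exp (-ε * u) * (kF (l * (x - u)) : ℂ))) (𝓝[>] 0)
      (𝓝 (∫ u in Set.Ioi (0:ℝ), ((S u - 1 : ℝ) : ℂ) * (kF (l * (x - u)) : ℂ))) := by
    refine tendsto_integral_filter_of_dominated_convergence (fun u => (M + 1) * kF (l * (x - u))) ?_ ?_ ?_ ?_
    · refine Eventually.of_forall fun ε => Measurable.aestronglyMeasurable ?_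
      have := hS
      have := kF_measurable
      fun_prop
    · filter_upwards [self_mem_nhdsWithin] with ε hε
      refine (ae_restrict_iff' measurableSet_Ioi).2 (Eventually.of_forall fun u hu => ?_)
      have hε : 0 < ε := hε
      have hu : 0 < u := hu
      have h3 : (-ε * u : ℂ).re = -(ε * u) := by simp
      rw [norm_mul, norm_mul, Complex.norm_exp, h3, Complex.norm_real, Complex.norm_real,
        Real.norm_of_nonneg (kF_nonneg _)]
      have : Real.exp (-(ε * u)) ≤ 1 := Real.exp_le_one_iff.2 (by nlinarith)
      refine mul_le_mul (hb u) ?_ (mul_nonneg (Real.exp_nonneg _) (kF_nonneg _)) ((abs_nonneg _).trans (hb u))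
      exact mul_le_of_le_one_left (kF_nonneg _) this
    · exact ((kF_comp_integrable hl x).const_mul _).integrableOn
    · refine Eventually.of_forall fun u => ?_
      refine Tendsto.const_mul _ ?_
      have : Continuous (fun ε : ℝ => Complex.exp (-ε * u) * (kF (l * (x - u)) : ℂ)) := by fun_prop
      have := this.tendsto 0
      simp only [Complex.ofReal_zero, neg_zero, zero_mul, Complex.exp_zero, one_mul] at this
      exact this.mono_left nhdsWithin_le_nhds
  refine tendsto_nhds_unique L (R.congr' ?_)
  filter_upwards [self_mem_nhdsWithin] with ε hε
  exact (fejer_identity hS h0 hM hG hε x).symm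

lemma fejer_tendsto {S : ℝ → ℝ} {M : ℝ} (hS : Measurable S) (h0 : ∀ u, 0 ≤ S u)
    (hM : ∀ u, S u ≤ M) {G : ℂ → ℂ} (hGc : ContinuousOn G {z | 0 ≤ z.re})
    (hG : ∀ z : ℂ, 0 < z.re →
      ∫ u in Set.Ioi (0:ℝ), ((S u - 1 : ℝ) : ℂ) * Complex.exp (-z * u) = G z)
    {l : ℝ} (hl : 0 < l) :
    Tendsto (fun x => ∫ u in Set.Ioi (0:ℝ), (S u - 1) * kF (l * (x - u))) atTop (𝓝 0) := by
  have key : Tendsto (fun x : ℝ => ∫ t in (-1:ℝ)..1, ((1 - |t| : ℝ) : ℂ) * G (Complex.I * (l * t)) *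
        Complex.exp (Complex.I * (l * t) * x)) atTop (𝓝 0) := by
    have rl := Real.tendsto_integral_exp_smul_cocompact
      (Set.indicator (Set.Ioc (-1:ℝ) 1) (fun t : ℝ => ((1 - |t| : ℝ) : ℂ) * G (Complex.I * (l * t))))
    have ha : Tendsto (fun x : ℝ => -(l / (2 * Real.pi)) * x) atTop (cocompact ℝ) := by
      have : Tendsto (fun x : ℝ => -(l / (2 * Real.pi)) * x) atTop atBot :=
        tendsto_id.const_mul_atTop_of_neg (by have := Real.pi_pos; simp only [neg_lt_zero]; positivity)
      exact this.mono_right atBot_le_cocompact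
    refine (rl.comp ha).congr fun x => ?_
    simp only [Function.comp]
    rw [intervalIntegral.integral_of_le (by norm_num), ← integral_indicator measurableSet_Ioc]
    refine integral_congr_ae (Eventually.of_forall fun t => ?_)
    simp only
    by_cases ht : t ∈ Set.Ioc (-1:ℝ) 1
    · rw [Set.indicator_of_mem ht, Set.indicator_of_mem ht, Circle.smul_def, Real.fourierChar_apply, smul_eq_mul, mul_comm]
      congr 2
      have := Real.pi_ne_zero
      have : (Real.pi : ℂ) ≠ 0 := by exact_mod_cast this
      push_cast
      field_simp
    · rw [Set.indicator_of_notMem ht, Set.indicator_of_notMem ht, smul_zero]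
  have h2 : Tendsto (fun x => (((∫ u in Set.Ioi (0:ℝ), (S u - 1) * kF (l * (x - u)) : ℝ)) : ℂ)) atTop (𝓝 0) := by
    refine key.congr fun x => ?_
    rw [fejer_identity_zero hS h0 hM hGc hG hl x, ← integral_complex_ofReal]
    simp
  have := (Complex.continuous_re.tendsto 0).comp h2
  simpa [Function.comp_def] using this

end

section
open MeasureTheory Filter Topology

lemma kF_scaled_integral {l : ℝ} (hl : 0 < l) (x : ℝ) :
    ∫ u, kF (l * (x - u)) = l⁻¹ * ∫ v, kF v := by
  rw [integral_sub_left_eq_self (fun u => kF (l * u)) volume x, Measure.integral_comp_mul_left,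
    abs_of_pos (inv_pos.2 hl), smul_eq_mul]

lemma kF_half_tendsto {l : ℝ} (hl : 0 < l) :
    Tendsto (fun x => ∫ u in Set.Ioi (0:ℝ), kF (l * (x - u))) atTop (𝓝 (l⁻¹ * ∫ v, kF v)) := by
  have h1 := (aecover_Iio (μ := volume) (tendsto_id (α := ℝ) (x := atTop))).integral_tendsto_of_countably_generated
    (kF_integrable.comp_mul_left' hl.ne')
  rw [Measure.integral_comp_mul_left, abs_of_pos (inv_pos.2 hl), smul_eq_mul] at h1
  refine h1.congr fun x => ?_
  rw [← integral_indicator measurableSet_Ioi, ← integral_indicator measurableSet_Iio,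
    ← integral_sub_left_eq_self _ volume x]
  refine integral_congr_ae (Eventually.of_forall fun u => ?_)
  simp [Set.indicator]

lemma kF_window {l : ℝ} (hl : 0 < l) (y r : ℝ) :
    ∫ u in (y - r)..(y + r), kF (l * (y - u)) = l⁻¹ * ∫ v in (-(l * r))..(l * r), kF v := by
  have := intervalIntegral.integral_comp_sub_mul (a := y - r) (b := y + r) kF hl.ne' (l * y)
  rw [smul_eq_mul] at this
  simp_rw [mul_sub]
  rw [this]
  congr 2 <;> ring

lemma laplace_tauberian {S : ℝ → ℝ} {M : ℝ} (hS : Measurable S) (h0 : ∀ u, 0 ≤ S u)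
    (hM : ∀ u, S u ≤ M) (hmono : ∀ u h, 0 ≤ h → S u * Real.exp (-h) ≤ S (u + h))
    {G : ℂ → ℂ} (hGc : ContinuousOn G {z | 0 ≤ z.re})
    (hG : ∀ z : ℂ, 0 < z.re →
      ∫ u in Set.Ioi (0:ℝ), ((S u - 1 : ℝ) : ℂ) * Complex.exp (-z * u) = G z) :
    Tendsto S atTop (𝓝 1) := by
  set I := ∫ v, kF v with hI
  have hIpos : 0 < I := kF_integral_pos
  have hM0 : 0 ≤ M := (h0 0).trans (hM 0)
  set J : ℝ → ℝ := fun R => ∫ v in (-R)..R, kF v with hJ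
  have hJt : Tendsto J atTop (𝓝 I) :=
    intervalIntegral_tendsto_integral kF_integrable tendsto_neg_atTop_atBot tendsto_id
  have hSk : ∀ l : ℝ, 0 < l → ∀ x, Integrable (fun u => S u * kF (l * (x - u))) := fun l hl x => by
    refine ((kF_comp_integrable hl x).const_mul M).mono' ?_ (Eventually.of_forall fun u => ?_)
    · have := hS
      have := kF_measurable
      exact Measurable.aestronglyMeasurable (by fun_prop)
    · rw [Real.norm_of_nonneg (mul_nonneg (h0 u) (kF_nonneg _))]
      exact mul_le_mul_of_nonneg_right (hM u) (kF_nonneg _)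
  have hPhi : ∀ l : ℝ, 0 < l → Tendsto (fun x => l * ∫ u in Set.Ioi (0:ℝ), S u * kF (l * (x - u))) atTop (𝓝 I) := by
    intro l hl
    have h1 := ((fejer_tendsto hS h0 hM hGc hG hl).add (kF_half_tendsto hl)).const_mul l
    rw [zero_add, mul_inv_cancel_left₀ hl.ne'] at h1
    refine h1.congr fun x => ?_
    rw [← integral_add]
    · congr 1
      refine integral_congr_ae (Eventually.of_forall fun u => ?_)
      simp only; ring
    · have : (fun u => (S u - 1) * kF (l * (x - u))) = fun u => S u * kF (l * (x - u)) - kF (l * (x - u)) := by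
        ext u; ring
      rw [this]
      exact ((hSk l hl x).sub (kF_comp_integrable hl x)).integrableOn
    · exact (kF_comp_integrable hl x).integrableOn
  -- upper bound
  have upper : ∀ h : ℝ, 0 < h → ∀ R : ℝ, 0 < R → ∀ x, 0 ≤ x →
      S x * Real.exp (-h) * J R ≤ (2 * R / h) * ∫ u in Set.Ioi (0:ℝ), S u * kF ((2 * R / h) * ((x + h / 2) - u)) := by
    intro h hh R hR x hx
    set l := 2 * R / h with hl
    have hlpos : 0 < l := by positivity
    have hlr : l * (h / 2) = R := by rw [hl]; field_simp
    have hw := kF_window hlpos (x + h / 2) (h / 2)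
    rw [hlr] at hw
    have : J R = l * ∫ u in (x + h / 2 - h / 2)..(x + h / 2 + h / 2), kF (l * (x + h / 2 - u)) := by
      rw [hw]; field_simp
      rfl
    rw [this, mul_left_comm]
    refine mul_le_mul_of_nonneg_left ?_ hlpos.le
    have e1 : x + h / 2 - h / 2 = x := by ring
    have e2 : x + h / 2 + h / 2 = x + h := by ring
    rw [e1, e2, intervalIntegral.integral_of_le (by linarith), ← integral_const_mul]
    calc _ ≤ ∫ u in Set.Ioc x (x + h), S u * kF (l * (x + h / 2 - u)) := by
          refine setIntegral_mono_on ((kF_comp_integrable hlpos _).const_mul _).integrableOn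
            (hSk l hlpos _).integrableOn measurableSet_Ioc fun u hu => ?_
          refine mul_le_mul_of_nonneg_right ?_ (kF_nonneg _)
          have h1 := hmono x (u - x) (by linarith [hu.1])
          rw [add_sub_cancel] at h1
          refine le_trans (mul_le_mul_of_nonneg_left (Real.exp_le_exp.2 ?_) (h0 x)) h1
          linarith [hu.2]
      _ ≤ _ := by
          refine setIntegral_mono_set (hSk l hlpos _).integrableOn
            (Eventually.of_forall fun u => mul_nonneg (h0 u) (kF_nonneg _)) ?_
          exact Eventually.of_forall fun u hu => lt_of_le_of_lt hx hu.1
  have lower : ∀ h : ℝ, 0 < h → ∀ R : ℝ, 0 < R → ∀ x,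
      (2 * R / h) * ∫ u in Set.Ioi (0:ℝ), S u * kF ((2 * R / h) * ((x - h / 2) - u)) ≤
       S x * Real.exp h * I + M * (I - J R) := by
    intro h hh R hR x
    set l := 2 * R / h with hl
    have hlpos : 0 < l := by positivity
    have hlr : l * (h / 2) = R := by rw [hl]; field_simp
    have hw := kF_window hlpos (x - h / 2) (h / 2)
    rw [hlr] at hw
    have e1 : x - h / 2 - h / 2 = x - h := by ring
    have e2 : x - h / 2 + h / 2 = x := by ring
    rw [e1, e2, intervalIntegral.integral_of_le (by linarith)] at hw
    have hJ' : J R = l * ∫ u in Set.Ioc (x - h) x, kF (l * (x - h / 2 - u)) := by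
      rw [hw]; field_simp
      rfl
    have hI' : I = l * ∫ u, kF (l * (x - h / 2 - u)) := by
      rw [kF_scaled_integral hlpos]; field_simp
      rfl
    have hk := kF_comp_integrable hlpos (x - h / 2)
    have : S x * Real.exp h * I + M * (I - J R) = l * ((S x * Real.exp h) * (∫ u, kF (l * (x - h / 2 - u)))
        + M * ∫ u in (Set.Ioc (x - h) x)ᶜ, kF (l * (x - h / 2 - u))) := by
      rw [setIntegral_compl measurableSet_Ioc hk, hJ', hI']
      ring
    rw [this]
    refine mul_le_mul_of_nonneg_left ?_ hlpos.le
    rw [← integral_const_mul, ← integral_const_mul, ← integral_indicator measurableSet_Ioc.compl,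
      ← integral_add (hk.const_mul _) ((hk.const_mul M).indicator measurableSet_Ioc.compl)]
    refine le_trans (setIntegral_le_integral (hSk l hlpos _) (Eventually.of_forall fun u => mul_nonneg (h0 u) (kF_nonneg _))) ?_
    refine integral_mono (hSk l hlpos _) ((hk.const_mul _).add ((hk.const_mul M).indicator measurableSet_Ioc.compl)) fun u => ?_
    simp only
    by_cases hu : u ∈ Set.Ioc (x - h) x
    · rw [Set.indicator_of_notMem (by simpa using hu), add_zero]
      refine mul_le_mul_of_nonneg_right ?_ (kF_nonneg _)
      have h1 := hmono u (x - u) (by linarith [hu.2])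
      rw [add_sub_cancel, ← le_div_iff₀ (Real.exp_pos _), div_eq_mul_inv, ← Real.exp_neg, neg_neg] at h1
      refine h1.trans (mul_le_mul_of_nonneg_left (Real.exp_le_exp.2 ?_) (h0 x))
      linarith [hu.1]
    · rw [Set.indicator_of_mem (by simpa using hu)]
      have := mul_le_mul_of_nonneg_right (hM u) (kF_nonneg (l * (x - h / 2 - u)))
      have h3 : 0 ≤ S x * Real.exp h * kF (l * (x - h / 2 - u)) :=
        mul_nonneg (mul_nonneg (h0 x) (Real.exp_nonneg _)) (kF_nonneg _)
      linarith
  have hJ0 : Tendsto (fun h : ℝ => J (h⁻¹)) (𝓝[>] 0) (𝓝 I) := hJt.comp tendsto_inv_nhdsGT_zero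
  have hid : Tendsto (fun h : ℝ => h) (𝓝[>] 0) (𝓝 0) := tendsto_id.mono_left nhdsWithin_le_nhds
  have hU : Tendsto (fun h : ℝ => Real.exp h * (I + h) / J (h⁻¹)) (𝓝[>] 0) (𝓝 1) := by
    have := ((hid.rexp).mul (hid.const_add I)).div hJ0 hIpos.ne'
    simpa [hIpos.ne', Pi.div_def] using this
  have hL : Tendsto (fun h : ℝ => Real.exp (-h) * (I - h - M * (I - J (h⁻¹))) / I) (𝓝[>] 0) (𝓝 1) := by
    have := ((hid.neg.rexp).mul ((hid.const_sub I).sub ((hJ0.const_sub I).const_mul M))).div_const I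
    simpa [hIpos.ne'] using this
  refine tendsto_order.2 ⟨fun a ha => ?_, fun a ha => ?_⟩
  · obtain ⟨h, hah, hh⟩ := ((hL.eventually (lt_mem_nhds ha)).and self_mem_nhdsWithin).exists
    have hh : 0 < h := hh
    have hl : 0 < 2 * h⁻¹ / h := by positivity
    have ev := ((hPhi _ hl).comp (tendsto_atTop_add_const_right _ (-(h/2)) tendsto_id)).eventually
      (lt_mem_nhds (show I - h < I by linarith))
    filter_upwards [ev] with x hx
    have h2 := lower h hh h⁻¹ (by positivity) x
    simp only [Function.comp, id, ← sub_eq_add_neg] at hx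
    have h3 : I - h - M * (I - J h⁻¹) < S x * Real.exp h * I := by linarith
    refine hah.trans ?_
    rw [div_lt_iff₀ hIpos, Real.exp_neg, inv_mul_lt_iff₀ (Real.exp_pos h)]
    linarith
  · obtain ⟨h, ⟨hah, hJp⟩, hh⟩ := (((hU.eventually (gt_mem_nhds ha)).and (hJ0.eventually (lt_mem_nhds hIpos))).and self_mem_nhdsWithin).exists
    have hh : 0 < h := hh
    have hl : 0 < 2 * h⁻¹ / h := by positivity
    have ev := ((hPhi _ hl).comp (tendsto_atTop_add_const_right _ ((h/2)) tendsto_id)).eventually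
      (gt_mem_nhds (show I < I + h by linarith))
    filter_upwards [ev, eventually_ge_atTop 0] with x hx hx0
    have h2 := upper h hh h⁻¹ (by positivity) x hx0
    simp only [Function.comp, id] at hx
    have h3 : S x * Real.exp (-h) * J h⁻¹ < I + h := by linarith
    refine lt_trans ?_ hah
    rw [lt_div_iff₀ hJp]
    rw [Real.exp_neg] at h3
    have := mul_lt_mul_of_pos_left h3 (Real.exp_pos h)
    calc S x * J h⁻¹ = Real.exp h * (S x * (Real.exp h)⁻¹ * J h⁻¹) := by field_simp
      _ < _ := this

end

section
open MeasureTheory Filter Topology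

lemma wiener_ikehara (a : ℕ → ℝ) (ha : ∀ n, 0 ≤ a n) (C : ℝ)
    (hC : ∀ N : ℕ, ∑ k ∈ Finset.Icc 1 N, a k ≤ C * N) (G : ℂ → ℂ)
    (hGc : ContinuousOn G {s | 1 ≤ s.re})
    (hG : ∀ s : ℂ, 1 < s.re → LSeries (fun n => (a n : ℂ)) s = 1 / (s - 1) + G s) :
    Tendsto (fun N : ℕ => (∑ k ∈ Finset.Icc 1 N, a k) / N) atTop (𝓝 1) := by
  set psi : ℕ → ℝ := fun N => ∑ k ∈ Finset.Icc 1 N, a k with hpsi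
  have psi_nonneg : ∀ N, 0 ≤ psi N := fun N => Finset.sum_nonneg fun k _ => ha k
  have psi_mono : Monotone psi := fun m n hmn =>
    Finset.sum_le_sum_of_subset_of_nonneg (Finset.Icc_subset_Icc_right hmn) fun k _ _ => ha k
  have hC0 : 0 ≤ C := by
    have := hC 1
    have h1 := psi_nonneg 1
    simp only [hpsi] at h1
    push_cast at this; linarith
  set S : ℝ → ℝ := fun u => psi ⌊Real.exp u⌋₊ * Real.exp (-u) with hS
  have hSmeas : Measurable S := by
    refine Measurable.mul ?_ (by fun_prop)
    exact (measurable_from_nat (f := psi)).comp (Nat.measurable_floor.comp Real.measurable_exp)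
  have hS0 : ∀ u, 0 ≤ S u := fun u => mul_nonneg (psi_nonneg _) (Real.exp_nonneg _)
  have hSM : ∀ u, S u ≤ C := fun u => by
    have h1 : psi ⌊Real.exp u⌋₊ ≤ C * Real.exp u :=
      (hC _).trans (mul_le_mul_of_nonneg_left (Nat.floor_le (Real.exp_nonneg _)) hC0)
    calc S u ≤ C * Real.exp u * Real.exp (-u) := mul_le_mul_of_nonneg_right h1 (Real.exp_nonneg _)
      _ = C := by rw [mul_assoc, ← Real.exp_add]; simp
  have hSmono : ∀ u h, 0 ≤ h → S u * Real.exp (-h) ≤ S (u + h) := fun u h hh => by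
    simp only [hS]
    rw [mul_assoc, ← Real.exp_add, neg_add]
    refine mul_le_mul_of_nonneg_right (psi_mono (Nat.floor_mono (Real.exp_le_exp.2 (by linarith)))) (Real.exp_nonneg _)
  have hbig : (fun n => ∑ k ∈ Finset.Icc 1 n, a k) =O[atTop] fun n : ℕ => (n:ℝ) ^ (1:ℝ) := by
    refine Asymptotics.IsBigO.of_bound C (Eventually.of_forall fun n => ?_)
    rw [Real.norm_of_nonneg (psi_nonneg n), Real.rpow_one, Real.norm_of_nonneg (Nat.cast_nonneg n)]
    exact hC n
  have hlap : ∀ z : ℂ, 0 < z.re →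
      ∫ u in Set.Ioi (0:ℝ), ((S u - 1 : ℝ) : ℂ) * Complex.exp (-z * u) = (G (1 + z) - 1) / (1 + z) := by
    intro z hz
    have hz0 : z ≠ 0 := by rintro rfl; simp at hz
    have hz1 : 1 + z ≠ 0 := by
      intro h
      have := congrArg Complex.re h
      simp at this; linarith
    have h1 := LSeries_eq_mul_integral_of_nonneg a (r := 1) zero_le_one (s := 1 + z) (by simpa using hz) hbig ha
    rw [hG _ (by simpa using hz)] at h1
    have himg : Real.exp '' Set.Ioi 0 = Set.Ioi 1 := by
      ext t; constructor
      · rintro ⟨u, hu, rfl⟩; exact Real.one_lt_exp_iff.2 hu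
      · intro ht
        have ht : 1 < t := ht
        exact ⟨Real.log t, Real.log_pos ht, Real.exp_log (by linarith)⟩
    rw [← himg, integral_image_eq_integral_abs_deriv_smul measurableSet_Ioi
      (fun x _ => (Real.hasDerivAt_exp x).hasDerivWithinAt) (Real.exp_injective.injOn)] at h1
    have h2 : ∀ u : ℝ, |Real.exp u| • ((∑ k ∈ Finset.Icc 1 ⌊Real.exp u⌋₊, (a k : ℂ)) *
        (Real.exp u : ℂ) ^ (-(1 + z + 1))) = (S u : ℂ) * Complex.exp (-z * u) := by
      intro u
      have e1 : ((Real.exp u : ℝ) : ℂ) ^ (-(1 + z + 1)) = Complex.exp (-(1 + z + 1) * u) := by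
        rw [Complex.cpow_def_of_ne_zero (by exact_mod_cast (Real.exp_pos u).ne'),
          ← Complex.ofReal_log (Real.exp_nonneg u), Real.log_exp, mul_comm]
      rw [e1, abs_of_pos (Real.exp_pos u), Complex.real_smul]
      simp only [hS, hpsi]
      push_cast
      have : Complex.exp (u:ℂ) * Complex.exp (-(1 + z + 1) * u) = Complex.exp (-u) * Complex.exp (-z * u) := by
        rw [← Complex.exp_add, ← Complex.exp_add]; ring_nf
      linear_combination (∑ k ∈ Finset.Icc 1 ⌊Real.exp u⌋₊, (a k : ℂ)) * this
    simp_rw [h2] at h1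
    have hexp : IntegrableOn (fun u : ℝ => Complex.exp (-z * u)) (Set.Ioi 0) :=
      integrableOn_exp_mul_complex_Ioi (by simpa using hz) 0
    have hSe : IntegrableOn (fun u : ℝ => (S u : ℂ) * Complex.exp (-z * u)) (Set.Ioi 0) := by
      refine hexp.bdd_mul (c := C) ?_ ?_
      · exact Measurable.aestronglyMeasurable (by fun_prop)
      · refine Eventually.of_forall fun u => ?_
        rw [Complex.norm_real, Real.norm_of_nonneg (hS0 u)]; exact hSM u
    have h3 : ∀ u : ℝ, ((S u - 1 : ℝ) : ℂ) * Complex.exp (-z * u) =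
      (S u : ℂ) * Complex.exp (-z * u) - Complex.exp (-z * u) := fun u => by push_cast; ring
    simp_rw [h3]
    rw [integral_sub hSe hexp, integral_exp_mul_complex_Ioi (by simpa using hz)]
    have h4 : ∫ u in Set.Ioi (0:ℝ), (S u : ℂ) * Complex.exp (-z * u) = (1 / z + G (1 + z)) / (1 + z) := by
      rw [eq_div_iff hz1, mul_comm, ← h1]; simp
    rw [h4]
    simp
    field_simp
    ring
  have hcont : ContinuousOn (fun z : ℂ => (G (1 + z) - 1) / (1 + z)) {z | 0 ≤ z.re} := by
    refine ContinuousOn.div ?_ (by fun_prop) ?_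
    · refine ContinuousOn.sub (hGc.comp (by fun_prop) ?_) continuousOn_const
      intro z hz
      have hz : 0 ≤ z.re := hz
      simpa using hz
    · intro z hz h
      have hz : 0 ≤ z.re := hz
      have := congrArg Complex.re h
      simp at this; linarith
  have main := laplace_tauberian hSmeas hS0 hSM hSmono hcont hlap
  have := main.comp (Real.tendsto_log_atTop.comp tendsto_natCast_atTop_atTop)
  refine this.congr' ?_
  filter_upwards [eventually_gt_atTop 0] with N hN
  have hN' : (0:ℝ) < N := by exact_mod_cast hN
  simp only [Function.comp, hS, Real.exp_neg, Real.exp_log hN', Nat.floor_natCast]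
  rfl

end

section
open MeasureTheory Filter Topology

lemma zeta_continuation (c : ℕ → ℝ) (hc : ∀ n, 0 ≤ c n) (κ δ C : ℝ) (hδ : 0 < δ)
    (hδ1 : δ ≤ 1) (hκ : 0 ≤ κ)
    (hC : ∀ N : ℕ, 1 ≤ N → |∑ k ∈ Finset.Icc 1 N, c k - κ * N| ≤ C * (N : ℝ) ^ (1 - δ)) :
    ∃ W : ℂ → ℂ, DifferentiableOn ℂ W {s | 1 - δ < s.re} ∧ W 1 = κ ∧
      ∀ s : ℂ, 1 < s.re → LSeries (fun n => (c n : ℂ)) s = W s / (s - 1) := by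
  have hC0 : 0 ≤ C := by
    have := hC 1 le_rfl
    simp only [Nat.cast_one, Real.one_rpow, mul_one] at this
    exact (abs_nonneg _).trans this
  set S : ℝ → ℝ := fun t => ∑ k ∈ Finset.Icc 1 ⌊t⌋₊, c k with hS
  have hSmono : Monotone S := by
    intro a b hab
    apply Finset.sum_le_sum_of_subset_of_nonneg
    · exact Finset.Icc_subset_Icc le_rfl (Nat.floor_mono hab)
    · intro i _ _; exact hc i
  set R : ℝ → ℂ := fun t => ((S t - κ * t : ℝ) : ℂ) with hR
  set f : ℝ → ℂ := (Set.Ioi (1:ℝ)).indicator R with hf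
  have hRb : ∀ t : ℝ, 1 ≤ t → ‖R t‖ ≤ (C + κ) * t ^ (1 - δ) := by
    intro t ht
    have h0 : (0:ℝ) ≤ t := by linarith
    have hfl1 : 1 ≤ ⌊t⌋₊ := (Nat.one_le_floor_iff t).2 ht
    have h1 := hC _ hfl1
    have h2 : (⌊t⌋₊ : ℝ) ≤ t := Nat.floor_le h0
    have h3 : t < ⌊t⌋₊ + 1 := Nat.lt_floor_add_one t
    have h4 : ((⌊t⌋₊ : ℕ) : ℝ) ^ (1 - δ) ≤ t ^ (1 - δ) :=
      Real.rpow_le_rpow (by positivity) h2 (by linarith)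
    have h5 : 1 ≤ t ^ (1 - δ) := Real.one_le_rpow ht (by linarith)
    rw [hR]; simp only [Complex.norm_real, Real.norm_eq_abs]
    have h6 : |S t - κ * t| ≤ |S t - κ * ⌊t⌋₊| + κ := by
      have : S t - κ * t = (S t - κ * ⌊t⌋₊) + (- (κ * (t - ⌊t⌋₊))) := by ring
      rw [this]
      refine (abs_add_le _ _).trans ?_
      gcongr
      rw [abs_neg, abs_of_nonneg (mul_nonneg hκ (by linarith))]
      nlinarith
    calc _ ≤ _ := h6
      _ ≤ C * t ^ (1 - δ) + κ * t ^ (1-δ) := by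
        gcongr
        · exact h1.trans (by gcongr)
        · nlinarith
      _ = _ := by ring
  have hRli : LocallyIntegrable R := by
    have h1 : LocallyIntegrable S := hSmono.locallyIntegrable
    have h2 : LocallyIntegrable (fun t : ℝ => κ * t) := by
      exact (by fun_prop : Continuous (fun t : ℝ => κ * t)).locallyIntegrable
    have h3 := h1.sub h2
    intro x
    obtain ⟨u, hu, hi⟩ := h3 x
    exact ⟨u, hu, hi.ofReal⟩
  have hfli : LocallyIntegrableOn f (Set.Ioi 0) := by
    have : LocallyIntegrable f := hRli.indicator measurableSet_Ioi
    exact this.locallyIntegrableOn _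
  have hftop : f =O[atTop] fun x => x ^ (-(δ - 1)) := by
    apply Asymptotics.IsBigO.of_bound (C + κ)
    filter_upwards [eventually_gt_atTop 1] with t ht
    rw [hf, Set.indicator_of_mem (by exact ht)]
    refine (hRb t ht.le).trans ?_
    rw [Real.norm_of_nonneg (Real.rpow_nonneg (by linarith) _)]
    gcongr <;>
    linarith
  have hf0 : ∀ b : ℝ, f =O[𝓝[>] 0] fun x => x ^ (-b) := by
    intro b
    apply Asymptotics.IsBigO.of_bound 1
    have : ∀ᶠ t : ℝ in 𝓝[>] 0, t < 1 := by
      apply eventually_nhdsWithin_of_eventually_nhds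
      exact eventually_lt_nhds (by norm_num)
    filter_upwards [this] with t ht
    rw [hf, Set.indicator_of_notMem (by simp; linarith)]
    simp
  have hmd : ∀ s : ℂ, 1 - δ < s.re → DifferentiableAt ℂ (fun s => mellin f (-s)) s := by
    intro s hs
    have := mellin_differentiableAt_of_isBigO_rpow (s := -s) (b := -s.re - 1) hfli hftop
      (by simp; linarith) (hf0 _) (by simp)
    exact this.comp s (by fun_prop)
  refine ⟨fun s => s * (s - 1) * mellin f (-s) + κ * s, ?_, by simp, ?_⟩
  · intro s hs
    have := hmd s hs
    exact (by fun_prop : DifferentiableAt ℂ (fun s => s * (s - 1) * mellin f (-s) + κ * s) s).differentiableWithinAt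
  · intro s hs
    have hs1 : s - 1 ≠ 0 := by
      intro h
      rw [sub_eq_zero] at h
      rw [h] at hs; simp at hs
    have hO : ((fun n => ∑ k ∈ Finset.Icc 1 n, c k) =O[atTop] fun n : ℕ => (n:ℝ) ^ (1:ℝ)) := by
      apply Asymptotics.IsBigO.of_bound (C + κ)
      filter_upwards [eventually_ge_atTop 1] with n hn
      have h1 := hC n hn
      have hn' : (1:ℝ) ≤ n := by exact_mod_cast hn
      have : (n:ℝ) ^ (1 - δ) ≤ n := by
        conv_rhs => rw [← Real.rpow_one (n:ℝ)]
        exact Real.rpow_le_rpow_of_exponent_le hn' (by linarith)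
      rw [Real.rpow_one, Real.norm_of_nonneg (Finset.sum_nonneg fun i _ => hc i), Real.norm_of_nonneg (by linarith)]
      have := (abs_le.mp h1).2
      nlinarith
    rw [LSeries_eq_mul_integral_of_nonneg c zero_le_one hs hO hc]
    have hconv : MellinConvergent f (-s) :=
      mellinConvergent_of_isBigO_rpow (b := -s.re - 1) hfli hftop
      (by simp; linarith) (hf0 _) (by simp)
    have e1 : ∀ t : ℝ, (t : ℂ) ^ (-s - 1) • f t = (Set.Ioi (1:ℝ)).indicator (fun t : ℝ => (t:ℂ)^(-s-1) * R t) t := by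
      intro t
      rw [hf]
      by_cases ht : t ∈ Set.Ioi (1:ℝ)
      · simp [Set.indicator_of_mem ht]
      · simp [Set.indicator_of_notMem ht]
    have hsub : Set.Ioi (0:ℝ) ∩ Set.Ioi 1 = Set.Ioi 1 := by
      apply Set.inter_eq_right.mpr
      exact Set.Ioi_subset_Ioi zero_le_one
    have hm : mellin f (-s) = ∫ t in Set.Ioi (1:ℝ), (t:ℂ)^(-s-1) * R t := by
      rw [mellin]
      simp_rw [e1]
      rw [setIntegral_indicator measurableSet_Ioi, hsub]
    have hRi : IntegrableOn (fun t : ℝ => (t:ℂ)^(-s-1) * R t) (Set.Ioi 1) := by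
      rw [MellinConvergent] at hconv
      simp_rw [e1] at hconv
      rw [integrableOn_indicator_iff measurableSet_Ioi] at hconv
      rwa [Set.inter_comm, hsub] at hconv
    have hli : IntegrableOn (fun t : ℝ => (t:ℂ)^(-s)) (Set.Ioi 1) :=
      integrableOn_Ioi_cpow_of_lt (by simpa using hs) one_pos
    have e2 : ∫ (t : ℝ) in Set.Ioi 1, (∑ k ∈ Finset.Icc 1 ⌊t⌋₊, (c k : ℂ)) * (t:ℂ) ^ (-(s + 1))
        = ∫ t in Set.Ioi (1:ℝ), ((t:ℂ)^(-s-1) * R t + κ * (t:ℂ)^(-s)) := by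
      apply setIntegral_congr_fun measurableSet_Ioi
      intro t ht
      have ht0 : (t:ℂ) ≠ 0 := by
        have : (0:ℝ) < t := lt_trans zero_lt_one ht
        exact_mod_cast this.ne'
      have : (t:ℂ) ^ (-s) = (t:ℂ)^(-s-1) * t := by
        rw [Complex.cpow_sub _ _ ht0, Complex.cpow_one]; field_simp
      simp only [this, hR, hS, neg_add']
      push_cast
      ring
    rw [e2, integral_add hRi (hli.const_mul _), integral_const_mul, ← hm,
      integral_Ioi_cpow_of_lt (by simpa using hs) one_pos]
    have h1 : -s + 1 ≠ 0 := by
      intro h; apply hs1; linear_combination -h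
    simp only [Complex.ofReal_one, Complex.one_cpow]
    field_simp
    ring

end

section
open MeasureTheory Filter Topology

/-- order of vanishing and log derivative -/
lemma logDeriv_limit (W L : ℂ → ℂ) (s₀ : ℂ) (hW : AnalyticAt ℂ W s₀)
    (hne : ¬ ∀ᶠ z in 𝓝 s₀, W z = 0) (q : ℂ → ℂ)
    (hWL : ∀ ε : ℝ, 0 < ε → W (s₀ + ε) * L (s₀ + ε) = W (s₀ + ε) * q (s₀ + ε) - deriv W (s₀ + ε)) :
    ∃ m : ℕ, (W s₀ = 0 → 1 ≤ m) ∧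
      Tendsto (fun ε : ℝ => (ε : ℂ) * (L (s₀ + ε) - q (s₀ + ε))) (𝓝[>] 0) (𝓝 (-(m : ℂ))) := by
  obtain ⟨m, g, hg, hg0, hev⟩ := hW.exists_eventuallyEq_pow_smul_nonzero_iff.mpr hne
  refine ⟨m, ?_, ?_⟩
  · intro h
    by_contra hm
    have : m = 0 := by omega
    subst this
    have := hev.self_of_nhds
    rw [h] at this; simp at this; exact hg0 this.symm
  have hlim : Tendsto (fun ε : ℝ => s₀ + (ε : ℂ)) (𝓝[>] 0) (𝓝 s₀) := by
    have : ContinuousAt (fun ε : ℝ => s₀ + (ε : ℂ)) 0 := by fun_prop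
    have h := this.tendsto
    simp only [Complex.ofReal_zero, add_zero] at h
    exact h.mono_left nhdsWithin_le_nhds
  have hgne : ∀ᶠ z in 𝓝 s₀, g z ≠ 0 := hg.continuousAt.eventually_ne hg0
  have hgan : ∀ᶠ z in 𝓝 s₀, AnalyticAt ℂ g z := hg.eventually_analyticAt
  have hev2 := hev.eventually_nhds
  have key : ∀ᶠ ε : ℝ in 𝓝[>] 0, (-(m:ℂ)) - ε * (deriv g (s₀ + ε) / g (s₀ + ε)) =
      (ε : ℂ) * (L (s₀ + ε) - q (s₀ + ε)) := by
    filter_upwards [hlim.eventually hgne, hlim.eventually hgan, hlim.eventually hev2, self_mem_nhdsWithin]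
      with ε h1 h2 h3 h4
    have h4 : 0 < ε := h4
    have hε : (ε : ℂ) ≠ 0 := by exact_mod_cast h4.ne'
    have hWd : deriv W (s₀ + ε) = (m * (ε:ℂ)^(m-1)) * g (s₀ + ε) + (ε:ℂ)^m * deriv g (s₀ + ε) := by
      have : W =ᶠ[𝓝 (s₀ + ε)] fun z => (z - s₀)^m * g z := by
        filter_upwards [h3] with z hz using by simpa using hz
      rw [this.deriv_eq]
      have hd1 : HasDerivAt (fun z : ℂ => (z - s₀)^m) (m * ((s₀ + ε) - s₀)^(m-1) * 1) (s₀ + ε) :=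
        ((hasDerivAt_id _).sub_const s₀).pow m
      have := hd1.mul h2.differentiableAt.hasDerivAt
      have h5 := this.deriv
      simp only [add_sub_cancel_left, mul_one] at h5
      exact h5
    have hWv : W (s₀ + ε) = (ε:ℂ)^m * g (s₀ + ε) := by
      have := h3.self_of_nhds
      simpa using this
    have h6 := hWL ε h4
    rw [hWd, hWv] at h6
    have hpm : (ε:ℂ)^m ≠ 0 := pow_ne_zero _ hε
    have hmm : (m : ℂ) * (ε:ℂ)^(m-1) * ε = m * (ε:ℂ)^m := by
      rcases m with _ | m
      · simp
      · simp [pow_succ, mul_assoc]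
    have h7 : (ε:ℂ)^m * g (s₀+ε) * ((ε:ℂ) * (L (s₀ + ε) - q (s₀ + ε))) =
       (ε:ℂ)^m * g (s₀+ε) * ((-(m:ℂ)) - ε * (deriv g (s₀ + ε) / g (s₀ + ε))) := by
      have hD : g (s₀+ε) * (deriv g (s₀ + ε) / g (s₀ + ε)) = deriv g (s₀ + ε) := by field_simp
      linear_combination (ε:ℂ) * h6 - g (s₀+ε) * hmm + (ε:ℂ)^m * ε * hD
    exact (mul_left_cancel₀ (mul_ne_zero hpm h1) h7).symm
  refine Tendsto.congr' key ?_
  have h1 : Tendsto (fun z => deriv g z / g z) (𝓝 s₀) (𝓝 (deriv g s₀ / g s₀)) :=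
    (hg.deriv.continuousAt.div hg.continuousAt hg0).tendsto
  have h2 := h1.comp hlim
  have h3 : Tendsto (fun ε : ℝ => (ε : ℂ)) (𝓝[>] 0) (𝓝 0) := by
    have : ContinuousAt (fun ε : ℝ => (ε : ℂ)) 0 := by fun_prop
    have h := this.tendsto
    simp only [Complex.ofReal_zero] at h
    exact h.mono_left nhdsWithin_le_nhds
  have := (h3.mul h2)
  have h4 := (tendsto_const_nhds (x := -(m:ℂ))).sub this
  simpa using h4

lemma lambda_341 (Λ : ℕ → ℝ) (hΛ : ∀ n, 0 ≤ Λ n) (σ t : ℝ)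
    (hs : ∀ s : ℂ, s.re = σ → LSeriesSummable (fun n => (Λ n : ℂ)) s) :
    0 ≤ (3 * LSeries (fun n => (Λ n : ℂ)) σ + 4 * LSeries (fun n => (Λ n : ℂ)) (σ + t * Complex.I)
      + LSeries (fun n => (Λ n : ℂ)) (σ + 2 * t * Complex.I)).re := by
  have h0 := (hs σ (by simp)).hasSum
  have h1 := (hs (σ + t * Complex.I) (by simp)).hasSum
  have h2 := (hs (σ + 2 * t * Complex.I) (by simp)).hasSum
  have h := ((h0.mul_left 3).add (h1.mul_left 4)).add h2
  have h := Complex.hasSum_re h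
  refine h.nonneg ?_
  intro n
  rcases Nat.eq_zero_or_pos n with rfl | hn
  · simp [LSeries.term]
  simp only [LSeries.term_of_ne_zero hn.ne']
  have hnC : (n : ℂ) ≠ 0 := by exact_mod_cast hn.ne'
  have hform : ∀ u : ℝ, ((Λ n : ℂ) / (n : ℂ) ^ ((σ : ℂ) + u * Complex.I)).re
      = Λ n * (n:ℝ)^(-σ) * Real.cos (u * Real.log n) := by
    intro u
    rw [div_eq_mul_inv, ← Complex.cpow_neg, neg_add, Complex.cpow_add _ _ hnC]
    have : (n:ℂ) ^ (-(u * Complex.I)) = Complex.exp ((-(u * Real.log n) : ℝ) * Complex.I) := by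
      rw [Complex.cpow_def_of_ne_zero hnC, ← Complex.natCast_log]
      congr 1; push_cast; ring
    rw [this, Complex.exp_mul_I, ← Complex.ofReal_cos, ← Complex.ofReal_sin]
    have h2 : (n:ℂ) ^ (-(σ:ℂ)) = (((n:ℝ)^(-σ) : ℝ) : ℂ) := by
      rw [Complex.ofReal_cpow (by positivity)]; push_cast; rfl
    rw [h2]
    simp only [Complex.mul_re, Complex.mul_im, Complex.add_re, Complex.add_im, Complex.ofReal_re, Complex.ofReal_im, Complex.I_re, Complex.I_im]
    rw [Real.cos_neg]; ring
  have e0 := hform 0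
  have e1 := hform t
  have e2 := hform (2 * t)
  simp only [Complex.ofReal_zero, zero_mul, add_zero, Real.cos_zero, mul_one] at e0
  rw [show ((2 * t : ℝ) : ℂ) = 2 * t by push_cast; rfl] at e2
  rw [Complex.add_re, Complex.add_re, e2, show (3:ℂ) = ((3:ℝ):ℂ) by norm_cast, show (4:ℂ) = ((4:ℝ):ℂ) by norm_cast,
    Complex.re_ofReal_mul, Complex.re_ofReal_mul, e0, e1]
  have hp : 0 ≤ Λ n * (n:ℝ)^(-σ) := mul_nonneg (hΛ n) (by positivity)
  have : 2 * t * Real.log n = 2 * (t * Real.log n) := by ring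
  rw [this, Real.cos_two_mul]
  nlinarith [mul_nonneg hp (sq_nonneg (1 + Real.cos (t * Real.log n)))]

end

section
open MeasureTheory Filter Topology

lemma beurling_pnt (c Λ : ℕ → ℝ) (hc : ∀ n, 0 ≤ c n) (hΛ : ∀ n, 0 ≤ Λ n) (κ δ C C' : ℝ) (hδ : 0 < δ)
    (hδ1 : δ ≤ 1) (hκ : 0 < κ)
    (hC : ∀ N : ℕ, 1 ≤ N → |∑ k ∈ Finset.Icc 1 N, c k - κ * N| ≤ C * (N : ℝ) ^ (1 - δ))
    (hC' : ∀ N : ℕ, ∑ k ∈ Finset.Icc 1 N, Λ k ≤ C' * N)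
    (hconv : ∀ n : ℕ, c n * Real.log n = ∑ p ∈ n.divisorsAntidiagonal, c p.1 * Λ p.2) :
    Tendsto (fun N : ℕ => (∑ k ∈ Finset.Icc 1 N, Λ k) / N) atTop (𝓝 1) := by
  obtain ⟨W, hWd, hW1, hZ⟩ := zeta_continuation c hc κ δ C hδ hδ1 hκ.le hC
  set Z := LSeries (fun n => (c n : ℂ)) with hZdef
  set L := LSeries (fun n => (Λ n : ℂ)) with hLdef
  have hC0 : 0 ≤ C := by
    have := hC 1 le_rfl
    simp only [Nat.cast_one, Real.one_rpow, mul_one] at this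
    exact (abs_nonneg _).trans this
  have hOc : ((fun n => ∑ k ∈ Finset.Icc 1 n, c k) =O[atTop] fun n : ℕ => (n:ℝ) ^ (1:ℝ)) := by
    apply Asymptotics.IsBigO.of_bound (C + κ)
    filter_upwards [eventually_ge_atTop 1] with n hn
    have h1 := hC n hn
    have hn' : (1:ℝ) ≤ n := by exact_mod_cast hn
    have : (n:ℝ) ^ (1 - δ) ≤ n := by
      conv_rhs => rw [← Real.rpow_one (n:ℝ)]
      exact Real.rpow_le_rpow_of_exponent_le hn' (by linarith)
    rw [Real.rpow_one, Real.norm_of_nonneg (Finset.sum_nonneg fun i _ => hc i), Real.norm_of_nonneg (by linarith)]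
    have := (abs_le.mp h1).2
    nlinarith
  have hOΛ : ((fun n => ∑ k ∈ Finset.Icc 1 n, Λ k) =O[atTop] fun n : ℕ => (n:ℝ) ^ (1:ℝ)) := by
    apply Asymptotics.IsBigO.of_bound C'
    filter_upwards with n
    rw [Real.rpow_one, Real.norm_of_nonneg (Finset.sum_nonneg fun i _ => hΛ i), Real.norm_of_nonneg (by positivity)]
    exact hC' n
  have hsc : ∀ s : ℂ, 1 < s.re → LSeriesSummable (fun n => (c n : ℂ)) s := fun s hs =>
    LSeriesSummable_of_sum_norm_bigO_and_nonneg hOc hc zero_le_one hs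
  have hsΛ : ∀ s : ℂ, 1 < s.re → LSeriesSummable (fun n => (Λ n : ℂ)) s := fun s hs =>
    LSeriesSummable_of_sum_norm_bigO_and_nonneg hOΛ hΛ zero_le_one hs
  have hac : LSeries.abscissaOfAbsConv (fun n => (c n : ℂ)) ≤ (1:ℝ) :=
    LSeries.abscissaOfAbsConv_le_of_forall_lt_LSeriesSummable fun y hy => hsc y (by simpa using hy)
  have haΛ : LSeries.abscissaOfAbsConv (fun n => (Λ n : ℂ)) ≤ (1:ℝ) :=
    LSeries.abscissaOfAbsConv_le_of_forall_lt_LSeriesSummable fun y hy => hsΛ y (by simpa using hy)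
  have hZ' : ∀ s : ℂ, 1 < s.re → HasDerivAt Z (-(Z s * L s)) s := by
    intro s hs
    have h1 := LSeries_hasDerivAt (f := fun n => (c n : ℂ)) (s := s)
      (lt_of_le_of_lt hac (by exact_mod_cast hs))
    rw [← LSeries_convolution' (hsc s hs) (hsΛ s hs), LSeries.convolution_def]
    convert h1 using 3
    ext n
    rw [LSeries.logMul, ← Complex.natCast_log]
    have := hconv n
    rw [mul_comm] at this
    exact_mod_cast this.symm
  have hopen : IsOpen {s : ℂ | 1 - δ < s.re} := isOpen_lt continuous_const Complex.continuous_re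
  have hopen1 : IsOpen {s : ℂ | 1 < s.re} := isOpen_lt continuous_const Complex.continuous_re
  have hWan : AnalyticOnNhd ℂ W {s | 1 - δ < s.re} := hWd.analyticOnNhd hopen
  have hsne : ∀ s : ℂ, 1 < s.re → s - 1 ≠ 0 := by
    intro s hs h
    rw [sub_eq_zero] at h
    rw [h] at hs; simp at hs
  have hWZ : ∀ s : ℂ, 1 < s.re → W s = (s - 1) * Z s := by
    intro s hs
    rw [hZ s hs]; have := hsne s hs; field_simp
  have hWL : ∀ s : ℂ, 1 < s.re → W s * L s = W s * (1 / (s - 1)) - deriv W s := by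
    intro s hs
    have h1 : HasDerivAt (fun s => (s - 1) * Z s) (1 * Z s + (s - 1) * (-(Z s * L s))) s :=
      ((hasDerivAt_id s).sub_const 1).mul (hZ' s hs)
    have h2 : W =ᶠ[𝓝 s] fun s => (s - 1) * Z s := by
      filter_upwards [hopen1.mem_nhds hs] with z hz using hWZ z hz
    rw [h2.deriv_eq, h1.deriv, hWZ s hs]
    have := hsne s hs
    field_simp
    ring
  have hpre : IsPreconnected {s : ℂ | 1 - δ < s.re} := by
    have : Convex ℝ {s : ℂ | 1 - δ < s.re} := convex_halfSpace_re_gt _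
    exact this.isPreconnected
  have hnz : ∀ s : ℂ, 1 - δ < s.re → ¬ ∀ᶠ z in 𝓝 s, W z = 0 := by
    intro s hs h
    have := hWan.eqOn_zero_of_preconnected_of_eventuallyEq_zero hpre hs h
    have h1 : W 1 = 0 := this (by simp [hδ])
    rw [hW1] at h1
    exact hκ.ne' (by exact_mod_cast h1)
  have hord : ∀ s : ℂ, 1 ≤ s.re → ∃ m : ℕ, (W s = 0 → 1 ≤ m) ∧
      Tendsto (fun ε : ℝ => (ε : ℂ) * (L (s + ε) - 1 / (s + ε - 1))) (𝓝[>] 0) (𝓝 (-(m : ℂ))) := by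
    intro s hs
    exact logDeriv_limit W L s (hWan s (by simp; linarith)) (hnz s (by linarith)) (fun s => 1 / (s - 1))
      (fun ε hε => hWL _ (by simp; linarith))
  have hε0 : Tendsto (fun ε : ℝ => (ε : ℂ)) (𝓝[>] 0) (𝓝 0) := by
    have : ContinuousAt (fun ε : ℝ => (ε : ℂ)) 0 := by fun_prop
    have h := this.tendsto
    simp only [Complex.ofReal_zero] at h
    exact h.mono_left nhdsWithin_le_nhds
  have hlim : ∀ s : ℂ, Tendsto (fun ε : ℝ => s + (ε : ℂ)) (𝓝[>] 0) (𝓝 s) := by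
    intro s
    simpa using (tendsto_const_nhds (x := s)).add hε0
  have hord' : ∀ s : ℂ, 1 ≤ s.re → s ≠ 1 → ∃ m : ℕ, (W s = 0 → 1 ≤ m) ∧
      Tendsto (fun ε : ℝ => (ε : ℂ) * L (s + ε)) (𝓝[>] 0) (𝓝 (-(m : ℂ))) := by
    intro s hs h1
    obtain ⟨m, hm, ht⟩ := hord s hs
    refine ⟨m, hm, ?_⟩
    have hc1 : ContinuousAt (fun s : ℂ => 1 / (s - 1)) s := by
      apply ContinuousAt.div
      · fun_prop
      · fun_prop
      · exact sub_ne_zero.mpr h1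
    have h2 := hε0.mul (hc1.tendsto.comp (hlim s))
    have h3 := ht.add h2
    simp only [Function.comp_def, zero_mul, add_zero] at h3
    refine h3.congr fun ε => by ring
  have hord1 : Tendsto (fun ε : ℝ => (ε : ℂ) * L (1 + ε)) (𝓝[>] 0) (𝓝 1) := by
    have hWc : ContinuousAt W 1 := (hWan 1 (by simp [hδ])).continuousAt
    have hWc' : ContinuousAt (deriv W) 1 := (hWan 1 (by simp [hδ])).deriv.continuousAt
    have hW1' : W 1 ≠ 0 := by rw [hW1]; exact_mod_cast hκ.ne'
    have h1 := (hWc'.div hWc hW1').tendsto.comp (hlim 1)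
    have h2 := (tendsto_const_nhds (x := (1:ℂ))).sub (hε0.mul h1)
    simp only [zero_mul, sub_zero] at h2
    refine Tendsto.congr' ?_ h2
    filter_upwards [(hlim 1).eventually (hWc.eventually_ne hW1'), self_mem_nhdsWithin] with ε h4 h5
    have h5 : 0 < ε := h5
    have hεne : (ε:ℂ) ≠ 0 := by exact_mod_cast h5.ne'
    have h6 := hWL (1 + ε) (by simp [h5])
    simp only [add_sub_cancel_left] at h6
    simp only [Function.comp_def, Pi.div_apply]
    have h7 : W (1 + ε) * ((ε:ℂ) * L (1 + ε)) = W (1+ε) * (1 - ε * (deriv W (1+ε) / W (1+ε))) := by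
      have h8 : W (1+ε) * (deriv W (1+ε) / W (1+ε)) = deriv W (1+ε) := by field_simp
      have h9 : (ε:ℂ) * (1/(ε:ℂ)) = 1 := by field_simp
      linear_combination (ε:ℂ) * h6 + W (1+ε) * h9 + (ε:ℂ) * h8
    exact (mul_left_cancel₀ h4 h7).symm
  have hnv : ∀ s : ℂ, 1 ≤ s.re → W s ≠ 0 := by
    intro s hs h0
    have hs1 : s ≠ 1 := by
      rintro rfl
      rw [hW1] at h0
      exact hκ.ne' (by exact_mod_cast h0)
    obtain ⟨m, hm, ht⟩ := hord' s hs hs1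
    have hm1 := hm h0
    rcases hs.lt_or_eq with hs | hs
    · have hLc : ContinuousAt L s := by
        have := LSeries_analyticOnNhd (fun n => (Λ n : ℂ)) s
          (lt_of_le_of_lt haΛ (by exact_mod_cast hs))
        exact this.continuousAt
      have h2 := hε0.mul (hLc.tendsto.comp (hlim s))
      have h3 := tendsto_nhds_unique ht h2
      rw [zero_mul, neg_eq_zero] at h3
      have : m = 0 := by exact_mod_cast h3
      omega
    · set t := s.im with htdef
      have hst : s = 1 + t * Complex.I := by
        apply Complex.ext <;> simp [← hs, htdef]
      have ht0 : t ≠ 0 := by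
        intro h
        apply hs1
        rw [hst, h]; simp
      obtain ⟨m', -, ht'⟩ := hord' (1 + 2 * t * Complex.I) (by simp) (by
        intro h
        have := congrArg Complex.im h
        simp at this
        exact ht0 this)
      have h5 := ((hord1.const_mul 3).add (ht.const_mul 4)).add ht'
      have h6 := (Complex.continuous_re.tendsto _).comp h5
      have h7 : 0 ≤ ((3:ℂ) * 1 + 4 * -(m:ℂ) + -(m':ℂ)).re := by
        refine ge_of_tendsto h6 ?_
        filter_upwards [self_mem_nhdsWithin] with ε hε
        have hε : 0 < ε := hε
        have h8 := lambda_341 Λ hΛ (1 + ε) t (fun s hs => hsΛ s (by rw [hs]; linarith))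
        have h9 := mul_nonneg hε.le h8
        rw [← Complex.re_ofReal_mul] at h9
        simp only [Function.comp_def]
        convert h9 using 2
        rw [hst]
        push_cast
        rw [show (1:ℂ) + t * Complex.I + ε = 1 + ε + t * Complex.I by ring,
          show (1:ℂ) + 2 * t * Complex.I + ε = 1 + ε + 2 * t * Complex.I by ring]
        ring
      simp at h7
      have : (1:ℝ) ≤ m := by exact_mod_cast hm1
      have : (0:ℝ) ≤ m' := by positivity
      linarith
  refine wiener_ikehara Λ hΛ C' hC' (fun s => -(deriv W s / W s)) ?_ ?_
  · intro s hs
    have hs : 1 ≤ s.re := hs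
    have h := hWan s (show 1 - δ < s.re by linarith)
    exact ((h.deriv.continuousAt.div h.continuousAt (hnv s hs)).neg).continuousWithinAt
  · intro s hs
    have h1 := hWL s hs
    have h2 := hnv s hs.le
    have h3 := hsne s hs
    have : L s = 1 / (s - 1) + -(deriv W s / W s) := by
      apply mul_left_cancel₀ h2
      have h8 : W s * (deriv W s / W s) = deriv W s := by field_simp
      linear_combination h1 + h8
    exact this

end

section
open MeasureTheory Filter Topology Pointwise

/-- points within `R` of both `S` and its complement -/
def ambSet {E : Type*} [NormedAddCommGroup E] (R : ℝ) (S : Set E) : Set E :=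
  {x | (∃ y ∈ S, ‖x - y‖ ≤ R) ∧ ∃ z ∉ S, ‖x - z‖ ≤ R}

lemma ambSet_bounded {E : Type*} [NormedAddCommGroup E] (R : ℝ) (S : Set E)
    (hS : Bornology.IsBounded S) : Bornology.IsBounded (ambSet R S) := by
  obtain ⟨C, hC⟩ := hS.exists_norm_le
  refine (isBounded_iff_forall_norm_le).2 ⟨R + C, ?_⟩
  rintro x ⟨⟨y, hy, hxy⟩, -⟩
  calc ‖x‖ = ‖(x - y) + y‖ := by simp
    _ ≤ _ := norm_add_le _ _
    _ ≤ _ := by gcongr; exact hC y hy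

lemma lattice_count {E : Type*} [NormedAddCommGroup E] [NormedSpace ℝ E] [FiniteDimensional ℝ E]
    [MeasurableSpace E] [BorelSpace E] (μ : Measure E) [μ.IsAddHaarMeasure]
    (L : Submodule ℤ E) [DiscreteTopology L] [IsZLattice ℝ L] :
    ∃ R V : ℝ, 0 < R ∧ 0 < V ∧ ∀ S : Set E, MeasurableSet S → Bornology.IsBounded S →
      |(Nat.card (S ∩ L : Set E) : ℝ) * V - μ.real S| ≤ μ.real (ambSet R S) := by
  classical
  have : Module.Free ℤ L := ZLattice.module_free ℝ L
  have : Module.Finite ℤ L := ZLattice.module_finite ℝ L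
  set b := Module.Free.chooseBasis ℤ L with hb
  set B := b.ofZLatticeBasis ℝ L with hB
  set F := ZSpan.fundamentalDomain B with hF
  have hFb : Bornology.IsBounded F := ZSpan.fundamentalDomain_isBounded B
  have hFm : MeasurableSet F := ZSpan.fundamentalDomain_measurableSet B
  obtain ⟨R, hR⟩ := hFb.exists_norm_le
  have hspan : Submodule.span ℤ (Set.range B) = L := b.ofZLatticeBasis_span ℝ L
  have hFV : 0 < μ.real F := by
    apply ENNReal.toReal_pos
    · exact ZSpan.measure_fundamentalDomain_ne_zero B
    · exact hFb.measure_lt_top.ne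
  refine ⟨max R 1, μ.real F, lt_of_lt_of_le one_pos (le_max_right _ _), hFV, ?_⟩
  intro S hSm hSb
  have hR : ∀ x ∈ F, ‖x‖ ≤ max R 1 := fun x hx => (hR x hx).trans (le_max_left _ _)
  set R' := max R 1
  have hfin : (S ∩ L : Set E).Finite := by
    have := Metric.finite_isBounded_inter_isClosed (s := (L : Set E)) (K := S) ?_ hSb ?_
    · exact this
    · exact ⟨inferInstanceAs (DiscreteTopology L)⟩
    · exact AddSubgroup.isClosed_of_discrete (H := L.toAddSubgroup)
  set U : Set E := ⋃ l ∈ (S ∩ L : Set E), (fun x => l + x) '' F with hU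
  have hdisj : (S ∩ L : Set E).PairwiseDisjoint (fun l => (fun x => l + x) '' F) := by
    intro l hl l' hl' hne
    rw [Function.onFun, Set.disjoint_left]
    rintro _ ⟨x, hx, rfl⟩ ⟨y, hy, hxy⟩
    apply hne
    simp only at hxy
    have e := ZSpan.exist_unique_vadd_mem_fundamentalDomain B (l + x)
    have h1 : (⟨-l, by rw [hspan]; exact L.neg_mem hl.2⟩ : Submodule.span ℤ (Set.range B)) +ᵥ (l + x) ∈ F := by
      have : (⟨-l, by rw [hspan]; exact L.neg_mem hl.2⟩ : Submodule.span ℤ (Set.range B)) +ᵥ (l + x) = x := by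
        rw [Submodule.vadd_def]; simp
      rw [this]; exact hx
    have h2 : (⟨-l', by rw [hspan]; exact L.neg_mem hl'.2⟩ : Submodule.span ℤ (Set.range B)) +ᵥ (l + x) ∈ F := by
      have : (⟨-l', by rw [hspan]; exact L.neg_mem hl'.2⟩ : Submodule.span ℤ (Set.range B)) +ᵥ (l + x) = y := by
        rw [Submodule.vadd_def, ← hxy]; simp
      rw [this]; exact hy
    have h3 := e.unique h1 h2
    simpa using h3
  have hmeas : ∀ l : E, MeasurableSet ((fun x => l + x) '' F) := by
    intro l
    exact (MeasurableEquiv.addLeft l).measurableSet_image.2 hFm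
  have hUm : MeasurableSet U := MeasurableSet.biUnion hfin.countable fun l _ => hmeas l
  have hUμ : μ U = (Nat.card (S ∩ L : Set E)) * μ F := by
    rw [hU, measure_biUnion hfin.countable hdisj (fun l _ => hmeas l)]
    have : ∀ l : (S ∩ L : Set E), μ ((fun x => (l:E) + x) '' F) = μ F := by
      intro l
      rw [Set.image_add_left, measure_preimage_add]
    simp_rw [this]
    have := hfin.to_subtype
    rw [ENNReal.tsum_const, ENat.card_eq_coe_natCard]
    rfl
  have hUr : μ.real U = Nat.card (S ∩ L : Set E) * μ.real F := by
    rw [Measure.real, hUμ, ENNReal.toReal_mul]; simp [Measure.real]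
  rw [← hUr]
  have hUb : μ U ≠ ⊤ := by
    rw [hUμ]
    exact ENNReal.mul_ne_top (by simp) hFb.measure_lt_top.ne
  have hSt : μ S ≠ ⊤ := hSb.measure_lt_top.ne
  have hAt : μ (ambSet R' S) ≠ ⊤ := (ambSet_bounded R' S hSb).measure_lt_top.ne
  have h1 : S \ U ⊆ ambSet R' S := by
    intro x hx
    refine ⟨⟨x, hx.1, by simp [R']⟩, ?_⟩
    refine ⟨ZSpan.floor B x, ?_, ?_⟩
    · intro h
      apply hx.2
      rw [hU]
      simp only [Set.mem_iUnion]
      refine ⟨ZSpan.floor B x, ⟨h, ?_⟩, ZSpan.fract B x, ZSpan.fract_mem_fundamentalDomain B x, ?_⟩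
      · have := (ZSpan.floor B x).2
        exact hspan.le this
      · simp [ZSpan.fract]
    · exact hR _ (ZSpan.fract_mem_fundamentalDomain B x)
  have h2 : U \ S ⊆ ambSet R' S := by
    rintro x ⟨hx, hxS⟩
    refine ⟨?_, ⟨x, hxS, by simp [R']⟩⟩
    rw [hU] at hx
    simp only [Set.mem_iUnion] at hx
    obtain ⟨l, hl, y, hy, rfl⟩ := hx
    exact ⟨l, hl.1, by simpa using hR y hy⟩
  rw [abs_sub_le_iff]
  constructor
  · have := measureReal_mono h2 hAt
    have h3 := le_measureReal_sdiff (μ := μ) (s₁ := U) (s₂ := S) hSt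
    linarith
  · have := measureReal_mono h1 hAt
    have h3 := le_measureReal_sdiff (μ := μ) (s₁ := S) (s₂ := U) hUb
    linarith

lemma ambSet_smul {E : Type*} [NormedAddCommGroup E] [NormedSpace ℝ E] (R t : ℝ) (ht : 0 < t) (S : Set E) :
    ambSet R (t • S) = t • ambSet (R / t) S := by
  have key : ∀ x y : E, ‖t⁻¹ • x - t⁻¹ • y‖ ≤ R / t ↔ ‖x - y‖ ≤ R := by
    intro x y
    rw [← smul_sub, norm_smul, norm_inv, Real.norm_of_nonneg ht.le, le_div_iff₀ ht]
    field_simp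
  ext x
  rw [Set.mem_smul_set_iff_inv_smul_mem₀ ht.ne']
  constructor
  · rintro ⟨⟨y, hy, hxy⟩, z, hz, hxz⟩
    rw [Set.mem_smul_set_iff_inv_smul_mem₀ ht.ne'] at hy hz
    exact ⟨⟨_, hy, (key _ _).2 hxy⟩, _, hz, (key _ _).2 hxz⟩
  · rintro ⟨⟨y, hy, hxy⟩, z, hz, hxz⟩
    refine ⟨⟨t • y, Set.smul_mem_smul_set hy, ?_⟩, t • z, ?_, ?_⟩
    · rw [← key]; rwa [inv_smul_smul₀ ht.ne']
    · rwa [Set.smul_mem_smul_set_iff₀ ht.ne']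
    · rw [← key]; rwa [inv_smul_smul₀ ht.ne']

end

section
open MeasureTheory Filter Topology Pointwise

section
open NumberField NumberField.InfinitePlace NumberField.mixedEmbedding NumberField.Units
  NumberField.Units.dirichletUnitTheorem NumberField.mixedEmbedding.fundamentalCone ENNReal

variable (K : Type*) [Field K] [NumberField K]

open scoped Classical in
lemma setLIntegral_pi_exp (n : ℕ) (J : InfinitePlace K → Set ℝ) :
    ∫⁻ (x : realSpace K) in Set.univ.pi J, ENNReal.ofReal (Real.exp (x w₀ * n)) =
      (∫⁻ y in J w₀, ENNReal.ofReal (Real.exp (y * n))) *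
        ∏ v ∈ Finset.univ.erase (w₀ : InfinitePlace K), volume (J v) := by
  rw [volume_pi, Measure.restrict_pi_pi, lintegral_eq_lmarginal_univ 0,
    lmarginal_erase' _ (by fun_prop) (Finset.mem_univ w₀)]
  simp_rw [Function.update_self, lmarginal, lintegral_const, Measure.pi_univ, Measure.restrict_apply_univ]
  congr 1
  exact Finset.prod_coe_sort (Finset.univ.erase (w₀ : InfinitePlace K)) (fun v => volume (J v))

/-- base intervals -/
noncomputable def baseI (v : InfinitePlace K) : Set ℝ := by
  classical exact if v = w₀ then Set.Iic 1 else Set.Icc (-1) 2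

/-- slabs -/
noncomputable def slab (w : InfinitePlace K) (a τ : ℝ) : Set (realSpace K) :=
  Set.univ.pi fun v => {y | y ∈ baseI K v ∧ (v = w → |y - a| ≤ τ)}

lemma measurableSet_slab (w : InfinitePlace K) (a τ : ℝ) : MeasurableSet (slab K w a τ) := by
  refine MeasurableSet.univ_pi fun v => ?_
  have h1 : MeasurableSet (baseI K v) := by
    unfold baseI; split_ifs
    · exact measurableSet_Iic
    · exact measurableSet_Icc
  by_cases h : v = w
  · simp only [h, forall_const]
    subst h
    exact h1.inter (measurableSet_le (f := fun y : ℝ => |y - a|) (g := fun _ => τ) (by fun_prop) measurable_const)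
  · simpa [h] using h1

open scoped Classical in
lemma slab_bound (n : ℕ) (hn : 0 < n) : ∃ C : ℝ≥0∞, C ≠ ⊤ ∧ ∀ (w : InfinitePlace K) (a τ : ℝ),
    ∫⁻ (x : realSpace K) in slab K w a τ, ENNReal.ofReal (Real.exp (x w₀ * n)) ≤ C * ENNReal.ofReal τ := by
  have hn' : 0 < (n : ℝ) := Nat.cast_pos.mpr hn
  set A : ℝ≥0∞ := ∫⁻ y in Set.Iic (1:ℝ), ENNReal.ofReal (Real.exp (y * n)) with hA
  have hAt : A ≠ ⊤ := by
    have h := integrableOn_exp_mul_Iic hn' 1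
    simp_rw [mul_comm (n:ℝ)] at h
    exact h.lintegral_lt_top.ne
  set E : ℝ≥0∞ := ENNReal.ofReal (Real.exp n)
  have hvol : ∀ a τ : ℝ, volume {y : ℝ | |y - a| ≤ τ} ≤ 2 * ENNReal.ofReal τ := by
    intro a τ
    have : {y : ℝ | |y - a| ≤ τ} = Set.Icc (a - τ) (a + τ) := by
      ext y; simp only [abs_le, Set.mem_ofPred_eq, Set.mem_Icc]; constructor <;> rintro ⟨h1, h2⟩ <;> constructor <;> linarith
    rw [this, Real.volume_Icc, show a + τ - (a - τ) = 2 * τ by ring, ENNReal.ofReal_mul (by norm_num)]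
    simp
  refine ⟨2 * (E + A) * 3 ^ (Fintype.card (InfinitePlace K)), ?_, ?_⟩
  · refine ENNReal.mul_ne_top (ENNReal.mul_ne_top (by simp) (ENNReal.add_ne_top.2 ⟨by simp [E], hAt⟩)) (by simp)
  intro w a τ
  rw [slab, setLIntegral_pi_exp]
  have hb3 : ∀ v ∈ Finset.univ.erase (w₀ : InfinitePlace K),
      volume {y | y ∈ baseI K v ∧ (v = w → |y - a| ≤ τ)} ≤ 3 := by
    intro v hv
    refine (measure_mono (t := Set.Icc (-1) 2) ?_).trans ?_
    · rintro y ⟨hy, -⟩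
      rwa [baseI, if_neg (Finset.ne_of_mem_erase hv)] at hy
    · rw [Real.volume_Icc]; norm_num
  by_cases hw : w = w₀
  · have h1 : ∫⁻ y in {y | y ∈ baseI K w₀ ∧ ((w₀ : InfinitePlace K) = w → |y - a| ≤ τ)}, ENNReal.ofReal (Real.exp (y * n))
        ≤ E * (2 * ENNReal.ofReal τ) := by
      refine (setLIntegral_mono' (g := fun _ => E) ?_ ?_).trans ?_
      · simp only [hw, forall_const, baseI, if_pos]
        exact measurableSet_Iic.inter (measurableSet_le (f := fun y : ℝ => |y - a|) (g := fun _ => τ) (by fun_prop) measurable_const)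
      · rintro y ⟨hy, -⟩
        simp only [baseI, if_pos, Set.mem_Iic] at hy
        apply ENNReal.ofReal_le_ofReal
        apply Real.exp_le_exp.2
        nlinarith
      · rw [setLIntegral_const]
        gcongr
        refine (measure_mono ?_).trans (hvol a τ)
        rintro y ⟨-, hy⟩
        exact hy hw.symm
    have h2 := Finset.prod_le_pow_card _ _ _ hb3
    calc _ ≤ (E * (2 * ENNReal.ofReal τ)) * 3 ^ (Finset.univ.erase (w₀ : InfinitePlace K)).card := by gcongr
      _ ≤ ((E + A) * (2 * ENNReal.ofReal τ)) * 3 ^ (Fintype.card (InfinitePlace K)) := by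
          gcongr
          · exact le_self_add
          · norm_num
          · exact Finset.card_le_univ _
      _ = _ := by ring
  · have h1 : ∫⁻ y in {y | y ∈ baseI K w₀ ∧ ((w₀ : InfinitePlace K) = w → |y - a| ≤ τ)}, ENNReal.ofReal (Real.exp (y * n))
        ≤ A := by
      rw [hA]
      apply lintegral_mono_set
      rintro y ⟨hy, -⟩
      simpa only [baseI, if_pos] using hy
    have hwm : w ∈ Finset.univ.erase (w₀ : InfinitePlace K) := by simp [hw]
    rw [← Finset.mul_prod_erase _ _ hwm]
    have h2 := Finset.prod_le_pow_card _ _ _ (fun v hv => hb3 v (Finset.mem_of_mem_erase hv) :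
      ∀ v ∈ (Finset.univ.erase (w₀ : InfinitePlace K)).erase w,
        volume {y | y ∈ baseI K v ∧ (v = w → |y - a| ≤ τ)} ≤ 3)
    have h3 : volume {y | y ∈ baseI K w ∧ (w = w → |y - a| ≤ τ)} ≤ 2 * ENNReal.ofReal τ := by
      refine (measure_mono ?_).trans (hvol a τ)
      rintro y ⟨-, hy⟩
      exact hy rfl
    calc _ ≤ A * ((2 * ENNReal.ofReal τ) * 3 ^ ((Finset.univ.erase (w₀ : InfinitePlace K)).erase w).card) := by gcongr
      _ ≤ (E + A) * ((2 * ENNReal.ofReal τ) * 3 ^ (Fintype.card (InfinitePlace K))) := by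
          gcongr
          · exact le_add_self
          · norm_num
          · exact Finset.card_le_univ _
      _ = _ := by ring

open scoped Classical in
lemma volume_param : ∃ C : ℝ≥0∞, C ≠ ⊤ ∧ ∀ T : Set (realSpace K), MeasurableSet T →
    volume (normAtAllPlaces ⁻¹' (expMapBasis '' T)) =
      C * ∫⁻ (x : realSpace K) in T, ENNReal.ofReal (Real.exp (x w₀ * Module.finrank ℚ K)) := by
  refine ⟨(2 ^ nrRealPlaces K * .ofReal (2 * Real.pi) ^ nrComplexPlaces K) * ((2 : ℝ≥0∞)⁻¹ ^ nrComplexPlaces K * ENNReal.ofReal (regulator K) * (Module.finrank ℚ K)), ?_, ?_⟩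
  · refine ENNReal.mul_ne_top (ENNReal.mul_ne_top (by simp) (ENNReal.pow_ne_top ofReal_ne_top)) (ENNReal.mul_ne_top (ENNReal.mul_ne_top (by simp) (by simp)) (by simp))
  intro T hT
  have hm : MeasurableSet (normAtAllPlaces ⁻¹' (expMapBasis '' T) : Set (mixedSpace K)) := by
    refine MeasurableSet.preimage ?_ (continuous_normAtAllPlaces K).measurable
    exact hT.image_of_continuousOn_injOn (continuous_expMapBasis K).continuousOn
      (injective_expMapBasis K).injOn
  rw [volume_eq_two_pow_mul_two_pi_pow_mul_integral Set.preimage_image_preimage hm,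
    normAtAllPlaces_image_preimage_expMapBasis, setLIntegral_expMapBasis_image hT (by fun_prop)]
  simp_rw [ENNReal.inv_mul_cancel_right
    (Finset.prod_ne_zero_iff.mpr fun _ _ ↦ ofReal_ne_zero_iff.mpr (expMapBasis_pos _ _))
    (prod_ne_top fun _ _ ↦ ofReal_ne_top)]
  rw [mul_assoc]
  ring
end

end

section
open MeasureTheory Filter Topology Pointwise

section
open NumberField NumberField.InfinitePlace NumberField.mixedEmbedding NumberField.Units
  NumberField.Units.dirichletUnitTheorem NumberField.mixedEmbedding.fundamentalCone ENNReal

variable (K : Type*) [Field K] [NumberField K]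

variable {K} in
open scoped Classical in
lemma normAtPlace_le_norm (w : InfinitePlace K) (x : mixedSpace K) : normAtPlace w x ≤ ‖x‖ := by
  rw [norm_eq_sup'_normAtPlace]
  exact Finset.le_sup' (fun w => normAtPlace w x) (Finset.mem_univ w)

variable {K} in
open scoped Classical in
lemma normAtPlace_lip (w : InfinitePlace K) (x y : mixedSpace K) :
    |normAtPlace w x - normAtPlace w y| ≤ ‖x - y‖ := by
  have h1 := normAtPlace_add_le w (x - y) y
  have h2 := normAtPlace_add_le w (y - x) x
  simp only [sub_add_cancel] at h1 h2
  have h3 := normAtPlace_le_norm w (x - y)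
  have h4 := normAtPlace_le_norm w (y - x)
  rw [norm_sub_rev] at h4
  rw [abs_le]; constructor <;> linarith

lemma abs_log_sub_le {a b m : ℝ} (hm : 0 < m) (ha : m ≤ a) (hb : m ≤ b) :
    |Real.log a - Real.log b| ≤ |a - b| / m := by
  wlog h : b ≤ a generalizing a b
  · rw [abs_sub_comm, abs_sub_comm a b]; exact this hb ha (le_of_not_ge h)
  have hb0 : 0 < b := hm.trans_le hb
  have ha0 : 0 < a := hm.trans_le ha
  rw [abs_of_nonneg (sub_nonneg.2 (Real.log_le_log hb0 h)), abs_of_nonneg (by linarith),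
    ← Real.log_div ha0.ne' hb0.ne']
  refine (Real.log_le_sub_one_of_pos (by positivity)).trans ?_
  rw [div_sub_one hb0.ne']
  have : 0 ≤ a - b := by linarith
  gcongr

open scoped Classical in
/-- the key covering of the ambiguous set -/
lemma amb_cover : ∃ A B ε₀ : ℝ, 0 < A ∧ 0 < B ∧ 0 < ε₀ ∧ ε₀ ≤ 1 ∧ ∀ ε : ℝ, 0 < ε → ε ≤ ε₀ →
    ambSet ε (normLeOne K) ⊆ Metric.closedBall 0 (A * √ε) ∪
      ⋃ v : InfinitePlace K, (normAtAllPlaces ⁻¹' (expMapBasis '' slab K v 0 (B * √ε)) ∪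
        normAtAllPlaces ⁻¹' (expMapBasis '' slab K v 1 (B * √ε))) := by
  set T := (completeBasis K).equivFunL with hT
  set b : ℝ := ‖(T.symm : realSpace K →L[ℝ] realSpace K)‖ with hb
  set B : ℝ := 2 * ‖(T : realSpace K →L[ℝ] realSpace K)‖ + 1 with hB
  have hB0 : 0 < B := by positivity
  have hmult1 : ∀ w : InfinitePlace K, (1:ℝ) ≤ w.mult := fun w => InfinitePlace.one_le_mult
  have hmult2 : ∀ w : InfinitePlace K, (w.mult : ℝ) ≤ 2 := fun w => by
    rw [InfinitePlace.mult]; split_ifs <;> norm_num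
  -- bounds
  have hbd : ∀ p ∈ paramSet K, ∀ w, Real.exp (-b) * Real.exp (p w₀) ≤ expMapBasis p w ∧
      expMapBasis p w ≤ Real.exp b * Real.exp (p w₀) := by
    intro p hp w
    rw [expMapBasis_apply'']
    set q : realSpace K := fun i ↦ if i = w₀ then 0 else p i with hq
    have hq1 : ‖q‖ ≤ 1 := by
      rw [pi_norm_le_iff_of_nonneg zero_le_one]
      intro i
      rw [hq]; simp only
      split_ifs with hi
      · simp
      · have := hp i (Set.mem_univ i)
        simp only [if_neg hi] at this
        rw [Real.norm_of_nonneg this.1]; exact this.2.le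
    have h1 : |(T.symm q) w| ≤ b := by
      calc |(T.symm q) w| ≤ ‖T.symm q‖ := norm_le_pi_norm (T.symm q : realSpace K) w
        _ ≤ b * ‖q‖ := (T.symm : realSpace K →L[ℝ] realSpace K).le_opNorm q
        _ ≤ b * 1 := by gcongr
        _ = b := mul_one _
    have h2 : expMapBasis q w = Real.exp ((w.mult : ℝ)⁻¹ * (T.symm q) w) := rfl
    have h3 : |(w.mult : ℝ)⁻¹ * (T.symm q) w| ≤ b := by
      rw [abs_mul, abs_of_nonneg (by positivity)]
      have : (w.mult : ℝ)⁻¹ ≤ 1 := inv_le_one_of_one_le₀ (hmult1 w)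
      calc _ ≤ 1 * |(T.symm q) w| := by gcongr
        _ ≤ b := by linarith
    have h4 := abs_le.1 h3
    simp only [Pi.smul_apply, smul_eq_mul, h2]
    constructor
    · rw [mul_comm]; gcongr; exact h4.1
    · rw [mul_comm]; gcongr; exact h4.2
  -- logs
  have hparam : ∀ x : mixedSpace K, (∀ w, 0 < normAtPlace w x) → ∃ q : realSpace K,
      normAtAllPlaces x = expMapBasis q ∧ q = T (fun w => w.mult * Real.log (normAtPlace w x)) := by
    intro x hx
    refine ⟨_, ?_, rfl⟩
    ext w
    have : expMapBasis (T (fun w => (w.mult:ℝ) * Real.log (normAtPlace w x))) w =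
      Real.exp ((w.mult : ℝ)⁻¹ * (T.symm (T (fun w => (w.mult:ℝ) * Real.log (normAtPlace w x)))) w) := rfl
    rw [this, T.symm_apply_apply, inv_mul_cancel_left₀ (by have := hmult1 w; positivity), Real.exp_log (hx w)]
  have hdiff : ∀ (x y : mixedSpace K) (m ε : ℝ), 0 < m → (∀ w, m ≤ normAtPlace w x) → (∀ w, m ≤ normAtPlace w y) →
      ‖x - y‖ ≤ ε → ∀ v, |T (fun w => w.mult * Real.log (normAtPlace w x)) v -
        T (fun w => w.mult * Real.log (normAtPlace w y)) v| ≤ B * (ε / m) := by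
    intro x y m ε hm hx hy hxy v
    have hε : 0 ≤ ε := (norm_nonneg _).trans hxy
    rw [← Pi.sub_apply, ← map_sub]
    refine (norm_le_pi_norm _ v).trans (((T : realSpace K →L[ℝ] realSpace K).le_opNorm _).trans ?_)
    have : ‖(fun w : InfinitePlace K => (w.mult:ℝ) * Real.log (normAtPlace w x)) -
        (fun w => (w.mult:ℝ) * Real.log (normAtPlace w y))‖ ≤ 2 * (ε / m) := by
      rw [pi_norm_le_iff_of_nonneg (by positivity)]
      intro w
      rw [Pi.sub_apply, ← mul_sub, norm_mul, Real.norm_of_nonneg (by positivity)]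
      have h1 := abs_log_sub_le hm (hx w) (hy w)
      have h2 := normAtPlace_lip w x y
      have h3 : ‖Real.log (normAtPlace w x) - Real.log (normAtPlace w y)‖ ≤ ε / m :=
        h1.trans (by gcongr; exact h2.trans hxy)
      have := hmult2 w
      gcongr
    calc _ ≤ ‖(T : realSpace K →L[ℝ] realSpace K)‖ * (2 * (ε / m)) := by gcongr
      _ ≤ _ := by rw [hB]; have : 0 ≤ ε / m := by positivity
                  nlinarith
  refine ⟨Real.exp b * (4 * Real.exp b) + 1, B, min 1 ((1/B)^2), by positivity, hB0, by positivity, min_le_left _ _, ?_⟩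
  rintro ε hε hεle x ⟨⟨y, hy, hxy⟩, z, hz, hxz⟩
  have hε1 : ε ≤ 1 := hεle.trans (min_le_left _ _)
  have hsq : √ε ≤ 1 := Real.sqrt_le_one.2 hε1
  have hs0 : 0 < √ε := Real.sqrt_pos.2 hε
  have hss : √ε * √ε = ε := Real.mul_self_sqrt hε.le
  have hεs : ε ≤ √ε := by nlinarith
  have hτ1 : B * √ε ≤ 1 := by
    have : √ε ≤ 1 / B := by
      rw [Real.sqrt_le_left (by positivity)]
      exact hεle.trans (min_le_right _ _)
    rwa [le_div_iff₀' hB0] at this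
  rw [normLeOne_eq_preimage] at hy hz
  obtain ⟨p, hp, hpy⟩ := hy
  have hpw : ∀ w, normAtPlace w y = expMapBasis p w := fun w => (congrFun hpy w).symm
  by_cases hcase : Real.exp (p w₀) ≤ 4 * Real.exp b * √ε
  · left
    rw [mem_closedBall_zero_iff]
    have hy1 : ‖y‖ ≤ Real.exp b * (4 * Real.exp b * √ε) := by
      rw [norm_eq_sup'_normAtPlace]
      apply Finset.sup'_le
      intro w _
      rw [hpw]
      exact ((hbd p hp w).2).trans (by gcongr)
    calc ‖x‖ = ‖(x - y) + y‖ := by simp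
      _ ≤ _ := norm_add_le _ _
      _ ≤ ε + Real.exp b * (4 * Real.exp b * √ε) := by gcongr
      _ ≤ _ := by nlinarith
  · right
    push Not at hcase
    have hyw : ∀ w, 4 * √ε ≤ normAtPlace w y := by
      intro w
      rw [hpw]
      refine le_trans ?_ (hbd p hp w).1
      have : 4 * √ε = Real.exp (-b) * (4 * Real.exp b * √ε) := by
        rw [Real.exp_neg]; field_simp
      rw [this]
      gcongr
    have hxw : ∀ w, √ε ≤ normAtPlace w x := by
      intro w
      have := (abs_le.1 ((normAtPlace_lip w x y).trans hxy)).1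
      have := hyw w
      linarith
    have hzw : ∀ w, √ε ≤ normAtPlace w z := by
      intro w
      have := (abs_le.1 ((normAtPlace_lip w x y).trans hxy)).1
      have := (abs_le.1 ((normAtPlace_lip w x z).trans hxz)).2
      have := hyw w
      linarith
    have hyw' : ∀ w, √ε ≤ normAtPlace w y := fun w => by have := hyw w; linarith
    obtain ⟨q, hq1, hq2⟩ := hparam x (fun w => hs0.trans_le (hxw w))
    obtain ⟨r, hr1, hr2⟩ := hparam z (fun w => hs0.trans_le (hzw w))
    obtain ⟨p', hp1, hp2⟩ := hparam y (fun w => hs0.trans_le (hyw' w))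
    have hpp : p' = p := injective_expMapBasis K (by rw [← hp1, hpy])
    rw [hpp] at hp2
    have hεdiv : ε / √ε = √ε := by rw [div_eq_iff hs0.ne', hss]
    have hqp : ∀ v, |q v - p v| ≤ B * √ε := by
      intro v
      have := hdiff x y (√ε) ε hs0 hxw hyw' hxy v
      rwa [← hq2, ← hp2, hεdiv] at this
    have hqr : ∀ v, |q v - r v| ≤ B * √ε := by
      intro v
      have := hdiff x z (√ε) ε hs0 hxw hzw hxz v
      rwa [← hq2, ← hr2, hεdiv] at this
    have hrn : r ∉ paramSet K := by
      intro h
      apply hz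
      exact ⟨r, h, hr1.symm⟩
    have hbase : ∀ v, q v ∈ baseI K v := by
      intro v
      have h1 := abs_le.1 (hqp v)
      have h2 := hp v (Set.mem_univ v)
      unfold baseI
      by_cases hv : v = w₀
      · simp only [if_pos hv, Set.mem_Iic] at h2 ⊢
        linarith
      · simp only [if_neg hv, Set.mem_Ico, Set.mem_Icc] at h2 ⊢
        constructor <;> linarith
    have : ∃ v, r v ∉ (if v = w₀ then Set.Iic (0:ℝ) else Set.Ico 0 1) := by
      by_contra hcon
      push Not at hcon
      exact hrn fun v _ => hcon v
    obtain ⟨v, hv⟩ := this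
    have h1 := abs_le.1 (hqp v)
    have h2 := hp v (Set.mem_univ v)
    have h3 := abs_le.1 (hqr v)
    have key : |q v - 0| ≤ B * √ε ∨ |q v - 1| ≤ B * √ε := by
      by_cases hvw : v = w₀
      · simp only [if_pos hvw, Set.mem_Iic, not_le] at h2 hv
        left; rw [abs_le]; constructor <;> linarith
      · simp only [if_neg hvw, Set.mem_Ico, not_and_or, not_le, not_lt] at h2 hv
        rcases hv with hv | hv
        · left; rw [abs_le]; constructor <;> linarith
        · right; rw [abs_le]; constructor <;> linarith
    rw [Set.mem_iUnion]
    refine ⟨v, ?_⟩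
    rcases key with key | key
    · left
      refine ⟨q, ?_, hq1.symm⟩
      intro u _
      exact ⟨hbase u, fun h => h ▸ key⟩
    · right
      refine ⟨q, ?_, hq1.symm⟩
      intro u _
      exact ⟨hbase u, fun h => h ▸ key⟩
end

end

section
open MeasureTheory Filter Topology Pointwise

section
open NumberField NumberField.InfinitePlace NumberField.mixedEmbedding NumberField.Units
  NumberField.Units.dirichletUnitTheorem NumberField.mixedEmbedding.fundamentalCone ENNReal

variable (K : Type*) [Field K] [NumberField K]

open scoped Classical in
lemma amb_volume_small : ∃ C ε₀ : ℝ, 0 ≤ C ∧ 0 < ε₀ ∧ ∀ ε : ℝ, 0 < ε → ε ≤ ε₀ →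
    volume.real (ambSet ε (normLeOne K)) ≤ C * √ε := by
  obtain ⟨A, B, ε₀, hA, hB, hε₀, hε₁, hcov⟩ := amb_cover K
  have hn : 0 < Module.finrank ℚ K := Module.finrank_pos
  obtain ⟨C1, hC1, hslab⟩ := slab_bound K (Module.finrank ℚ K) hn
  obtain ⟨C2, hC2, hpar⟩ := volume_param K
  have hfr : Module.finrank ℝ (mixedSpace K) = Module.finrank ℚ K := mixedEmbedding.finrank K
  set V : ℝ≥0∞ := volume (Metric.ball (0 : mixedSpace K) 1) with hV
  have hVt : V ≠ ⊤ := measure_ball_lt_top.ne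
  set n := Module.finrank ℚ K
  set M : ℝ≥0∞ := ENNReal.ofReal (A ^ n) * V + Fintype.card (InfinitePlace K) * (2 * (C2 * C1 * ENNReal.ofReal B)) with hM
  have hMt : M ≠ ⊤ := by
    rw [hM]
    refine ENNReal.add_ne_top.2 ⟨ENNReal.mul_ne_top (by simp) hVt, ENNReal.mul_ne_top (by simp)
      (ENNReal.mul_ne_top (by simp) (ENNReal.mul_ne_top (ENNReal.mul_ne_top hC2 hC1) (by simp)))⟩
  refine ⟨M.toReal, ε₀, by positivity, hε₀, ?_⟩
  intro ε hε hle
  have hs0 : 0 < √ε := Real.sqrt_pos.2 hε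
  have hs1 : √ε ≤ 1 := Real.sqrt_le_one.2 (hle.trans hε₁)
  have hone : ∀ (v : InfinitePlace K) (a : ℝ), volume (normAtAllPlaces ⁻¹' (expMapBasis '' slab K v a (B * √ε)) : Set (mixedSpace K))
      ≤ C2 * C1 * ENNReal.ofReal B * ENNReal.ofReal (√ε) := by
    intro v a
    rw [hpar _ (measurableSet_slab K v a _)]
    calc _ ≤ C2 * (C1 * ENNReal.ofReal (B * √ε)) := by gcongr; exact hslab v a _
      _ = _ := by rw [ENNReal.ofReal_mul hB.le]; ring
  have hball : volume (Metric.closedBall (0 : mixedSpace K) (A * √ε)) ≤ ENNReal.ofReal (A ^ n) * V * ENNReal.ofReal (√ε) := by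
    rw [Measure.addHaar_closedBall _ _ (by positivity), hfr, mul_pow, ENNReal.ofReal_mul (by positivity)]
    have : √ε ^ n ≤ √ε := pow_le_of_le_one hs0.le hs1 hn.ne'
    calc _ ≤ ENNReal.ofReal (A ^ n) * ENNReal.ofReal (√ε) * V := by gcongr
      _ = _ := by ring
  have : volume (ambSet ε (normLeOne K)) ≤ M * ENNReal.ofReal (√ε) := by
    refine (measure_mono (hcov ε hε hle)).trans ((measure_union_le _ _).trans ?_)
    rw [hM, add_mul]
    refine add_le_add hball ((measure_iUnion_fintype_le _ _).trans ?_)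
    calc _ ≤ ∑ v : InfinitePlace K, (2 * (C2 * C1 * ENNReal.ofReal B)) * ENNReal.ofReal (√ε) := by
          refine Finset.sum_le_sum fun v _ => (measure_union_le _ _).trans ?_
          calc _ ≤ C2 * C1 * ENNReal.ofReal B * ENNReal.ofReal (√ε) + C2 * C1 * ENNReal.ofReal B * ENNReal.ofReal (√ε) :=
                add_le_add (hone v 0) (hone v 1)
            _ = _ := by ring
      _ = _ := by rw [Finset.sum_const, Finset.card_univ, nsmul_eq_mul]; ring
  rw [measureReal_def]
  refine (ENNReal.toReal_mono (ENNReal.mul_ne_top hMt (by simp)) this).trans ?_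
  rw [ENNReal.toReal_mul, ENNReal.toReal_ofReal hs0.le]

open scoped Classical in
lemma amb_volume (R : ℝ) : ∃ C : ℝ, 0 ≤ C ∧ ∀ ε : ℝ, 0 < ε → ε ≤ R →
    volume.real (ambSet ε (normLeOne K)) ≤ C * √ε := by
  obtain ⟨C, ε₀, hC, hε₀, h⟩ := amb_volume_small K
  set D := volume.real (ambSet R (normLeOne K))
  refine ⟨C + D / √ε₀, by positivity, fun ε hε hR => ?_⟩
  by_cases hle : ε ≤ ε₀
  · refine (h ε hε hle).trans ?_
    gcongr
    have : 0 ≤ D / √ε₀ := by positivity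
    linarith
  · push Not at hle
    have h1 : volume.real (ambSet ε (normLeOne K)) ≤ D := by
      refine measureReal_mono ?_ ?_
      · rintro x ⟨⟨y, hy, h1⟩, z, hz, h2⟩
        exact ⟨⟨y, hy, h1.trans hR⟩, z, hz, h2.trans hR⟩
      · exact (ambSet_bounded R _ (isBounded_normLeOne K)).measure_lt_top.ne
    have h2 : 1 ≤ √ε / √ε₀ := by
      rw [one_le_div (by positivity)]; exact Real.sqrt_le_sqrt hle.le
    have h3 : 0 ≤ C * √ε := by positivity
    have h4 : 0 ≤ D := measureReal_nonneg
    calc _ ≤ D := h1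
      _ ≤ D * (√ε / √ε₀) := by nlinarith
      _ ≤ _ := by rw [add_mul, div_mul_eq_mul_div, mul_div_assoc]; linarith

end

end

section
open MeasureTheory Filter Topology Pointwise

section
open NumberField NumberField.InfinitePlace NumberField.mixedEmbedding NumberField.Units
  NumberField.Units.dirichletUnitTheorem NumberField.mixedEmbedding.fundamentalCone ENNReal
open scoped nonZeroDivisors
open Ideal (absNorm absNorm_pos_of_nonZeroDivisors)

variable (K : Type*) [Field K] [NumberField K]

variable {K} in
lemma class_aux1 {C : ClassGroup (𝓞 K)} {J : (Ideal (𝓞 K))⁰} {s : ℝ} (hJ : ClassGroup.mk0 J = C⁻¹) :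
    Nat.card {I : (Ideal (𝓞 K))⁰ // absNorm (I : Ideal (𝓞 K)) ≤ s ∧ ClassGroup.mk0 I = C}
      = Nat.card {I : (Ideal (𝓞 K))⁰ // (J : Ideal (𝓞 K)) ∣ I ∧ Submodule.IsPrincipal (I : Ideal (𝓞 K)) ∧
        absNorm (I : Ideal (𝓞 K)) ≤ s * absNorm (J : Ideal (𝓞 K))} := by
  simp_rw [← nonZeroDivisors_dvd_iff_dvd_coe]
  refine Nat.card_congr ?_
  refine ((Equiv.dvd J).subtypeEquiv fun I ↦ ?_).trans
    (Equiv.subtypeSubtypeEquivSubtypeInter (fun I : (Ideal (𝓞 K))⁰ ↦ J ∣ I) _)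
  rw [← ClassGroup.mk0_eq_one_iff (SetLike.coe_mem _)]
  simp_rw [Equiv.dvd_apply, Submonoid.coe_mul, ← Submonoid.mul_def, _root_.map_mul, hJ,
    inv_mul_eq_one, Nat.cast_mul, mul_comm s, eq_comm, and_comm, and_congr_left_iff]
  exact fun _ ↦
    (mul_le_mul_iff_of_pos_left (Nat.cast_pos.mpr (absNorm_pos_of_nonZeroDivisors J))).symm

lemma cone_scale (t : ℝ) (ht : 0 < t) :
    {x : mixedSpace K | x ∈ fundamentalCone K ∧ mixedEmbedding.norm x ≤ t ^ Module.finrank ℚ K} =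
      t • normLeOne K := by
  ext x
  rw [Set.mem_smul_set_iff_inv_smul_mem₀ ht.ne']
  simp only [Set.mem_ofPred_eq, mem_normLeOne, smul_mem_iff_mem (inv_ne_zero ht.ne'),
    mixedEmbedding.norm_smul, and_congr_right_iff]
  intro _
  rw [abs_of_pos (by positivity), inv_pow, inv_mul_le_iff₀ (by positivity), mul_one]

lemma ideal_lattice_card (J : (Ideal (𝓞 K))⁰) (s : ℝ) :
    Nat.card ({x : mixedSpace K | x ∈ fundamentalCone K ∧ mixedEmbedding.norm x ≤ s} ∩
      (idealLattice K (FractionalIdeal.mk0 K J)) : Set (mixedSpace K)) =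
    Nat.card {a : idealSet K J // mixedEmbedding.norm (a : mixedSpace K) ≤ s} := by
  refine Nat.card_congr ((Equiv.subtypeEquivProp ?_).trans
    (Equiv.subtypeSubtypeEquivSubtypeInter _ (mixedEmbedding.norm · ≤ s)).symm)
  ext x
  simp only [Set.mem_inter_iff, Set.mem_ofPred_eq, SetLike.mem_coe, mem_idealLattice, mem_idealSet]
  constructor
  · rintro ⟨⟨hx₁, hx₂⟩, _, ⟨x, hx₃, rfl⟩, h⟩
    exact ⟨⟨hx₁, x, hx₃, h⟩, hx₂⟩
  · rintro ⟨⟨hx₁, ⟨x, hx₂, rfl⟩⟩, hx₃⟩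
    exact ⟨⟨hx₁, hx₃⟩, ⟨(x : K), by simp [hx₂], rfl⟩⟩

open scoped Classical in
lemma class_count (C : ClassGroup (𝓞 K)) : ∃ κ D : ℝ, ∀ s : ℝ, 1 ≤ s →
    |(Nat.card {I : (Ideal (𝓞 K))⁰ // absNorm (I : Ideal (𝓞 K)) ≤ s ∧ ClassGroup.mk0 I = C} : ℝ) - κ * s|
      ≤ D * s ^ (1 - 1 / (2 * (Module.finrank ℚ K : ℝ))) := by
  obtain ⟨J, hJ⟩ := ClassGroup.mk0_surjective C⁻¹
  obtain ⟨R, V, hR, hV, hcount⟩ := lattice_count volume (idealLattice K (FractionalIdeal.mk0 K J))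
  obtain ⟨A, hA, hamb⟩ := amb_volume K R
  have hn : 0 < Module.finrank ℚ K := Module.finrank_pos
  have hfr : Module.finrank ℝ (mixedSpace K) = Module.finrank ℚ K := mixedEmbedding.finrank K
  set n := Module.finrank ℚ K with hnn
  have hn' : (0:ℝ) < n := Nat.cast_pos.2 hn
  set δ : ℝ := 1 / (2 * (n:ℝ)) with hδ
  set q : ℝ := (absNorm (J : Ideal (𝓞 K)) : ℝ) with hq
  have hq1 : 1 ≤ q := by
    rw [hq]; exact_mod_cast absNorm_pos_of_nonZeroDivisors J
  set w : ℝ := (torsionOrder K : ℝ) with hw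
  have hw0 : 0 < w := by rw [hw]; exact_mod_cast (torsionOrder_pos K)
  set N1 := volume.real (normLeOne K) with hN1
  refine ⟨q * N1 / (w * V), A * √R * q ^ (1 - δ) / (w * V), fun s hs => ?_⟩
  have hs0 : 0 < s := by linarith
  set u := s * q with hu
  have hu1 : 1 ≤ u := one_le_mul_of_one_le_of_one_le hs hq1
  have hu0 : 0 < u := by linarith
  set t : ℝ := u ^ (1 / (n:ℝ)) with ht
  have ht1 : 1 ≤ t := Real.one_le_rpow hu1 (by positivity)
  have ht0 : 0 < t := by linarith
  have htn : t ^ n = u := by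
    rw [ht, ← Real.rpow_natCast, ← Real.rpow_mul hu0.le, one_div_mul_cancel hn'.ne', Real.rpow_one]
  have hsq : u * √(R / t) = √R * u ^ (1 - δ) := by
    rw [Real.sqrt_div' _ ht0.le, Real.sqrt_eq_rpow t, ht, ← Real.rpow_mul hu0.le,
      Real.rpow_sub hu0, Real.rpow_one, hδ]
    rw [show 1 / (n:ℝ) * (1/2) = 1 / (2 * n) by field_simp]
    ring
  have h1 := class_aux1 (s := s) hJ
  have h2 : (Nat.card {a : idealSet K J // mixedEmbedding.norm (a : mixedSpace K) ≤ u}) =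
     _ := (card_isPrincipal_dvd_norm_le K J u).symm
  have h3 := ideal_lattice_card K J u
  have h4 := hcount (t • normLeOne K) ((measurableSet_normLeOne K).const_smul₀ t)
    ((isBounded_normLeOne K).smul₀ t)
  rw [← cone_scale K t ht0, ← hnn, htn, h3, h2, ← h1, ← htn, cone_scale K t ht0, ambSet_smul R t ht0] at h4
  rw [measureReal_def, measureReal_def, Measure.addHaar_smul, Measure.addHaar_smul, hfr, ENNReal.toReal_mul,
    ENNReal.toReal_mul, abs_of_nonneg (by positivity : 0 ≤ t ^ n), ENNReal.toReal_ofReal (by positivity), htn,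
    ← measureReal_def, ← measureReal_def] at h4
  have h5 := hamb (R / t) (by positivity) (div_le_self hR.le ht1)
  set cnt : ℝ := (Nat.card {I : (Ideal (𝓞 K))⁰ // absNorm (I : Ideal (𝓞 K)) ≤ s ∧ ClassGroup.mk0 I = C} : ℝ) with hcnt
  have h6 : |cnt * w * V - u * N1| ≤ A * √R * u ^ (1 - δ) := by
    push_cast at h4
    refine h4.trans ?_
    calc _ ≤ u * (A * √(R / t)) := by gcongr
      _ = A * (u * √(R / t)) := by ring
      _ = _ := by rw [hsq]; ring
  have h7 : cnt - q * N1 / (w * V) * s = (cnt * w * V - u * N1) / (w * V) := by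
    rw [hu]; field_simp
  rw [h7, abs_div, abs_of_pos (by positivity : 0 < w * V), div_le_iff₀ (by positivity)]
  refine h6.trans (le_of_eq ?_)
  rw [hu, Real.mul_rpow hs0.le (by linarith)]
  field_simp

/-- number of nonzero ideals of norm `n` -/
noncomputable def idealCount (n : ℕ) : ℕ := Nat.card {I : (Ideal (𝓞 K))⁰ // absNorm (I : Ideal (𝓞 K)) = n}

lemma ideal_count_total : ∃ κ δ D : ℝ, 0 < δ ∧ δ ≤ 1 ∧ 0 < κ ∧ ∀ N : ℕ, 1 ≤ N →
    |(Nat.card {I : (Ideal (𝓞 K))⁰ // absNorm (I : Ideal (𝓞 K)) ≤ N} : ℝ) - κ * N|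
      ≤ D * (N : ℝ) ^ (1 - δ) := by
  classical
  choose κ D h using class_count K
  have hn : 0 < Module.finrank ℚ K := Module.finrank_pos
  have hn' : (1:ℝ) ≤ Module.finrank ℚ K := by exact_mod_cast hn
  set δ : ℝ := 1 / (2 * (Module.finrank ℚ K : ℝ)) with hδ
  have hδ0 : 0 < δ := by positivity
  have hδ1 : δ ≤ 1 := by rw [hδ, div_le_one (by positivity)]; linarith
  have hmain : ∀ N : ℕ, 1 ≤ N →
    |(Nat.card {I : (Ideal (𝓞 K))⁰ // absNorm (I : Ideal (𝓞 K)) ≤ N} : ℝ) - (∑ C, κ C) * N|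
      ≤ (∑ C, D C) * (N : ℝ) ^ (1 - δ) := by
    intro N hN
    have hsum : (Nat.card {I : (Ideal (𝓞 K))⁰ // absNorm (I : Ideal (𝓞 K)) ≤ N} : ℝ) =
        ∑ C : ClassGroup (𝓞 K), (Nat.card {I : (Ideal (𝓞 K))⁰ // (absNorm (I : Ideal (𝓞 K)) : ℝ) ≤ N ∧ ClassGroup.mk0 I = C} : ℝ) := by
      have : Fintype {I : (Ideal (𝓞 K))⁰ // absNorm (I : Ideal (𝓞 K)) ≤ N} :=
        @Fintype.ofFinite _ (Ideal.finite_setOfPred_absNorm_le₀ N)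
      let e := fun C : ClassGroup (𝓞 K) ↦ Equiv.subtypeSubtypeEquivSubtypeInter
        (fun I : (Ideal (𝓞 K))⁰ ↦ absNorm I.1 ≤ N) (fun I ↦ ClassGroup.mk0 I = C)
      simp_rw [Nat.cast_le, ← Nat.card_congr (e _), Nat.card_eq_fintype_card, Fintype.subtype_card]
      rw [Fintype.card, Finset.card_eq_sum_card_fiberwise (f := fun I ↦ ClassGroup.mk0 I.1)
        (t := Finset.univ) (fun _ _ ↦ Finset.mem_univ _), Nat.cast_sum]
    rw [hsum, Finset.sum_mul, ← Finset.sum_sub_distrib, Finset.sum_mul]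
    refine (Finset.abs_sum_le_sum_abs _ _).trans (Finset.sum_le_sum fun C _ => ?_)
    exact h C N (by exact_mod_cast hN)
  refine ⟨∑ C, κ C, δ, ∑ C, D C, hδ0, hδ1, ?_, hmain⟩
  have hlim := (NumberField.Ideal.tendsto_norm_le_div_atTop₀ K).comp tendsto_natCast_atTop_atTop
  have hlim2 : Tendsto (fun N : ℕ => (Nat.card {I : (Ideal (𝓞 K))⁰ // (absNorm (I : Ideal (𝓞 K)) : ℝ) ≤ (N:ℝ)} : ℝ) / N) atTop
      (𝓝 (∑ C, κ C)) := by
    rw [tendsto_iff_norm_sub_tendsto_zero]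
    have hz : Tendsto (fun N : ℕ => (∑ C, D C) * (N:ℝ) ^ (-δ)) atTop (𝓝 0) := by
      simpa using ((tendsto_rpow_neg_atTop hδ0).comp tendsto_natCast_atTop_atTop).const_mul (∑ C, D C)
    refine squeeze_zero' (Eventually.of_forall fun _ => norm_nonneg _) ?_ hz
    filter_upwards [eventually_ge_atTop 1] with N hN
    have hN0 : (0:ℝ) < N := by exact_mod_cast hN
    have := hmain N hN
    simp_rw [Nat.cast_le]
    rw [Real.norm_eq_abs, div_sub' hN0.ne', abs_div, abs_of_pos hN0, div_le_iff₀ hN0, mul_comm (N:ℝ)]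
    refine this.trans (le_of_eq ?_)
    rw [mul_assoc, ← Real.rpow_add_one hN0.ne']; ring_nf
  rw [tendsto_nhds_unique hlim2 hlim]
  have := regulator_pos K
  have := torsionOrder_pos K
  have h2 : 0 < classNumber K := Fintype.card_pos
  have h3 := NumberField.discr_ne_zero K
  have h4 : 0 < |(discr K : ℝ)| := abs_pos.2 (by exact_mod_cast h3)
  have h5 : 0 < √|(discr K : ℝ)| := Real.sqrt_pos.2 h4
  have h6 : (0:ℝ) < classNumber K := by exact_mod_cast h2
  have h7 : (0:ℝ) < torsionOrder K := by exact_mod_cast torsionOrder_pos K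
  have := Real.pi_pos
  positivity

end

end

section
open MeasureTheory Filter Topology

section
open NumberField Ideal UniqueFactorizationMonoid
open scoped Classical

variable (K : Type*) [Field K] [NumberField K]

/-- ideals of norm `n` -/
noncomputable def idF (n : ℕ) : Finset (Ideal (𝓞 K)) :=
  (Ideal.finite_setOfPred_absNorm_eq (S := 𝓞 K) n).toFinset

/-- prime ideals of norm at most `n` -/
noncomputable def prF (n : ℕ) : Finset (Ideal (𝓞 K)) :=
  (Ideal.finite_setOfPred_absNorm_le (S := 𝓞 K) n).toFinset.filter Prime

/-- truncated von Mangoldt function -/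
noncomputable def LamB (M n : ℕ) : ℝ :=
  ∑ P ∈ prF K M, ∑ k ∈ Finset.Icc 1 M, if absNorm P ^ k = n then Real.log (absNorm P) else 0

variable {K}

lemma mem_idF {n : ℕ} {I : Ideal (𝓞 K)} : I ∈ idF K n ↔ absNorm I = n := by simp [idF]

lemma mem_prF {n : ℕ} {I : Ideal (𝓞 K)} : I ∈ prF K n ↔ absNorm I ≤ n ∧ Prime I := by simp [prF]

lemma two_le_norm {P : Ideal (𝓞 K)} (hP : Prime P) : 2 ≤ absNorm P := by
  have h0 : absNorm P ≠ 0 := by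
    rw [Ne, Ideal.absNorm_eq_zero_iff]; exact hP.ne_zero
  have h1 : absNorm P ≠ 1 := by
    rw [Ne, Ideal.absNorm_eq_one_iff]
    intro h; exact hP.not_isUnit (Ideal.isUnit_iff.2 h)
  omega

lemma lt_norm_pow {P : Ideal (𝓞 K)} (hP : Prime P) (k : ℕ) : k < absNorm P ^ k :=
  Nat.lt_pow_self (by have := two_le_norm hP; omega)

lemma LamB_ext {M n : ℕ} (h : n ≤ M) : LamB K M n = LamB K n n := by
  have hzero : ∀ P : Ideal (𝓞 K), Prime P → ∀ k, 1 ≤ k → absNorm P ^ k = n → absNorm P ≤ n ∧ k ≤ n := by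
    intro P hP k hk he
    have h2 := two_le_norm hP
    refine ⟨?_, by have := lt_norm_pow hP k; omega⟩
    rw [← he]; exact Nat.le_self_pow (by omega) _
  unfold LamB
  symm
  calc _ = ∑ P ∈ prF K n, ∑ k ∈ Finset.Icc 1 M, if absNorm P ^ k = n then Real.log (absNorm P) else 0 := by
        refine Finset.sum_congr rfl fun P hP => ?_
        refine Finset.sum_subset (Finset.Icc_subset_Icc_right h) fun k hk hk' => if_neg fun he => hk' ?_
        rw [Finset.mem_Icc] at hk ⊢
        exact ⟨hk.1, (hzero P (mem_prF.1 hP).2 k hk.1 he).2⟩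
    _ = _ := by
        refine Finset.sum_subset (fun P hP => ?_) fun P hP hP' => ?_
        · rw [mem_prF] at hP ⊢; exact ⟨hP.1.trans h, hP.2⟩
        · refine Finset.sum_eq_zero fun k hk => if_neg fun he => hP' ?_
          rw [mem_prF] at hP ⊢
          exact ⟨(hzero P hP.2 k (Finset.mem_Icc.1 hk).1 he).1, hP.2⟩

lemma pow_dvd_iff_le_count {P I : Ideal (𝓞 K)} (hP : Prime P) (hI : I ≠ 0) (k : ℕ) :
    P ^ k ∣ I ↔ k ≤ (normalizedFactors I).count P := by
  rw [pow_dvd_iff_le_emultiplicity, emultiplicity_eq_count_normalizedFactors hP.irreducible hI,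
    normalize_eq]
  simp

lemma log_norm_eq {n : ℕ} (hn : 1 ≤ n) {I : Ideal (𝓞 K)} (hI : absNorm I = n) :
    Real.log n = ∑ P ∈ prF K n, ∑ k ∈ Finset.Icc 1 n, if P ^ k ∣ I then Real.log (absNorm P) else 0 := by
  have hI0 : I ≠ 0 := by
    rintro rfl
    simp at hI; omega
  have hdvd : ∀ J : Ideal (𝓞 K), J ∣ I → absNorm J ≤ n := fun J hJ =>
    Nat.le_of_dvd (by omega) (hI ▸ map_dvd absNorm hJ)
  have h1 : ∀ P ∈ prF K n, (∑ k ∈ Finset.Icc 1 n, if P ^ k ∣ I then Real.log (absNorm P) else 0) =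
      (normalizedFactors I).count P • Real.log (absNorm P) := by
    intro P hP
    have hPp := (mem_prF.1 hP).2
    have hfil : (Finset.Icc 1 n).filter (fun k => P ^ k ∣ I) = Finset.Icc 1 ((normalizedFactors I).count P) := by
      ext k
      rw [Finset.mem_filter, Finset.mem_Icc, Finset.mem_Icc, pow_dvd_iff_le_count hPp hI0]
      refine ⟨fun h => ⟨h.1.1, h.2⟩, fun h => ⟨⟨h.1, ?_⟩, h.2⟩⟩
      have := hdvd _ ((pow_dvd_iff_le_count hPp hI0 k).2 h.2)
      rw [map_pow] at this
      exact (lt_norm_pow hPp k).le.trans this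
    rw [← Finset.sum_filter, hfil, Finset.sum_const]
    simp
  rw [Finset.sum_congr rfl h1]
  have h2 : ∑ P ∈ prF K n, (normalizedFactors I).count P • Real.log (absNorm P) =
      ∑ P ∈ (normalizedFactors I).toFinset, (normalizedFactors I).count P • Real.log (absNorm P) := by
    symm
    refine Finset.sum_subset (fun P hP => ?_) fun P _ hP => ?_
    · rw [Multiset.mem_toFinset] at hP
      exact mem_prF.2 ⟨hdvd _ (dvd_of_mem_normalizedFactors hP), prime_of_normalized_factor _ hP⟩
    · rw [Multiset.mem_toFinset] at hP
      rw [Multiset.count_eq_zero_of_notMem hP, zero_smul]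
  rw [h2, ← Finset.sum_multiset_map_count]
  have h3 : (normalizedFactors I).prod = I := by
    have := prod_normalizedFactors hI0
    rwa [associated_iff_eq] at this
  have hgen : ∀ s : Multiset (Ideal (𝓞 K)), (∀ P ∈ s, P ≠ 0) →
      Real.log (absNorm s.prod) = (s.map (fun P => Real.log (absNorm P))).sum := by
    intro s
    induction s using Multiset.induction_on with
    | empty => simp
    | cons a s ih =>
      intro h
      have hs : s.prod ≠ 0 := Multiset.prod_ne_zero fun h0 => h 0 (Multiset.mem_cons_of_mem h0) rfl
      have ha := h a (Multiset.mem_cons_self a s)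
      rw [Multiset.prod_cons, Multiset.map_cons, Multiset.sum_cons, map_mul, Nat.cast_mul, Real.log_mul,
        ih fun P hP => h P (Multiset.mem_cons_of_mem hP)]
      · rw [Nat.cast_ne_zero, Ne, Ideal.absNorm_eq_zero_iff]; exact ha
      · rw [Nat.cast_ne_zero, Ne, Ideal.absNorm_eq_zero_iff]; exact hs
  rw [← hgen _ fun P hP => (prime_of_normalized_factor _ hP).ne_zero, h3, hI]

lemma card_dvd {n : ℕ} {Q : Ideal (𝓞 K)} (hQ : Q ≠ 0) :
    ((idF K n).filter (fun I => Q ∣ I)).card = if absNorm Q ∣ n then (idF K (n / absNorm Q)).card else 0 := by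
  have hQ0 : 0 < absNorm Q := by
    rw [Nat.pos_iff_ne_zero, Ne, Ideal.absNorm_eq_zero_iff]; exact hQ
  split_ifs with h
  · symm
    refine Finset.card_bij (fun A _ => Q * A) ?_ ?_ ?_
    · intro A hA
      rw [mem_idF] at hA
      rw [Finset.mem_filter, mem_idF, map_mul, hA]
      exact ⟨Nat.mul_div_cancel' h, dvd_mul_right _ _⟩
    · intro A _ B _ he
      exact mul_left_cancel₀ hQ he
    · intro I hI
      rw [Finset.mem_filter, mem_idF] at hI
      obtain ⟨hI, A, rfl⟩ := hI
      refine ⟨A, ?_, rfl⟩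
      rw [mem_idF, ← hI, map_mul, Nat.mul_div_cancel_left _ hQ0]
  · rw [Finset.card_eq_zero, Finset.filter_eq_empty_iff]
    intro I hI hd
    rw [mem_idF] at hI
    exact h (hI ▸ map_dvd absNorm hd)

lemma ideal_conv (n : ℕ) : ((idF K n).card : ℝ) * Real.log n =
    ∑ p ∈ n.divisorsAntidiagonal, ((idF K p.1).card : ℝ) * LamB K p.2 p.2 := by
  rcases Nat.eq_zero_or_pos n with rfl | hn
  · simp
  have hL : ((idF K n).card : ℝ) * Real.log n = ∑ P ∈ prF K n, ∑ k ∈ Finset.Icc 1 n,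
      if absNorm P ^ k ∣ n then ((idF K (n / absNorm P ^ k)).card : ℝ) * Real.log (absNorm P) else 0 := by
    rw [← nsmul_eq_mul, ← Finset.sum_const]
    rw [Finset.sum_congr rfl fun I hI => log_norm_eq hn (mem_idF.1 hI), Finset.sum_comm]
    refine Finset.sum_congr rfl fun P hP => ?_
    rw [Finset.sum_comm]
    refine Finset.sum_congr rfl fun k hk => ?_
    rw [← Finset.sum_filter, Finset.sum_const, card_dvd (pow_ne_zero k (mem_prF.1 hP).2.ne_zero), map_pow]
    split_ifs <;> simp
  rw [hL, Nat.sum_divisorsAntidiagonal' (f := fun a b => ((idF K a).card : ℝ) * LamB K b b)]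
  have hR : ∀ b ∈ n.divisors, ((idF K (n / b)).card : ℝ) * LamB K b b = ∑ P ∈ prF K n, ∑ k ∈ Finset.Icc 1 n,
      if absNorm P ^ k = b then ((idF K (n / b)).card : ℝ) * Real.log (absNorm P) else 0 := by
    intro b hb
    rw [← LamB_ext (Nat.divisor_le hb), LamB]
    simp_rw [Finset.mul_sum, mul_ite, mul_zero]
  rw [Finset.sum_congr rfl hR]
  symm
  rw [Finset.sum_comm]
  refine Finset.sum_congr rfl fun P hP => ?_
  rw [Finset.sum_comm]
  refine Finset.sum_congr rfl fun k hk => ?_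
  rw [Finset.sum_ite_eq]
  simp [Nat.mem_divisors, hn.ne']

lemma LamB_nonneg (M n : ℕ) : 0 ≤ LamB K M n :=
  Finset.sum_nonneg fun P _ => Finset.sum_nonneg fun k _ => by
    split_ifs
    · exact Real.log_natCast_nonneg _
    · exact le_rfl

/-- primes above `p` -/
lemma sum_log_norm_le {p : ℕ} (hp : p.Prime) (s : Finset (Ideal (𝓞 K))) (hs : ∀ P ∈ s, Prime P ∧ (p : 𝓞 K) ∈ P) :
    ∑ P ∈ s, Real.log (absNorm P) ≤ Module.finrank ℚ K * Real.log p := by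
  have hd : ∏ P ∈ s, P ∣ Ideal.span {(p : 𝓞 K)} := by
    refine Finset.prod_primes_dvd _ (fun P hP => (hs P hP).1) fun P hP => ?_
    rw [Ideal.dvd_span_singleton]; exact (hs P hP).2
  have hn := map_dvd absNorm hd
  rw [Ideal.absNorm_span_natCast, map_prod, RingOfIntegers.rank] at hn
  have hle := Nat.le_of_dvd (pow_pos hp.pos _) hn
  rw [← Real.log_prod (fun P hP => by
    have := two_le_norm (hs P hP).1
    positivity), ← Real.log_pow]
  apply Real.log_le_log
  · exact Finset.prod_pos fun P hP => by
      have := two_le_norm (hs P hP).1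
      positivity
  · exact_mod_cast hle

open ArithmeticFunction in
lemma LamB_le (n : ℕ) : LamB K n n ≤ Module.finrank ℚ K * vonMangoldt n := by
  have hsum : ∀ P ∈ prF K n, (∑ k ∈ Finset.Icc 1 n, if absNorm P ^ k = n then Real.log (absNorm P) else 0) =
      if ∃ k, absNorm P ^ k = n ∧ k ∈ Finset.Icc 1 n then Real.log (absNorm P) else 0 := by
    intro P hP
    have h2 := two_le_norm (mem_prF.1 hP).2
    split_ifs with h
    · obtain ⟨k, he, hk⟩ := h
      rw [Finset.sum_eq_single k, if_pos he]
      · intro j _ hj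
        rw [if_neg]
        rintro hj'
        exact hj (Nat.pow_right_injective h2 (hj'.trans he.symm))
      · intro h; exact absurd hk h
    · refine Finset.sum_eq_zero fun k hk => if_neg fun he => h ⟨k, he, hk⟩
  rw [LamB, Finset.sum_congr rfl hsum, ← Finset.sum_filter]
  set s := (prF K n).filter (fun P => ∃ k, absNorm P ^ k = n ∧ k ∈ Finset.Icc 1 n) with hs
  rcases s.eq_empty_or_nonempty with he | ⟨P, hP⟩
  · rw [he, Finset.sum_empty]
    exact mul_nonneg (Nat.cast_nonneg _) vonMangoldt_nonneg
  rw [hs, Finset.mem_filter, mem_prF] at hP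
  obtain ⟨⟨_, hPp⟩, k, hPk, hk⟩ := hP
  have : P.IsMaximal := (Ideal.isPrime_of_prime hPp).isMaximal hPp.ne_zero
  obtain ⟨p, f, hf, hpP, hp, hPf⟩ := Ideal.exists_prime_and_absNorm_eq_pow P
  have hk0 : k ≠ 0 := by rw [Finset.mem_Icc] at hk; omega
  have hn : n = p ^ (f * k) := by rw [← hPk, hPf, pow_mul]
  have hΛ : vonMangoldt n = Real.log p := by
    rw [hn, vonMangoldt_apply_pow (by positivity), vonMangoldt_apply_prime hp]
  rw [hΛ]
  refine sum_log_norm_le hp s fun Q hQ => ?_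
  rw [hs, Finset.mem_filter, mem_prF] at hQ
  obtain ⟨⟨_, hQp⟩, j, hQj, hj⟩ := hQ
  refine ⟨hQp, ?_⟩
  have hQ' := Ideal.isPrime_of_prime hQp
  have h1 : (n : 𝓞 K) ∈ Q := by
    rw [← hQj, Nat.cast_pow]
    exact Ideal.pow_mem_of_mem _ (Ideal.absNorm_mem Q) _ (by rw [Finset.mem_Icc] at hj; omega)
  rw [hn, Nat.cast_pow] at h1
  exact hQ'.mem_of_pow_mem _ h1

end

end

section
open MeasureTheory Filter Topology

section
open NumberField Ideal ArithmeticFunction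
open scoped nonZeroDivisors

lemma psi_div_tendsto : Tendsto (fun N : ℕ => (∑ k ∈ Finset.Icc 1 N, vonMangoldt k) / N) atTop (𝓝 1) := by
  refine beurling_pnt (fun _ => 1) (fun n => vonMangoldt n) (fun _ => zero_le_one) (fun _ => vonMangoldt_nonneg) 1 1 0
    (Real.log 4 + 4) one_pos le_rfl one_pos (fun N _ => by simp) (fun N => ?_) (fun n => ?_)
  · have := Chebyshev.psi_le_const_mul_self (x := N) (Nat.cast_nonneg N)
    rw [Chebyshev.psi, Nat.floor_natCast] at this
    exact this
  · rw [one_mul]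
    simp_rw [one_mul]
    rw [Nat.sum_divisorsAntidiagonal' (f := fun _ b => vonMangoldt b), vonMangoldt_sum]

lemma psi_sub_theta_tendsto : Tendsto (fun N : ℕ => (Chebyshev.psi N - Chebyshev.theta N) / N) atTop (𝓝 0) := by
  obtain ⟨C, hC⟩ := Chebyshev.psi_sub_theta_le_mul_sqrt
  have h : Tendsto (fun N : ℕ => C * (√(N:ℝ))⁻¹) atTop (𝓝 0) := by
    have := (tendsto_inv_atTop_zero.comp (Real.tendsto_sqrt_atTop.comp (tendsto_natCast_atTop_atTop (R := ℝ)))).const_mul C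
    simpa [Function.comp_def] using this
  refine squeeze_zero' (Eventually.of_forall fun N => ?_) ?_ h
  · have := Chebyshev.theta_le_psi N
    exact div_nonneg (by linarith) (Nat.cast_nonneg _)
  · filter_upwards [eventually_ge_atTop 1] with N hN
    have hN' : (0:ℝ) < N := by exact_mod_cast hN
    rw [div_le_iff₀ hN']
    refine (hC N).trans (le_of_eq ?_)
    nth_rewrite 3 [← Real.mul_self_sqrt hN'.le]
    have := Real.sqrt_pos.2 hN'
    field_simp

lemma theta_div_tendsto : Tendsto (fun N : ℕ => Chebyshev.theta N / N) atTop (𝓝 1) := by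
  have h := psi_div_tendsto.sub psi_sub_theta_tendsto
  rw [sub_zero] at h
  refine h.congr fun N => ?_
  have : ∑ k ∈ Finset.Icc 1 N, vonMangoldt k = Chebyshev.psi N := by
    rw [Chebyshev.psi, Nat.floor_natCast]; rfl
  rw [this]; ring

lemma pi_log_sub_theta : Tendsto (fun N : ℕ => ((Nat.primesLE N).card * Real.log N - Chebyshev.theta N) / N) atTop (𝓝 0) := by
  obtain ⟨C, hC⟩ := Chebyshev.primeCounting_sub_theta_div_log_isBigO.bound
  have hC := tendsto_natCast_atTop_atTop.eventually hC
  have h : Tendsto (fun N : ℕ => C * (Real.log N)⁻¹) atTop (𝓝 0) := by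
    have := (tendsto_inv_atTop_zero.comp (Real.tendsto_log_atTop.comp (tendsto_natCast_atTop_atTop (R := ℝ)))).const_mul C
    simpa [Function.comp_def] using this
  refine squeeze_zero_norm' ?_ h
  filter_upwards [hC, eventually_ge_atTop 2] with N hN hN2
  have hN' : (1:ℝ) < N := by exact_mod_cast hN2
  have hl := Real.log_pos hN'
  rw [Nat.floor_natCast, ← Nat.primesLE_card_eq_primeCounting, Real.norm_eq_abs, Real.norm_eq_abs] at hN
  rw [abs_of_nonneg (by positivity : 0 ≤ (N:ℝ) / Real.log N ^ 2)] at hN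
  rw [Real.norm_eq_abs]
  have : ((Nat.primesLE N).card * Real.log N - Chebyshev.theta N) / N =
    ((Nat.primesLE N).card - Chebyshev.theta N / Real.log N) * (Real.log N / N) := by field_simp
  rw [this, abs_mul, abs_of_nonneg (by positivity : 0 ≤ Real.log N / N)]
  calc _ ≤ C * (N / Real.log N ^ 2) * (Real.log N / N) := by gcongr
    _ = _ := by field_simp

lemma remove_log (a : ℕ → ℝ) (D : ℝ) (ha : ∀ p, p.Prime → |a p| ≤ D)
    (h : Tendsto (fun N : ℕ => (∑ p ∈ Nat.primesLE N, a p * Real.log p) / N) atTop (𝓝 0)) :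
    Tendsto (fun N : ℕ => (∑ p ∈ Nat.primesLE N, a p) / (Nat.primesLE N).card) atTop (𝓝 0) := by
  have hlim : Tendsto (fun N : ℕ => 2 * (|(∑ p ∈ Nat.primesLE N, a p * Real.log p) / N| +
      D * (((Nat.primesLE N).card * Real.log N - Chebyshev.theta N) / N))) atTop (𝓝 0) := by
    have := (h.abs.add (pi_log_sub_theta.const_mul D)).const_mul 2
    simpa using this
  refine squeeze_zero_norm' ?_ hlim
  have hth := theta_div_tendsto.eventually (lt_mem_nhds (show (1/2:ℝ) < 1 by norm_num))
  filter_upwards [hth, eventually_ge_atTop 2] with N hN hN2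
  have hN' : (1:ℝ) < N := by exact_mod_cast hN2
  have hN0 : (0:ℝ) < N := by linarith
  have hl := Real.log_pos hN'
  rw [lt_div_iff₀ hN0] at hN
  have h1 := Chebyshev.theta_le_pi_mul_log N
  rw [← Nat.primesLE_card_eq_primeCounting] at h1
  set π := ((Nat.primesLE N).card : ℝ)
  have hπl : N / 2 ≤ π * Real.log N := by linarith
  have hπ : 0 < π := by
    by_contra hcon
    push Not at hcon
    nlinarith
  have hkey : |(∑ p ∈ Nat.primesLE N, a p) * Real.log N| ≤ |∑ p ∈ Nat.primesLE N, a p * Real.log p| +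
      D * (π * Real.log N - Chebyshev.theta N) := by
    have e1 : (∑ p ∈ Nat.primesLE N, a p) * Real.log N = ∑ p ∈ Nat.primesLE N, a p * Real.log p +
        ∑ p ∈ Nat.primesLE N, a p * (Real.log N - Real.log p) := by
      rw [Finset.sum_mul, ← Finset.sum_add_distrib]
      exact Finset.sum_congr rfl fun p _ => by ring
    have e2 : D * (π * Real.log N - Chebyshev.theta N) = ∑ p ∈ Nat.primesLE N, D * (Real.log N - Real.log p) := by
      rw [← Finset.mul_sum, Finset.sum_sub_distrib, Chebyshev.theta_eq_sum_primesLE_log, Finset.sum_const,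
        nsmul_eq_mul]
    rw [e1, e2]
    refine (abs_add_le _ _).trans (add_le_add le_rfl ((Finset.abs_sum_le_sum_abs _ _).trans
      (Finset.sum_le_sum fun p hp => ?_)))
    rw [Nat.mem_primesLE] at hp
    have hp0 : (0:ℝ) < p := by exact_mod_cast hp.2.pos
    have : Real.log p ≤ Real.log N := Real.log_le_log hp0 (by exact_mod_cast hp.1)
    rw [abs_mul, abs_of_nonneg (by linarith : 0 ≤ Real.log N - Real.log p)]
    exact mul_le_mul_of_nonneg_right (ha p hp.2) (by linarith)
  rw [Real.norm_eq_abs, abs_div, abs_of_pos hπ, abs_div, abs_of_pos hN0]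
  rw [abs_mul, abs_of_pos hl] at hkey
  set X := |∑ p ∈ Nat.primesLE N, a p|
  set Y := |∑ p ∈ Nat.primesLE N, a p * Real.log p| + D * (π * Real.log N - Chebyshev.theta N) with hY
  have hY0 : 0 ≤ Y := le_trans (by positivity) hkey
  have : 2 * (|∑ p ∈ Nat.primesLE N, a p * Real.log p| / N + D * ((π * Real.log N - Chebyshev.theta N) / N)) = 2 * Y / N := by
    rw [hY]; ring
  rw [this, div_le_div_iff₀ hπ hN0]
  have hX0 : 0 ≤ X := abs_nonneg _
  have h3 : X * N ≤ X * (2 * (π * Real.log N)) := by gcongr; linarith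
  nlinarith

variable (K : Type*) [Field K] [NumberField K]

lemma sum_idF (N : ℕ) : ∑ k ∈ Finset.Icc 1 N, ((idF K k).card : ℝ) =
    (Nat.card {I : (Ideal (𝓞 K))⁰ // absNorm (I : Ideal (𝓞 K)) ≤ N} : ℝ) := by
  classical
  have h1 : (∑ k ∈ Finset.Icc 1 N, (idF K k).card) = ((Finset.Icc 1 N).biUnion (idF K)).card := by
    rw [Finset.card_biUnion]
    intro i _ j _ hij
    rw [Function.onFun, Finset.disjoint_left]
    intro I hi hj
    rw [mem_idF] at hi hj
    exact hij (hi.symm.trans hj)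
  rw [← Nat.cast_sum, h1, Nat.cast_inj, ← Nat.card_eq_finsetCard]
  have hmem : ∀ I : Ideal (𝓞 K), I ∈ (Finset.Icc 1 N).biUnion (idF K) ↔ I ∈ (Ideal (𝓞 K))⁰ ∧ absNorm I ≤ N := by
    intro I
    simp only [Finset.mem_biUnion, mem_idF, Finset.mem_Icc, mem_nonZeroDivisors_iff_ne_zero]
    have : I ≠ 0 ↔ 1 ≤ absNorm I := by
      rw [Nat.one_le_iff_ne_zero, Ne, Ne, Ideal.absNorm_eq_zero_iff]; rfl
    rw [this]
    constructor
    · rintro ⟨a, ha, rfl⟩; exact ha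
    · intro h; exact ⟨_, h, rfl⟩
  exact Nat.card_congr ((Equiv.subtypeEquivRight hmem).trans
    (Equiv.subtypeSubtypeEquivSubtypeInter (fun I => I ∈ (Ideal (𝓞 K))⁰) (fun I => absNorm I ≤ N)).symm)

lemma psiK_tendsto : Tendsto (fun N : ℕ => (∑ k ∈ Finset.Icc 1 N, LamB K k k) / N) atTop (𝓝 1) := by
  obtain ⟨κ, δ, D, hδ, hδ1, hκ, hc⟩ := ideal_count_total K
  refine beurling_pnt (fun n => ((idF K n).card : ℝ)) (fun n => LamB K n n) (fun _ => Nat.cast_nonneg _)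
    (fun n => LamB_nonneg _ _) κ δ D (Module.finrank ℚ K * (Real.log 4 + 4)) hδ hδ1 hκ ?_ ?_ ?_
  · intro N hN
    rw [sum_idF]; exact hc N hN
  · intro N
    have := Chebyshev.psi_le_const_mul_self (x := N) (Nat.cast_nonneg N)
    rw [Chebyshev.psi, Nat.floor_natCast] at this
    calc _ ≤ ∑ k ∈ Finset.Icc 1 N, Module.finrank ℚ K * vonMangoldt k := Finset.sum_le_sum fun k _ => LamB_le k
      _ = Module.finrank ℚ K * ∑ k ∈ Finset.Icc 1 N, vonMangoldt k := by rw [Finset.mul_sum]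
      _ ≤ Module.finrank ℚ K * ((Real.log 4 + 4) * N) := by gcongr; exact this
      _ = _ := by ring
  · exact ideal_conv

lemma LamB_prime {p : ℕ} (hp : p.Prime) : LamB K p p = (idF K p).card * Real.log p := by
  classical
  have h : ∀ P ∈ prF K p, (∑ k ∈ Finset.Icc 1 p, if absNorm P ^ k = p then Real.log (absNorm P) else 0) =
      if absNorm P = p then Real.log p else 0 := by
    intro P hP
    have hP2 := two_le_norm (mem_prF.1 hP).2
    split_ifs with h
    · rw [Finset.sum_eq_single 1]
      · simp [h]
      · intro k hk hk1
        rw [if_neg]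
        intro he
        rw [h] at he
        exact hk1 (Nat.pow_right_injective hp.two_le (by simpa using he))
      · intro h; exact absurd (Finset.mem_Icc.2 ⟨le_rfl, hp.one_lt.le⟩) h
    · refine Finset.sum_eq_zero fun k hk => if_neg fun he => h ?_
      have hk1 : k = 1 := by
        have := he ▸ hp
        exact Nat.Prime.eq_one_of_pow this
      rw [hk1, pow_one] at he; exact he
  rw [LamB, Finset.sum_congr rfl h, ← Finset.sum_filter, Finset.sum_const, nsmul_eq_mul]
  congr 3
  ext P
  rw [Finset.mem_filter, mem_prF, mem_idF]
  refine ⟨fun h => h.2, fun h => ⟨⟨h.le, ?_⟩, h⟩⟩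
  have h1 : P.IsPrime := Ideal.isPrime_of_irreducible_absNorm (h ▸ hp.prime.irreducible)
  refine Ideal.prime_of_isPrime ?_ h1
  rintro rfl
  simp at h
  exact hp.ne_zero h.symm

lemma idF_card_le {p : ℕ} (hp : p.Prime) : ((idF K p).card : ℝ) ≤ Module.finrank ℚ K := by
  have h := LamB_le (K := K) p
  rw [LamB_prime K hp, vonMangoldt_apply_prime hp] at h
  exact le_of_mul_le_mul_right h (Real.log_pos (by exact_mod_cast hp.one_lt))

lemma thetaK_tendsto : Tendsto (fun N : ℕ => (∑ p ∈ Nat.primesLE N, ((idF K p).card : ℝ) * Real.log p) / N) atTop (𝓝 1) := by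
  have hd := psi_sub_theta_tendsto.const_mul (Module.finrank ℚ K : ℝ)
  have hz : Tendsto (fun N : ℕ => (∑ k ∈ (Finset.Icc 1 N).filter (fun k => ¬ k.Prime), LamB K k k) / N) atTop (𝓝 0) := by
    rw [mul_zero] at hd
    refine squeeze_zero (fun N => ?_) (fun N => ?_) hd
    · exact div_nonneg (Finset.sum_nonneg fun k _ => LamB_nonneg _ _) (Nat.cast_nonneg _)
    · rw [← mul_div_assoc]
      gcongr
      rw [Chebyshev.psi_sub_theta_eq_sum_not_prime, Nat.floor_natCast, Finset.mul_sum]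
      exact Finset.sum_le_sum fun k _ => LamB_le k
  have := (psiK_tendsto K).sub hz
  rw [sub_zero] at this
  refine this.congr fun N => ?_
  rw [← sub_div]
  congr 1
  rw [← Finset.sum_filter_add_sum_filter_not (Finset.Icc 1 N) (fun k => k.Prime), add_sub_cancel_right,
    Nat.primesLE_eq_filter_Icc_one]
  exact Finset.sum_congr rfl fun p hp => LamB_prime K (Finset.mem_filter.1 hp).2

/-- the mean of the number of primes of norm `p` is one -/
lemma mean_idF : Tendsto (fun N : ℕ => (∑ p ∈ Nat.primesLE N, ((idF K p).card : ℝ)) / (Nat.primesLE N).card)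
    atTop (𝓝 1) := by
  have h := (thetaK_tendsto K).sub theta_div_tendsto
  rw [sub_self] at h
  have h2 := remove_log (fun p => ((idF K p).card : ℝ) - 1) (Module.finrank ℚ K + 1) (fun p hp => ?_) (h.congr fun N => ?_)
  · have := h2.add_const 1
    rw [zero_add] at this
    refine this.congr' ?_
    filter_upwards [eventually_ge_atTop 2] with N hN
    have hpos : 0 < (Nat.primesLE N).card := Finset.card_pos.2 ⟨2, Nat.mem_primesLE.2 ⟨hN, Nat.prime_two⟩⟩
    have : ((Nat.primesLE N).card : ℝ) ≠ 0 := by positivity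
    rw [Finset.sum_sub_distrib, Finset.sum_const, nsmul_eq_mul, mul_one]
    field_simp
    ring
  · have h1 := idF_card_le K hp
    have h0 : (0:ℝ) ≤ (idF K p).card := Nat.cast_nonneg _
    rw [abs_le]; constructor <;> linarith
  · rw [← sub_div, Chebyshev.theta_eq_sum_primesLE_log, ← Finset.sum_sub_distrib]
    congr 1
    exact Finset.sum_congr rfl fun p _ => by ring

end

end

section
open MeasureTheory Filter Topology

section
variable {G : Type*} [Group G] [Fintype G]

/-- equidistribution of `φ (σ p)` -/
def MeanOK (σ : ℕ → G) (φ : G → ℝ) : Prop :=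
  Tendsto (fun N : ℕ => (∑ p ∈ Nat.primesLE N, φ (σ p)) / (Nat.primesLE N).card) atTop
    (𝓝 ((∑ g, φ g) / Fintype.card G))

lemma MeanOK.sub {σ : ℕ → G} {φ ψ : G → ℝ} (h1 : MeanOK σ φ) (h2 : MeanOK σ ψ) : MeanOK σ (fun g => φ g - ψ g) := by
  unfold MeanOK at *
  simp_rw [Finset.sum_sub_distrib, sub_div]
  exact Tendsto.sub h1 h2

lemma MeanOK.sum {ι : Type*} {σ : ℕ → G} (s : Finset ι) {φ : ι → G → ℝ} (h : ∀ i ∈ s, MeanOK σ (φ i)) :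
    MeanOK σ (fun g => ∑ i ∈ s, φ i g) := by
  unfold MeanOK at *
  have := tendsto_finsetSum s h
  rw [← Finset.sum_div, Finset.sum_comm] at this
  refine this.congr fun N => ?_
  rw [← Finset.sum_div, Finset.sum_comm]

lemma MeanOK.const_mul {σ : ℕ → G} {φ : G → ℝ} (c : ℝ) (h1 : MeanOK σ φ) : MeanOK σ (fun g => c * φ g) := by
  unfold MeanOK at *
  simp_rw [← Finset.mul_sum, mul_div_assoc]
  exact Tendsto.const_mul c h1

open scoped Classical in
/-- number of conjugates in `H` -/
noncomputable def NH (H : Subgroup G) (s : G) : ℝ := ∑ g : G, if g⁻¹ * s * g ∈ H then 1 else 0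

open scoped Classical in
/-- number of conjugates generating `H` -/
noncomputable def thH (H : Subgroup G) (s : G) : ℝ := ∑ g : G, if Subgroup.zpowers (g⁻¹ * s * g) = H then 1 else 0

lemma sum_NH (H : Subgroup G) : (∑ s, NH H s) / Fintype.card G = Nat.card H := by
  classical
  unfold NH
  rw [Finset.sum_comm]
  have : ∀ g : G, (∑ s : G, if g⁻¹ * s * g ∈ H then (1:ℝ) else 0) = Nat.card H := by
    intro g
    have e : (∑ s : G, if g⁻¹ * s * g ∈ H then (1:ℝ) else 0) = ∑ s : G, if s ∈ H then (1:ℝ) else 0 :=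
      Fintype.sum_equiv (MulAut.conj g⁻¹).toEquiv _ _ (fun s => by simp [MulAut.conj_apply])
    rw [e, Finset.sum_boole, Nat.card_eq_fintype_card, Fintype.card_subtype]
  rw [Finset.sum_congr rfl fun g _ => this g, Finset.sum_const, nsmul_eq_mul, Finset.card_univ]
  field_simp

lemma NH_eq (H : Subgroup G) (s : G) [Fintype (Subgroup G)] [DecidablePred fun C : Subgroup G => C < H] :
    NH H s = thH H s + ∑ C ∈ Finset.univ.filter (fun C : Subgroup G => C < H), thH C s := by
  classical
  unfold NH thH
  rw [Finset.sum_comm, ← Finset.sum_add_distrib]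
  refine Finset.sum_congr rfl fun g _ => ?_
  rw [Finset.sum_ite_eq]
  simp only [Finset.mem_filter, Finset.mem_univ, true_and]
  have h : g⁻¹ * s * g ∈ H ↔ Subgroup.zpowers (g⁻¹ * s * g) ≤ H := by rw [Subgroup.zpowers_le]
  rw [h, le_iff_lt_or_eq]
  by_cases h1 : Subgroup.zpowers (g⁻¹ * s * g) = H
  · simp [h1]
  · simp [h1]

lemma meanOK_thH (σ : ℕ → G) (h : ∀ H : Subgroup G, MeanOK σ (NH H)) (H : Subgroup G) : MeanOK σ (thH H) := by
  classical
  have : Fintype (Subgroup G) := Fintype.ofFinite _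
  induction H using WellFoundedLT.induction with
  | ind H ih =>
    have h1 := (h H).sub (MeanOK.sum (Finset.univ.filter (fun C : Subgroup G => C < H)) (φ := thH)
      fun C hC => ih C (Finset.mem_filter.1 hC).2)
    convert h1 using 2 with s
    rw [NH_eq]; ring

lemma meanOK_indicator (σ : ℕ → G) (h : ∀ H : Subgroup G, MeanOK σ (NH H)) (S : Set G) [DecidablePred (· ∈ S)]
    (hconj : ∀ g s, s ∈ S → g⁻¹ * s * g ∈ S)
    (hgen : ∀ s t, Subgroup.zpowers s = Subgroup.zpowers t → s ∈ S → t ∈ S) :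
    MeanOK σ (fun s => if s ∈ S then 1 else 0) := by
  classical
  have : Fintype (Subgroup G) := Fintype.ofFinite _
  have h1 := (MeanOK.sum (Finset.univ.filter (fun C : Subgroup G => ∃ t ∈ S, Subgroup.zpowers t = C)) (φ := thH)
    fun C _ => meanOK_thH σ h C).const_mul (Fintype.card G : ℝ)⁻¹
  convert h1 using 2 with s
  unfold thH
  rw [Finset.sum_comm]
  have : ∀ g : G, (∑ C ∈ Finset.univ.filter (fun C : Subgroup G => ∃ t ∈ S, Subgroup.zpowers t = C),
      if Subgroup.zpowers (g⁻¹ * s * g) = C then (1:ℝ) else 0) = if s ∈ S then 1 else 0 := by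
    intro g
    rw [Finset.sum_ite_eq]
    simp only [Finset.mem_filter, Finset.mem_univ, true_and]
    congr 1
    refine propext ⟨?_, fun hs => ⟨_, hconj g s hs, rfl⟩⟩
    rintro ⟨t, ht, he⟩
    have h2 := hconj g⁻¹ _ (hgen _ _ he ht)
    simpa [mul_assoc] using h2
  rw [Finset.sum_congr rfl fun g _ => this g, Finset.sum_const, nsmul_eq_mul, Finset.card_univ, inv_mul_cancel_left₀]
  exact Nat.cast_ne_zero.2 Fintype.card_ne_zero
end

end

section
open NumberField Polynomial

def FrobAt (L : Type*) [Field L] [NumberField L] (p : ℕ) (σ : L ≃ₐ[ℚ] L) (P : Ideal (𝓞 L)) : Prop :=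
  P.IsPrime ∧ (p : 𝓞 L) ∈ P ∧ ∀ x : 𝓞 L, σ • x - x ^ p ∈ P

lemma exists_frob (L : Type*) [Field L] [NumberField L] [IsGalois ℚ L] (p : ℕ) (hp : p.Prime) :
    ∃ σ : L ≃ₐ[ℚ] L, ∃ P : Ideal (𝓞 L), FrobAt L p σ P := by
  have := Fact.mk hp
  obtain ⟨P, hP, hc⟩ := Ideal.exists_ideal_over_maximal_of_isIntegral (S := 𝓞 L) (Ideal.span {(p:ℤ)}) (by
    intro x hx
    have : x = 0 := by simpa using hx
    rw [this]; exact zero_mem _)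
  have hpP : (p : 𝓞 L) ∈ P := by
    have : (p:ℤ) ∈ P.comap (algebraMap ℤ (𝓞 L)) := by rw [hc]; exact Ideal.mem_span_singleton_self _
    simpa using this
  have : Finite (𝓞 L ⧸ P) := Ideal.finiteQuotientOfFreeOfNeBot P (by
    rintro rfl
    simp at hpP
    exact hp.ne_zero hpP)
  have : Algebra.IsInvariant ℤ (𝓞 L) (L ≃ₐ[ℚ] L) := inferInstance
  obtain ⟨σ, hσ⟩ := IsArithFrobAt.exists_of_isInvariant ℤ (L ≃ₐ[ℚ] L) P
  refine ⟨σ, P, inferInstance, hpP, fun x => ?_⟩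
  have := hσ x
  rw [Ideal.under, hc] at this
  rw [Nat.card_congr (Int.quotientSpanNatEquivZMod p).toEquiv, Nat.card_zmod] at this
  exact this

section
variable {L : Type*} [Field L] [NumberField L]

lemma int_mem_prime {P : Ideal (𝓞 L)} (hP : P.IsPrime) {p : ℕ} (hp : p.Prime) (hpP : (p : 𝓞 L) ∈ P)
    (b : ℤ) (hb : (b : 𝓞 L) ∈ P) : (p : ℤ) ∣ b := by
  by_contra h
  have hc : IsCoprime (p : ℤ) b :=
    (Nat.prime_iff_prime_int.mp hp).irreducible.coprime_iff_not_dvd.mpr h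
  obtain ⟨u, v, huv⟩ := hc
  apply hP.ne_top
  rw [Ideal.eq_top_iff_one]
  have : (1 : 𝓞 L) = (u : 𝓞 L) * (p : 𝓞 L) + v * b := by exact_mod_cast huv.symm
  rw [this]
  exact add_mem (Ideal.mul_mem_left _ _ hpP) (Ideal.mul_mem_left _ _ hb)

lemma sep_primes (Z : Finset (𝓞 L)) : ∃ N : ℕ, N ≠ 0 ∧ ∀ (p : ℕ) (P : Ideal (𝓞 L)), p.Prime →
    P.IsPrime → (p : 𝓞 L) ∈ P → ¬ p ∣ N → ∀ x ∈ Z, ∀ y ∈ Z, x - y ∈ P → x = y := by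
  classical
  let D : 𝓞 L := ∏ z ∈ Z.offDiag, (z.1 - z.2)
  have hD : D ≠ 0 := Finset.prod_ne_zero_iff.mpr fun z hz => by
    rw [Finset.mem_offDiag] at hz
    exact sub_ne_zero.mpr hz.2.2
  refine ⟨Ideal.absNorm (Ideal.span {D}), ?_, ?_⟩
  · rw [Ne, Ideal.absNorm_eq_zero_iff]; simpa using hD
  · intro p P hp hP hpP hN x hx y hy hxy
    by_contra hne
    apply hN
    have h1 : D ∈ P := by
      have : (x - y) ∣ D := Finset.dvd_prod_of_mem (fun z : 𝓞 L × 𝓞 L => z.1 - z.2)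
        (a := (x, y)) (by simp [hx, hy, hne])
      exact Ideal.mem_of_dvd _ this hxy
    have h2 : (Ideal.absNorm (Ideal.span {D}) : 𝓞 L) ∈ P :=
      (Ideal.span_singleton_le_iff_mem _ |>.mpr h1) (Ideal.absNorm_mem _)
    exact_mod_cast int_mem_prime hP hp hpP (Ideal.absNorm (Ideal.span {D})) (by exact_mod_cast h2)

lemma rootmod (h : ℤ[X]) (h0 : h ≠ 0) (hs : (h.map (algebraMap ℤ L)).Splits) :
    ∃ Z : Finset (𝓞 L), (∀ x ∈ Z, ∃ α : L, aeval α h = 0 ∧ (x : L) = h.leadingCoeff * α) ∧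
      ∀ (P : Ideal (𝓞 L)), P.IsPrime → ∀ b : ℤ, ((h.eval b : ℤ) : 𝓞 L) ∈ P →
        (h.leadingCoeff : 𝓞 L) ∈ P ∨ ∃ x ∈ Z, x - h.leadingCoeff * b ∈ P := by
  classical
  set c := h.leadingCoeff with hc
  have hinj : Function.Injective (algebraMap ℤ L) := by
    simpa using Int.cast_injective
  have h0L : h.map (algebraMap ℤ L) ≠ 0 := (Polynomial.map_ne_zero_iff hinj).mpr h0
  have hIntg : ∀ α ∈ (h.map (algebraMap ℤ L)).roots, ∃ x : 𝓞 L, (x : L) = c * α := by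
    intro α hα
    have h1 : aeval α h = 0 := by
      have := (mem_roots h0L).mp hα
      rwa [IsRoot, eval_map_algebraMap] at this
    have := isIntegral_leadingCoeff_smul h α h1
    refine ⟨⟨_, this⟩, ?_⟩
    simp [hc]
  choose! F hF using hIntg
  refine ⟨((h.map (algebraMap ℤ L)).roots.map F).toFinset, ?_, ?_⟩
  · intro x hx
    simp only [Multiset.mem_toFinset, Multiset.mem_map] at hx
    obtain ⟨α, hα, rfl⟩ := hx
    refine ⟨α, ?_, hF α hα⟩
    have := (mem_roots h0L).mp hα
    rwa [IsRoot, eval_map_algebraMap] at this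
  · intro P hP b hb
    have key : (c : 𝓞 L) ^ (Multiset.card (h.map (algebraMap ℤ L)).roots) * (h.eval b : ℤ) =
        c * (((h.map (algebraMap ℤ L)).roots.map fun α => (c * b - F α)).prod) := by
      apply RingOfIntegers.coe_injective
      have e1 : ((h.eval b : ℤ) : L) = (h.map (algebraMap ℤ L)).eval (b : L) := by
        rw [eval_map]
        have := Polynomial.eval₂_at_apply (p := h) (algebraMap ℤ L) b
        simpa using this.symm
      have e2 : (h.map (algebraMap ℤ L)).eval (b : L) = c * ((h.map (algebraMap ℤ L)).roots.map
          fun α => (b : L) - α).prod := by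
        conv_lhs => rw [hs.eq_prod_roots]
        rw [eval_mul, eval_multiset_prod, Multiset.map_map, eval_C,
          leadingCoeff_map_of_injective hinj]
        have e4 : ((eval (b : L)) ∘ fun a : L => X - C a) = fun α => (b : L) - α := by
          ext α; simp
        rw [e4, ← hc]; simp only [algebraMap_int_eq, eq_intCast]
      rw [map_mul, map_mul, map_pow, map_multiset_prod, Multiset.map_map]
      simp only [map_intCast]
      rw [e1, e2]
      have e3 : ((h.map (algebraMap ℤ L)).roots.map
          ((algebraMap (𝓞 L) L) ∘ fun α => ((c : 𝓞 L) * b - F α))) =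
          (h.map (algebraMap ℤ L)).roots.map fun α => (c : L) * (b - α) := by
        apply Multiset.map_congr rfl
        intro α hα
        simp only [Function.comp, map_sub, map_mul, map_intCast]
        have := hF α hα
        rw [show algebraMap (𝓞 L) L (F α) = c * α from this]; ring
      rw [e3, Multiset.prod_map_mul, Multiset.map_const', Multiset.prod_replicate]
      ring
    have hm : (c : 𝓞 L) * (((h.map (algebraMap ℤ L)).roots.map fun α => (c * b - F α)).prod) ∈ P := by
      rw [← key]; exact Ideal.mul_mem_left _ _ hb
    rcases hP.mem_or_mem hm with h1 | h1
    · exact Or.inl h1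
    · right
      obtain ⟨y, hy, hyP⟩ := hP.multiset_prod_mem_iff_exists_mem _ |>.mp h1
      simp only [Multiset.mem_map] at hy
      obtain ⟨α, hα, rfl⟩ := hy
      refine ⟨F α, by simpa using ⟨α, by simpa using hα, rfl⟩, ?_⟩
      have := neg_mem hyP
      simpa using this
end

end

section
open NumberField Polynomial
section
variable {L : Type*} [Field L] [NumberField L]

lemma int_pow_sub (p : ℕ) (hp : p.Prime) (b : ℤ) : (p : ℤ) ∣ b ^ p - b := by
  have := Fact.mk hp
  rw [← ZMod.intCast_zmod_eq_zero_iff_dvd]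
  simp

lemma fixed_mod {p : ℕ} (hp : p.Prime) {σ : L ≃ₐ[ℚ] L} {P : Ideal (𝓞 L)} (h : FrobAt L p σ P) (x : 𝓞 L) (b : ℤ)
    (hx : x - b ∈ P) : σ • x - x ∈ P := by
  obtain ⟨hP, hpP, hσ⟩ := h
  have h1 : x ^ p - (b : 𝓞 L) ^ p ∈ P := Ideal.mem_of_dvd _ (sub_dvd_pow_sub_pow _ _ _) hx
  have h2 : (b : 𝓞 L) ^ p - b ∈ P := by
    obtain ⟨k, hk⟩ := int_pow_sub p hp b
    have : (b : 𝓞 L) ^ p - b = k * p := by exact_mod_cast hk.trans (mul_comm _ _)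
    rw [this]; exact Ideal.mul_mem_left _ _ hpP
  have : σ • x - x = (σ • x - x ^ p) + (x ^ p - (b : 𝓞 L) ^ p) + ((b : 𝓞 L) ^ p - b) - (x - b) := by ring
  rw [this]
  exact sub_mem (add_mem (add_mem (hσ x) h1) h2) hx

lemma mod_of_fixed {p : ℕ} (hp : p.Prime) {σ : L ≃ₐ[ℚ] L} {P : Ideal (𝓞 L)} (h : FrobAt L p σ P) (x : 𝓞 L)
    (hx : σ • x = x) : ∃ b : ℤ, x - b ∈ P := by
  obtain ⟨hP, hpP, hσ⟩ := h
  have := Fact.mk hp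
  have hc : CharP (𝓞 L ⧸ P) p := by
    have h0 : ((p : ℕ) : 𝓞 L ⧸ P) = 0 := by
      have := Ideal.Quotient.eq_zero_iff_mem.mpr hpP
      simpa using this
    have hnt : Nontrivial (𝓞 L ⧸ P) := Ideal.Quotient.nontrivial_iff.mpr hP.ne_top
    exact (CharP.charP_iff_prime_eq_zero hp).mpr h0
  have hd : IsDomain (𝓞 L ⧸ P) := inferInstance
  let y : 𝓞 L ⧸ P := Ideal.Quotient.mk P x
  have hy : y ^ p - y = 0 := by
    have h1 := hσ x
    rw [hx] at h1
    have := neg_mem h1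
    rw [neg_sub] at this
    have := Ideal.Quotient.eq_zero_iff_mem.mpr this
    simpa using this
  have hprod : (X ^ p - X : (ZMod p)[X]) = ∏ a : ZMod p, (X - C a) := by
    have hr : roots (X ^ p - X : (ZMod p)[X]) = Finset.univ.val := by
      convert! FiniteField.roots_X_pow_card_sub_X (ZMod p)
      exact (ZMod.card p).symm
    have hm : (X ^ p - X : (ZMod p)[X]).Monic :=
      monic_X_pow_sub (by rw [degree_X]; exact_mod_cast hp.one_lt)
    have := (GaloisField.splits_zmod_X_pow_sub_X p).eq_prod_roots_of_monic hm
    rw [this, hr]; rfl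
  let _ : Algebra (ZMod p) (𝓞 L ⧸ P) := ZMod.algebra _ p
  have h2 : aeval y (∏ a : ZMod p, (X - C a)) = 0 := by
    rw [← hprod]; simpa using hy
  rw [map_prod, Finset.prod_eq_zero_iff] at h2
  obtain ⟨a, -, ha⟩ := h2
  obtain ⟨b, rfl⟩ := ZMod.intCast_surjective a
  refine ⟨b, ?_⟩
  rw [← Ideal.Quotient.eq_zero_iff_mem]
  simpa using ha

end

end

section
open NumberField Polynomial UniqueFactorizationMonoid

lemma absNorm_pow_inertia (K : Type*) [Field K] [NumberField K] (p : ℕ) (hp : p.Prime)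
    (P : Ideal (𝓞 K)) (hP : P.IsPrime) (hl : P.LiesOver (Ideal.span {(p:ℤ)})) :
    Ideal.absNorm P = p ^ (P.inertiaDeg ℤ) := by
  have := Fact.mk hp
  have : P.IsMaximal := by
    have : (Ideal.span {(p:ℤ)}).IsMaximal := Int.ideal_span_isMaximal_of_prime p
    exact Ideal.IsMaximal.of_liesOver_isMaximal P (Ideal.span {(p:ℤ)})
  rw [Ideal.absNorm_eq_pow_inertiaDeg' P hp, Ideal.inertiaDeg'_algebraMap,
    Ideal.inertiaDeg_eq_of_isMaximal (Ideal.span {(p:ℤ)})]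

lemma idF_eq_roots (K : Type*) [Field K] [NumberField K] (θ : 𝓞 K) (p : ℕ) [hF : Fact p.Prime]
    (hp : ¬ p ∣ RingOfIntegers.exponent θ) :
    (idF K p).card = ((minpoly ℤ θ).map (Int.castRingHom (ZMod p))).roots.toFinset.card := by
  classical
  symm
  have hm : ((minpoly ℤ θ).map (Int.castRingHom (ZMod p))).Monic :=
    (minpoly.monic θ.isIntegral).map _
  set m := (minpoly ℤ θ).map (Int.castRingHom (ZMod p)) with hmdef
  have hmem : ∀ a : ZMod p, a ∈ m.roots.toFinset → X - C a ∈ RingOfIntegers.monicFactorsMod θ p := by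
    intro a ha
    simp only [Multiset.mem_toFinset] at ha ⊢
    rw [Polynomial.mem_normalizedFactors_iff hm.ne_zero]
    exact ⟨irreducible_X_sub_C a, monic_X_sub_C a, dvd_iff_isRoot.mpr ((mem_roots hm.ne_zero).mp ha)⟩
  refine Finset.card_bij (fun a ha => ((NumberField.Ideal.primesOverSpanEquivMonicFactorsMod hp).symm ⟨X - C a, hmem a ha⟩ : Ideal (𝓞 K))) ?_ ?_ ?_
  · intro a ha
    rw [mem_idF]
    set Q := (NumberField.Ideal.primesOverSpanEquivMonicFactorsMod hp).symm ⟨X - C a, hmem a ha⟩ with hQ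
    have h1 := Q.2.1
    have h2 := Q.2.2
    rw [absNorm_pow_inertia K p hF.out (Q : Ideal (𝓞 K)) h1 h2, hQ, NumberField.Ideal.inertiaDeg_primesOverSpanEquivMonicFactorsMod_symm_apply']
    simp
  · intro a ha b hb hab
    have := (NumberField.Ideal.primesOverSpanEquivMonicFactorsMod hp).symm.injective (Subtype.ext hab)
    simpa using this
  · intro I hI
    rw [mem_idF] at hI
    have h1 : I.IsPrime := Ideal.isPrime_of_irreducible_absNorm (by rw [hI]; exact hF.out)
    have h2 : I.LiesOver (Ideal.span {(p:ℤ)}) := by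
      constructor
      have hle : Ideal.span {(p:ℤ)} ≤ I.under ℤ := by
        rw [Ideal.span_singleton_le_iff_mem]
        have := Ideal.absNorm_mem I
        rw [hI] at this
        simpa [Ideal.under] using this
      exact (Int.ideal_span_isMaximal_of_prime p).eq_of_le (Ideal.IsPrime.under ℤ I).ne_top hle
    set Q := NumberField.Ideal.primesOverSpanEquivMonicFactorsMod hp ⟨I, h1, h2⟩ with hQ
    have h3 := absNorm_pow_inertia K p hF.out I h1 h2
    have h4 := NumberField.Ideal.inertiaDeg_primesOverSpanEquivMonicFactorsMod_symm_apply' hp Q.2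
    have h5 : (NumberField.Ideal.primesOverSpanEquivMonicFactorsMod hp).symm ⟨Q.1, Q.2⟩ = ⟨I, h1, h2⟩ := by
      rw [hQ]; simp
    rw [h5] at h4
    rw [hI] at h3
    have h6 : I.inertiaDeg ℤ = 1 := by
      have : p ^ 1 = p ^ (I.inertiaDeg ℤ) := by rw [pow_one]; exact h3
      exact (Nat.pow_right_injective hF.out.two_le this).symm
    simp only at h4
    rw [h6] at h4
    have h7 := Q.2
    simp only [Multiset.mem_toFinset] at h7
    rw [Polynomial.mem_normalizedFactors_iff hm.ne_zero] at h7
    obtain ⟨h8, h9, h10⟩ := h7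
    have h11 : (Q : (ZMod p)[X]) = X - C (-(Q : (ZMod p)[X]).coeff 0) := by
      have := h9.eq_X_add_C h4.symm
      conv_lhs => rw [this]
      simp
    have hr : -(Q : (ZMod p)[X]).coeff 0 ∈ m.roots.toFinset := by
      rw [Multiset.mem_toFinset, mem_roots hm.ne_zero, ← dvd_iff_isRoot, ← h11]
      exact h10
    refine ⟨_, hr, ?_⟩
    have : (⟨X - C (-(Q : (ZMod p)[X]).coeff 0), hmem _ hr⟩ : RingOfIntegers.monicFactorsMod θ p) = ⟨Q.1, Q.2⟩ := 
      Subtype.ext h11.symm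
    rw [this, h5]

end

section
open NumberField Polynomial

lemma exists_int_pb (K : Type*) [Field K] [NumberField K] : ∃ B : PowerBasis ℚ K, IsIntegral ℤ B.gen := by
  obtain ⟨α, hα⟩ := Field.exists_primitive_element ℚ K
  obtain ⟨y, hy, hIntg⟩ := IsAlgebraic.exists_integral_multiple ((IsFractionRing.isAlgebraic_iff ℤ ℚ K).mpr (Algebra.IsAlgebraic.isAlgebraic (R := ℚ) α))
  have hadj : IntermediateField.adjoin ℚ {y • α} = ⊤ := by
    rw [eq_top_iff, ← hα, IntermediateField.adjoin_simple_le_iff]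
    have h1 : y • α ∈ IntermediateField.adjoin ℚ {y • α} := IntermediateField.mem_adjoin_simple_self _ _
    have h2 : α = ((y : ℚ)⁻¹) • (y • α) := by
      have : (y : K) ≠ 0 := by exact_mod_cast hy
      rw [Algebra.smul_def]; simp; field_simp
    have h3 := (IntermediateField.adjoin ℚ {y • α}).smul_mem (x := (y : ℚ)⁻¹) h1
    rwa [← h2] at h3
  let B := (IntermediateField.adjoin.powerBasis (K := ℚ) (x := y • α) (Algebra.IsIntegral.isIntegral _)).map
    ((IntermediateField.equivOfEq hadj).trans IntermediateField.topEquiv)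
  refine ⟨B, ?_⟩
  have : B.gen = y • α := by
    simp [B]
  rw [this]; exact hIntg

lemma exponent_ne_zero' {K : Type*} [Field K] [NumberField K] (B : PowerBasis ℚ K) (θ : 𝓞 K)
    (hθ : (θ : K) = B.gen) : RingOfIntegers.exponent θ ≠ 0 := by
  have hIntg : IsIntegral ℤ B.gen := hθ ▸ θ.isIntegral_coe
  have h1 : IsIntegral ℤ (Algebra.discr ℚ B.basis) := Algebra.discr_isIntegral ℚ fun i => by
    rw [B.coe_basis]; exact hIntg.pow _
  obtain ⟨d, hd⟩ := IsIntegrallyClosed.isIntegral_iff.mp h1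
  have hd0 : d ≠ 0 := by
    rintro rfl
    have := Algebra.discr_not_zero_of_basis ℚ B.basis
    apply this; rw [← hd]; simp
  have hmem : ((d : ℤ) : 𝓞 K) ∈ conductor ℤ θ := by
    intro b
    have h2 := Algebra.discr_mul_isIntegral_mem_adjoin (R := ℤ) ℚ hIntg b.isIntegral_coe
    rw [← hd, ← hθ] at h2
    have h3 : Algebra.adjoin ℤ {(θ : K)} = (Algebra.adjoin ℤ {θ}).map (IsScalarTower.toAlgHom ℤ (𝓞 K) K) := by
      rw [AlgHom.map_adjoin]; simp
    rw [h3] at h2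
    obtain ⟨z, hz, hzz⟩ := h2
    have : (d : 𝓞 K) * b = z := by
      apply RingOfIntegers.coe_injective
      have : algebraMap (𝓞 K) K z = _ := hzz
      rw [this, Algebra.smul_def]
      simp
    rw [this]; exact hz
  rw [RingOfIntegers.exponent_eq_sInf]
  have hne : {d : ℕ | 0 < d ∧ (d : 𝓞 K) ∈ conductor ℤ θ}.Nonempty := by
    refine ⟨d.natAbs, Int.natAbs_pos.mpr hd0, ?_⟩
    rcases Int.natAbs_eq d with h | h
    · have : ((d.natAbs : ℕ) : 𝓞 K) = (d : 𝓞 K) := by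
        conv_rhs => rw [h]
        rw [Int.cast_natCast]
      rw [this]; exact hmem
    · have : ((d.natAbs : ℕ) : 𝓞 K) = -(d : 𝓞 K) := by
        conv_rhs => rw [h]
        rw [Int.cast_neg, Int.cast_natCast, neg_neg]
      rw [this]; exact neg_mem hmem
  exact (Nat.sInf_mem hne).1.ne'

end

section
open NumberField Polynomial

section
variable {L : Type*} [Field L] [NumberField L]

lemma coe_smul_int (g : L ≃ₐ[ℚ] L) (x : 𝓞 L) : ((g • x : 𝓞 L) : L) = g x := rfl

open scoped Classical in
/-- counting roots mod p -/
lemma card_roots_mod (m : ℤ[X]) (hm : m.Monic) (hs : (m.map (algebraMap ℤ L)).Splits) (Z : Finset (𝓞 L))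
    (hZ : ∀ x : 𝓞 L, x ∈ Z ↔ aeval x m = 0) (hZσ : ∀ (g : L ≃ₐ[ℚ] L), ∀ x ∈ Z, g • x ∈ Z) :
    ∃ N : ℕ, N ≠ 0 ∧ ∀ (p : ℕ) (hp : p.Prime) (σ : L ≃ₐ[ℚ] L) (P : Ideal (𝓞 L)), FrobAt L p σ P → ¬ p ∣ N →
      haveI := Fact.mk hp
      (m.map (Int.castRingHom (ZMod p))).roots.toFinset.card = (Z.filter fun x => σ • x = x).card := by
  classical
  obtain ⟨N, hN, hsep⟩ := sep_primes Z
  obtain ⟨Z₁, hZ₁, hroot⟩ := rootmod m hm.ne_zero hs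
  refine ⟨N, hN, ?_⟩
  intro p hp σ P hfrob hpN
  have hF := Fact.mk hp
  obtain ⟨hP, hpP, hσ⟩ := id hfrob
  have hsep' := hsep p P hp hP hpP hpN
  have hmm : (m.map (Int.castRingHom (ZMod p))) ≠ 0 := (hm.map _).ne_zero
  symm
  have hb : ∀ x ∈ Z.filter (fun x => σ • x = x), ∃ b : ℤ, x - b ∈ P := fun x hx =>
    mod_of_fixed hp hfrob x (Finset.mem_filter.mp hx).2
  choose! b hb using hb
  have hcast : ∀ c d : ℤ, ((c : 𝓞 L) - d ∈ P) ↔ (c : ZMod p) = d := by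
    intro c d
    rw [← sub_eq_zero, ← Int.cast_sub, ← Int.cast_sub, ZMod.intCast_zmod_eq_zero_iff_dvd]
    refine ⟨int_mem_prime hP hp hpP _, ?_⟩
    rintro ⟨k, hk⟩
    rw [hk]; push_cast; exact Ideal.mul_mem_right _ _ hpP
  have hrootiff : ∀ c : ℤ, (c : ZMod p) ∈ (m.map (Int.castRingHom (ZMod p))).roots.toFinset ↔ ((m.eval c : ℤ) : 𝓞 L) ∈ P := by
    intro c
    rw [Multiset.mem_toFinset, mem_roots hmm, IsRoot, eval_map]
    have h1 : eval₂ (Int.castRingHom (ZMod p)) (c : ZMod p) m = ((m.eval c : ℤ) : ZMod p) := by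
      simpa using Polynomial.eval₂_at_apply (p := m) (Int.castRingHom (ZMod p)) c
    rw [h1]
    have := hcast (m.eval c) 0
    simpa using this.symm
  refine Finset.card_bij (fun x _ => (b x : ZMod p)) ?_ ?_ ?_
  · intro x hx
    rw [hrootiff]
    have h1 : aeval x m = 0 := (hZ x).mp (Finset.mem_filter.mp hx).1
    have h2 : x - (b x : 𝓞 L) ∣ (m.map (algebraMap ℤ (𝓞 L))).eval x - (m.map (algebraMap ℤ (𝓞 L))).eval (b x : 𝓞 L) :=
      sub_dvd_eval_sub _ _ _
    rw [eval_map_algebraMap, h1, zero_sub, eval_map] at h2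
    have h3 : eval₂ (algebraMap ℤ (𝓞 L)) (b x : 𝓞 L) m = ((m.eval (b x) : ℤ) : 𝓞 L) := by
      simpa using Polynomial.eval₂_at_apply (p := m) (algebraMap ℤ (𝓞 L)) (b x)
    rw [h3] at h2
    exact Ideal.mem_of_dvd _ ((dvd_neg).mp h2) (hb x hx)
  · intro x hx y hy hxy
    apply hsep' x (Finset.mem_filter.mp hx).1 y (Finset.mem_filter.mp hy).1
    have h1 := (hcast _ _).mpr hxy
    have : x - y = (x - b x) + (b x - b y) - (y - b y) := by ring
    rw [this]
    exact sub_mem (add_mem (hb x hx) h1) (hb y hy)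
  · intro r hr
    obtain ⟨c, rfl⟩ := ZMod.intCast_surjective r
    rw [hrootiff] at hr
    rcases hroot P hP c hr with h1 | ⟨x, hx, hxP⟩
    · rw [hm.leadingCoeff] at h1
      exact absurd ((Ideal.eq_top_iff_one _).mpr (by simpa using h1)) hP.ne_top
    · rw [hm.leadingCoeff] at hxP
      have hxP : x - (c : 𝓞 L) ∈ P := by simpa using hxP
      have hxZ : x ∈ Z := by
        rw [hZ]
        obtain ⟨α, h1, h2⟩ := hZ₁ x hx
        rw [hm.leadingCoeff] at h2
        have h2 : (x : L) = α := by simpa using h2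
        apply RingOfIntegers.coe_injective
        rw [← h2] at h1
        rw [← aeval_algebraMap_apply, h1, map_zero]
      have hfix : σ • x = x := hsep' _ (hZσ σ x hxZ) _ hxZ (fixed_mod hp hfrob x c hxP)
      have hxf : x ∈ Z.filter (fun x => σ • x = x) := Finset.mem_filter.mpr ⟨hxZ, hfix⟩
      refine ⟨x, hxf, ?_⟩
      rw [← hcast]
      have : (b x : 𝓞 L) - c = (x - c) - (x - b x) := by ring
      rw [this]
      exact sub_mem hxP (hb x hxf)
end

end

section
open NumberField Polynomial

section
variable {L : Type*} [Field L] [NumberField L] [IsGalois ℚ L]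

lemma NH_eq_idF (H : Subgroup (L ≃ₐ[ℚ] L)) :
    ∃ N : ℕ, N ≠ 0 ∧ ∀ (p : ℕ) (_ : p.Prime) (σ : L ≃ₐ[ℚ] L) (P : Ideal (𝓞 L)), FrobAt L p σ P → ¬ p ∣ N →
      NH H σ = Nat.card H * (idF (IntermediateField.fixedField H) p).card := by
  classical
  set K := IntermediateField.fixedField H with hK
  obtain ⟨B, hB⟩ := exists_int_pb K
  set θ : 𝓞 K := ⟨B.gen, hB⟩ with hθ
  have hθB : (θ : K) = B.gen := rfl
  have hβint : IsIntegral ℤ ((B.gen : K) : L) := hB.map (IsScalarTower.toAlgHom ℤ K L)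
  set β : 𝓞 L := ⟨((B.gen : K) : L), hβint⟩ with hβ
  have hβB : (β : L) = ((B.gen : K) : L) := rfl
  set m := minpoly ℤ θ with hm
  have hmon : m.Monic := minpoly.monic θ.isIntegral
  have hmQ : m.map (algebraMap ℤ ℚ) = minpoly ℚ (β : L) := by
    have h1 : minpoly ℤ θ = minpoly ℤ (B.gen : K) := by
      rw [← hθB]
      exact (minpoly.algebraMap_eq RingOfIntegers.coe_injective θ).symm
    rw [hm, h1, ← minpoly.isIntegrallyClosed_eq_field_fractions' ℚ hB, hβB]
    exact (minpoly.algebraMap_eq (algebraMap K L).injective B.gen).symm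
  have hmL : m.map (algebraMap ℤ L) = (minpoly ℚ (β : L)).map (algebraMap ℚ L) := by
    rw [← hmQ, Polynomial.map_map, ← IsScalarTower.algebraMap_eq]
  have hs : (m.map (algebraMap ℤ L)).Splits := by
    rw [hmL]; exact Normal.splits inferInstance _
  have hroots : ∀ α : L, aeval α m = 0 ↔ ∃ g : L ≃ₐ[ℚ] L, g (β : L) = α := by
    intro α
    have h1 : aeval α m = aeval α (minpoly ℚ (β : L)) := by
      rw [← hmQ, aeval_map_algebraMap]
    rw [h1]
    constructor
    · intro h
      exact minpoly.exists_algEquiv_of_root' (Algebra.IsAlgebraic.isAlgebraic _) h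
    · rintro ⟨g, rfl⟩
      rw [aeval_algEquiv, AlgHom.comp_apply, minpoly.aeval, map_zero]
  set Z : Finset (𝓞 L) := Finset.univ.image (fun g : L ≃ₐ[ℚ] L => g • β) with hZdef
  have hZ : ∀ x : 𝓞 L, x ∈ Z ↔ aeval x m = 0 := by
    intro x
    have h1 : aeval x m = 0 ↔ aeval (x : L) m = 0 := by
      rw [aeval_algebraMap_apply]
      simp
    rw [h1, hroots, hZdef]
    simp only [Finset.mem_image, Finset.mem_univ, true_and]
    refine exists_congr fun g => ⟨fun h => by rw [← h]; rfl, fun h => RingOfIntegers.coe_injective h⟩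
  have hZσ : ∀ (g : L ≃ₐ[ℚ] L), ∀ x ∈ Z, g • x ∈ Z := by
    intro g x hx
    rw [hZdef, Finset.mem_image] at hx ⊢
    obtain ⟨g', -, rfl⟩ := hx
    exact ⟨g * g', Finset.mem_univ _, mul_smul _ _ _⟩
  have hstab : ∀ g : L ≃ₐ[ℚ] L, g • β = β ↔ g ∈ H := by
    intro g
    constructor
    · intro h
      have h0 : g (β : L) = β := congrArg (fun z : 𝓞 L => (z : L)) h
      rw [← IntermediateField.fixingSubgroup_fixedField H, IntermediateField.mem_fixingSubgroup_iff]
      intro x hx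
      obtain ⟨q, hq⟩ := B.exists_eq_aeval' ⟨x, hx⟩
      have h2 : x = aeval (β : L) q := by
        have := congrArg (algebraMap K L) hq
        rw [← aeval_algebraMap_apply] at this
        exact this
      rw [h2]
      have : g (aeval (β : L) q) = aeval (g (β : L)) q := by
        rw [aeval_algEquiv]; rfl
      rw [this, h0]
    · intro h
      apply RingOfIntegers.coe_injective
      change g ((B.gen : K) : L) = ((B.gen : K) : L)
      exact (IntermediateField.mem_fixedField_iff H _).mp B.gen.2 g h
  obtain ⟨N, hN, hcard⟩ := card_roots_mod m hmon hs Z hZ hZσ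
  refine ⟨N * RingOfIntegers.exponent θ, mul_ne_zero hN (exponent_ne_zero' B θ hθB), ?_⟩
  intro p hp σ P hfrob hpN
  have hF := Fact.mk hp
  rw [idF_eq_roots K θ p (fun h => hpN (h.mul_left _))]
  rw [hcard p hp σ P hfrob (fun h => hpN (h.mul_right _))]
  unfold NH
  rw [Finset.sum_boole]
  rw [← Nat.cast_mul]
  congr 1
  have hmaps : Set.MapsTo (fun g : L ≃ₐ[ℚ] L => g • β) 
      (Finset.univ.filter fun g : L ≃ₐ[ℚ] L => g⁻¹ * σ * g ∈ H) (Z.filter fun x => σ • x = x) := by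
    intro g hg
    simp only [Finset.coe_filter, Finset.mem_univ, true_and, Set.mem_ofPred_eq] at hg ⊢
    refine ⟨Finset.mem_image_of_mem _ (Finset.mem_univ _), ?_⟩
    rw [← hstab, mul_smul, mul_smul, inv_smul_eq_iff] at hg
    exact hg
  rw [Finset.card_eq_sum_card_fiberwise hmaps, Finset.sum_const_nat (m := Nat.card H), mul_comm]
  intro x hx
  simp only [Finset.mem_filter] at hx
  obtain ⟨hxZ, hxσ⟩ := hx
  obtain ⟨g₀, -, rfl⟩ := Finset.mem_image.mp hxZ
  rw [Nat.card_eq_fintype_card, ← Finset.card_univ]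
  symm
  refine Finset.card_bij (fun h _ => g₀ * (h : L ≃ₐ[ℚ] L)) ?_ ?_ ?_
  · intro h _
    have h1 : (h : L ≃ₐ[ℚ] L) • β = β := (hstab _).mpr h.2
    simp only [Finset.mem_filter, Finset.mem_univ, true_and]
    constructor
    · rw [← hstab, mul_smul, mul_smul, inv_smul_eq_iff, mul_smul, h1, hxσ]
    · rw [mul_smul, h1]
  · intro h _ h' _ e
    exact Subtype.ext (mul_left_cancel e)
  · intro g hg
    simp only [Finset.mem_filter, Finset.mem_univ, true_and] at hg
    refine ⟨⟨g₀⁻¹ * g, ?_⟩, Finset.mem_univ _, by simp⟩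
    rw [← hstab, mul_smul, hg.2, inv_smul_smul]
end

end

section
open NumberField Polynomial Filter Topology

lemma tendsto_primesLE_card : Tendsto (fun n : ℕ => ((Nat.primesLE n).card : ℝ)) atTop atTop := by
  have h := Nat.tendsto_primeCounting
  have e : ∀ n, (Nat.primesLE n).card = Nat.primeCounting n := fun n => by simp
  simp_rw [e]
  exact tendsto_natCast_atTop_atTop.comp h

lemma mean_congr (a b : ℕ → ℝ) (N : ℕ) (hN : N ≠ 0) (h : ∀ p, p.Prime → ¬ p ∣ N → a p = b p) (l : ℝ)
    (hb : Tendsto (fun n : ℕ => (∑ p ∈ Nat.primesLE n, b p) / (Nat.primesLE n).card) atTop (𝓝 l)) :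
    Tendsto (fun n : ℕ => (∑ p ∈ Nat.primesLE n, a p) / (Nat.primesLE n).card) atTop (𝓝 l) := by
  have h0 : Tendsto (fun n : ℕ => (∑ p ∈ Nat.primesLE n, (a p - b p)) / (Nat.primesLE n).card) atTop (𝓝 0) := by
    have hC : Tendsto (fun n : ℕ => (∑ p ∈ N.divisors, |a p - b p|) / ((Nat.primesLE n).card : ℝ)) atTop (𝓝 0) :=
      tendsto_const_nhds.div_atTop tendsto_primesLE_card
    refine squeeze_zero_norm (fun n => ?_) hC
    rw [norm_div, Real.norm_eq_abs, Real.norm_eq_abs, abs_of_nonneg (a := ((Nat.primesLE n).card : ℝ)) (by positivity)]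
    gcongr
    refine (Finset.abs_sum_le_sum_abs _ _).trans ?_
    rw [← Finset.sum_filter_add_sum_filter_not (Nat.primesLE n) (fun p => p ∣ N)]
    have hz : ∑ p ∈ (Nat.primesLE n).filter (fun p => ¬ p ∣ N), |a p - b p| = 0 := by
      apply Finset.sum_eq_zero
      intro p hp
      rw [Finset.mem_filter, Nat.mem_primesLE] at hp
      rw [h p hp.1.2 hp.2]; simp
    rw [hz, add_zero]
    apply Finset.sum_le_sum_of_subset_of_nonneg
    · intro p hp
      rw [Finset.mem_filter] at hp
      exact Nat.mem_divisors.mpr ⟨hp.2, hN⟩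
    · intros; positivity
  have := h0.add hb
  rw [zero_add] at this
  refine this.congr fun n => ?_
  rw [Finset.sum_sub_distrib]; ring

section
variable {L : Type*} [Field L] [NumberField L] [IsGalois ℚ L]

lemma meanOK_NH (σ : ℕ → L ≃ₐ[ℚ] L) (hσ : ∀ p, p.Prime → ∃ P, FrobAt L p (σ p) P)
    (H : Subgroup (L ≃ₐ[ℚ] L)) : MeanOK σ (NH H) := by
  unfold MeanOK
  rw [sum_NH]
  obtain ⟨N, hN, h⟩ := NH_eq_idF H
  refine mean_congr _ (fun p => Nat.card H * (idF (IntermediateField.fixedField H) p).card) N hN ?_ _ ?_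
  · intro p hp hpN
    obtain ⟨P, hP⟩ := hσ p hp
    exact h p hp (σ p) P hP hpN
  · have := (mean_idF (IntermediateField.fixedField H)).const_mul (Nat.card H : ℝ)
    rw [mul_one] at this
    refine this.congr fun n => ?_
    rw [← Finset.mul_sum]; ring

/-- density of primes modulo which `h` has a root -/
lemma root_density (h : ℤ[X]) (h0 : h ≠ 0) (hs : (h.map (algebraMap ℤ L)).Splits) :
    ∃ T : Set ℕ, ∃ N : ℕ, N ≠ 0 ∧
      (∀ p, p.Prime → ¬ p ∣ N → ∀ b : ℤ, (p : ℤ) ∣ h.eval b → p ∈ T) ∧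
      ∀ [DecidablePred (· ∈ T)], Tendsto (fun n : ℕ => (∑ p ∈ Nat.primesLE n, if p ∈ T then (1:ℝ) else 0) / (Nat.primesLE n).card) atTop
        (𝓝 ((Nat.card {σ : L ≃ₐ[ℚ] L // ∃ α : L, aeval α h = 0 ∧ σ α = α} : ℝ) / Nat.card (L ≃ₐ[ℚ] L))) := by
  classical
  have hex : ∀ p : ℕ, ∃ σ : L ≃ₐ[ℚ] L, p.Prime → ∃ P, FrobAt L p σ P := by
    intro p
    by_cases hp : p.Prime
    · obtain ⟨σ, hσ⟩ := exists_frob L p hp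
      exact ⟨σ, fun _ => hσ⟩
    · exact ⟨1, fun h => absurd h hp⟩
  choose σ hσ using hex
  let S : Set (L ≃ₐ[ℚ] L) := {σ | ∃ α : L, aeval α h = 0 ∧ σ α = α}
  obtain ⟨Z, hZ, hroot⟩ := rootmod h h0 hs
  let Z' : Finset (𝓞 L) := (Finset.univ ×ˢ Z).image (fun q : (L ≃ₐ[ℚ] L) × 𝓞 L => q.1 • q.2)
  obtain ⟨N, hN, hsep⟩ := sep_primes Z'
  have hc0 : h.leadingCoeff ≠ 0 := leadingCoeff_ne_zero.mpr h0
  refine ⟨{p | σ p ∈ S}, N * h.leadingCoeff.natAbs, mul_ne_zero hN (Int.natAbs_ne_zero.mpr hc0), ?_, ?_⟩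
  · intro p hp hpN b hb
    obtain ⟨P, hfrob⟩ := hσ p hp
    obtain ⟨hP, hpP, -⟩ := id hfrob
    have hbP : ((h.eval b : ℤ) : 𝓞 L) ∈ P := by
      obtain ⟨k, hk⟩ := hb
      rw [hk]; push_cast; exact Ideal.mul_mem_right _ _ hpP
    rcases hroot P hP b hbP with h1 | ⟨x, hx, hxP⟩
    · exfalso
      apply hpN
      have := int_mem_prime hP hp hpP _ h1
      exact (Int.natCast_dvd.mp this).mul_left _
    · have hfix : (σ p) • x = x := by
        refine hsep p P hp hP hpP (fun h => hpN (h.mul_right _)) _ ?_ _ ?_ 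
          (fixed_mod hp hfrob x (h.leadingCoeff * b) (by simpa using hxP))
        · exact Finset.mem_image.mpr ⟨(σ p, x), by simp [hx], rfl⟩
        · exact Finset.mem_image.mpr ⟨(1, x), by simp [hx], one_smul _ _⟩
      obtain ⟨α, hα, hxα⟩ := hZ x hx
      refine ⟨α, hα, ?_⟩
      have h2 : σ p (x : L) = x := congrArg (fun z : 𝓞 L => (z : L)) hfix
      rw [hxα, map_mul, map_intCast] at h2
      exact mul_left_cancel₀ (by exact_mod_cast hc0) h2
  · intro hdec
    have hroot' : ∀ (g : L ≃ₐ[ℚ] L) (α : L), aeval α h = 0 → aeval (g α) h = 0 := by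
      intro g α hα
      have := Polynomial.aeval_algHom_apply (g.toAlgHom.restrictScalars ℤ) α h
      rw [hα, map_zero] at this
      exact this
    have := meanOK_indicator σ (meanOK_NH σ hσ) S (by
      rintro g s ⟨α, hα, hs⟩
      refine ⟨g⁻¹ α, hroot' _ _ hα, ?_⟩
      simp only [AlgEquiv.mul_apply]
      have : g (g⁻¹ α) = α := by
        rw [← AlgEquiv.mul_apply]; simp
      rw [this, hs]) (by
      rintro s t hst ⟨α, hα, hs⟩
      refine ⟨α, hα, ?_⟩
      have ht : t ∈ Subgroup.zpowers s := by rw [hst]; exact Subgroup.mem_zpowers t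
      have hle : Subgroup.zpowers s ≤ MulAction.stabilizer (L ≃ₐ[ℚ] L) α := by
        rw [Subgroup.zpowers_le]; exact hs
      exact hle ht)
    unfold MeanOK at this
    have e : (∑ g : L ≃ₐ[ℚ] L, if g ∈ S then (1:ℝ) else 0) / Fintype.card (L ≃ₐ[ℚ] L) =
      (Nat.card {σ : L ≃ₐ[ℚ] L // ∃ α : L, aeval α h = 0 ∧ σ α = α} : ℝ) / Nat.card (L ≃ₐ[ℚ] L) := by
      rw [Finset.sum_boole, Nat.card_eq_fintype_card, Nat.card_eq_fintype_card, Fintype.card_subtype]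
      rfl
    rw [e] at this
    convert this using 5
    exact Iff.rfl
end

end

section
open NumberField Polynomial Filter Topology

lemma root_density_split (h : ℤ[X]) (h0 : h ≠ 0) (L : Type) [iF : Field L] [iA : Algebra ℚ L]
    (hL : IsSplittingField ℚ L (h.map (Int.castRingHom ℚ))) (hsep : (h.map (Int.castRingHom ℚ)).Separable) :
    ∃ T : Set ℕ, ∃ N : ℕ, N ≠ 0 ∧
      (∀ p, p.Prime → ¬ p ∣ N → ∀ b : ℤ, (p : ℤ) ∣ h.eval b → p ∈ T) ∧
      ∀ [DecidablePred (· ∈ T)], Tendsto (fun n : ℕ => (∑ p ∈ Nat.primesLE n, if p ∈ T then (1:ℝ) else 0) / (Nat.primesLE n).card) atTop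
        (𝓝 ((Nat.card {σ : L ≃ₐ[ℚ] L // ∃ α : L, aeval α (h.map (Int.castRingHom ℚ)) = 0 ∧ σ α = α} : ℝ) / Nat.card (L ≃ₐ[ℚ] L))) := by
  have : CharZero L := charZero_of_injective_algebraMap (algebraMap ℚ L).injective
  obtain rfl : iA = DivisionRing.toRatAlgebra := Subsingleton.elim _ _
  have : FiniteDimensional ℚ L := IsSplittingField.finiteDimensional L (h.map (Int.castRingHom ℚ))
  have : NumberField L := ⟨⟩
  have : IsGalois ℚ L := IsGalois.of_separable_splitting_field hsep
  have hs : (h.map (algebraMap ℤ L)).Splits := by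
    have := hL.splits
    rw [Polynomial.map_map] at this
    convert this using 2
    exact RingHom.ext_int _ _
  have e : ∀ α : L, aeval α (h.map (Int.castRingHom ℚ)) = aeval α h := fun α => 
    aeval_map_algebraMap (A := ℚ) α h
  simp_rw [e]
  exact root_density h h0 hs

lemma isSplit_congr (q : ℚ[X]) (L : Type) [Field L] (A B : Algebra ℚ L)
    (h : @IsSplittingField ℚ L _ _ A q) : @IsSplittingField ℚ L _ _ B q := by
  obtain rfl : A = B := Subsingleton.elim _ _
  exact h

lemma isSplit_any (q : ℚ[X]) (A : Algebra ℚ q.SplittingField) :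
    @IsSplittingField ℚ q.SplittingField _ _ A q :=
  isSplit_congr q _ _ A (IsSplittingField.splittingField q)

lemma root_density_iter (f g : ℤ[X]) (hf : 0 < f.natDegree) (hg : 0 < g.natDegree) (N : ℕ)
    (hsep : ((g.comp (polyIter f N)).map (Int.castRingHom ℚ)).Separable) :
    ∃ T : Set ℕ, ∃ M : ℕ, M ≠ 0 ∧
      (∀ p, p.Prime → ¬ p ∣ M → ∀ b : ℤ, (p : ℤ) ∣ (g.comp (polyIter f N)).eval b → p ∈ T) ∧
      ∀ [DecidablePred (· ∈ T)], Tendsto (fun n : ℕ => (∑ p ∈ Nat.primesLE n, if p ∈ T then (1:ℝ) else 0) / (Nat.primesLE n).card) atTop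
        (𝓝 (fixedRootProportion f g N)) := by
  have h0 : g.comp (polyIter f N) ≠ 0 := by
    intro h
    rw [h] at hsep
    rw [Polynomial.map_zero] at hsep
    exact hsep.ne_zero rfl
  exact root_density_split (g.comp (polyIter f N)) h0 (splittingFieldIter f g N)
    (isSplit_any _ _) hsep

lemma eval_polyIter (f : ℤ[X]) (N : ℕ) (a : ℤ) : (polyIter f N).eval a = (fun x => eval x f)^[N] a := by
  induction N with
  | zero => simp [polyIter]
  | succ n ih => rw [polyIter, eval_comp, ih, Function.iterate_succ_apply']

lemma count_prime (x : ℕ) : primeCount {p | p.Prime} x = (Nat.primesLE x).card := by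
  unfold primeCount
  rw [Nat.primesLE_eq_filter_range]
  congr 1
  ext p
  simp

lemma count_trans (g f : ℤ[X]) (a₀ : ℤ) (x : ℕ) [DecidablePred (· ∈ transOrbitPrimes g f a₀)] :
    (primeCount (transOrbitPrimes g f a₀) x : ℝ) =
      ∑ p ∈ Nat.primesLE x, if p ∈ transOrbitPrimes g f a₀ then (1:ℝ) else 0 := by
  rw [Finset.sum_boole]
  unfold primeCount
  congr 2
  ext p
  simp only [Finset.mem_filter, Finset.mem_range, Nat.mem_primesLE]
  constructor
  · rintro ⟨h1, h2⟩
    exact ⟨⟨by omega, h2.1⟩, h2⟩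
  · rintro ⟨h1, h2⟩
    exact ⟨by omega, h2⟩

lemma limsup_le_fixed (f g : ℤ[X]) (hf : 0 < f.natDegree) (hg : 0 < g.natDegree) (N : ℕ)
    (hsep : ((g.comp (polyIter f N)).map (Int.castRingHom ℚ)).Separable) (a₀ : ℤ) :
    limsup (fun x : ℕ =>
        (primeCount (transOrbitPrimes g f a₀) x : ℝ) / (primeCount {p | p.Prime} x : ℝ))
      atTop ≤ fixedRootProportion f g N := by
  classical
  obtain ⟨T, M, hM, hT, hlim⟩ := root_density_iter f g hf hg N hsep
  have hlim := hlim
  set v : ℕ → ℤ := fun n => eval ((fun x => eval x f)^[n] a₀) g with hv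
  set M' : ℕ := M * ∏ n ∈ (Finset.range N).filter (fun n => v n ≠ 0), (v n).natAbs with hM'
  have hM'0 : M' ≠ 0 := mul_ne_zero hM (Finset.prod_ne_zero_iff.mpr fun n hn =>
    Int.natAbs_ne_zero.mpr (Finset.mem_filter.mp hn).2)
  have hkey : ∀ p ∈ transOrbitPrimes g f a₀, ¬ p ∣ M' → p ∈ T := by
    rintro p ⟨hp, n, hn0, hn⟩ hpM
    by_cases hnN : n < N
    · exfalso
      apply hpM
      have h1 : p ∣ (v n).natAbs := Int.natCast_dvd.mp hn
      exact (h1.trans (Finset.dvd_prod_of_mem (fun n => (v n).natAbs)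
        (Finset.mem_filter.mpr ⟨Finset.mem_range.mpr hnN, hn0⟩))).mul_left _
    · refine hT p hp (fun h => hpM (h.mul_right _)) ((fun x => eval x f)^[n - N] a₀) ?_
      rw [eval_comp, eval_polyIter, ← Function.iterate_add_apply, Nat.add_sub_cancel' (not_lt.mp hnN)]
      exact hn
  have hlim2 := mean_congr (fun p => if p ∈ T ∨ p ∣ M' then (1:ℝ) else 0) (fun p => if p ∈ T then (1:ℝ) else 0)
    M' hM'0 (fun p _ h => by simp [h]) _ hlim
  rw [← hlim2.limsup_eq]
  apply limsup_le_limsup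
  · refine Eventually.of_forall fun x => ?_
    simp only
    rw [count_trans, count_prime]
    gcongr with p hp
    by_cases h : p ∈ transOrbitPrimes g f a₀
    · have : p ∈ T ∨ p ∣ M' := by
        by_cases h2 : p ∣ M'
        · exact Or.inr h2
        · exact Or.inl (hkey p h h2)
      simp [h, this]
    · simp only [h, if_false]
      split_ifs <;> norm_num
  · refine IsBoundedUnder.isCoboundedUnder_le ?_
    exact isBoundedUnder_of ⟨0, fun x => by positivity⟩
  · exact hlim2.isBoundedUnder_le

lemma fixed_le_one (f g : ℤ[X]) (N : ℕ) : fixedRootProportion f g N ≤ 1 := by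
  unfold fixedRootProportion
  have : FiniteDimensional ℚ (splittingFieldIter f g N) :=
    inferInstanceAs (FiniteDimensional ℚ (((g.comp (polyIter f N)).map (Int.castRingHom ℚ)).SplittingField))
  apply div_le_one_of_le₀
  · exact_mod_cast Finite.card_subtype_le _
  · positivity

end

theorem upper_density_le_liminf_fixedRootProportion
    (f g : Polynomial ℤ) (hf : 0 < f.natDegree) (hg : 0 < g.natDegree)
    (hsep : ∀ n : ℕ, ((g.comp (polyIter f n)).map (Int.castRingHom ℚ)).Separable)
    (a₀ : ℤ) :
    limsup (fun x : ℕ =>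
        (primeCount (transOrbitPrimes g f a₀) x : ℝ) / (primeCount {p | p.Prime} x : ℝ))
      atTop ≤ liminf (fun N : ℕ => fixedRootProportion f g N) atTop := by
  apply le_liminf_of_le
  · exact IsBoundedUnder.isCoboundedUnder_ge (isBoundedUnder_of ⟨1, fun N => fixed_le_one f g N⟩)
  · exact Eventually.of_forall fun N => limsup_le_fixed f g hf hg N (hsep N) a₀
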